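/- arXiv:1208.4584 — 4 statements merged into one kernel-verified Lean document; each statement's English description precedes it below -/
import Mathlib

section
/- Assume dim Γ_∞(f) = n, let γ be a face of Γ_∞(f) with 0 ∈ γ, let ℝ^S be the minimal coordinate subspace of ℝ^n containing γ, and assume dim γ < |S|. Then γ is an atypical face of Γ_∞(f). -/
open scoped Classical

noncomputable section

/-- Dot product on `ℝⁿ`. -/
def dotR {n : ℕ} (u v : Fin n → ℝ) : ℝ := ∑ i, u i * v i

/-- The image in `ℝⁿ` of the support of a polynomial. -/
def realSupp {n : ℕ} (f : MvPolynomial (Fin n) ℂ) : Set (Fin n → ℝ) :=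
  (fun v : Fin n →₀ ℕ => fun i => (v i : ℝ)) '' {v | MvPolynomial.coeff v f ≠ 0}

/-- The Newton polyhedron at infinity `Γ_∞(f)`. -/
def NPinf {n : ℕ} (f : MvPolynomial (Fin n) ℂ) : Set (Fin n → ℝ) :=
  convexHull ℝ ({0} ∪ realSupp f)

/-- The supporting face `γ_u` of `u` in `Γ_∞(f)`. -/
def suppFace {n : ℕ} (f : MvPolynomial (Fin n) ℂ) (u : Fin n → ℝ) : Set (Fin n → ℝ) :=
  {v ∈ NPinf f | ∀ w ∈ NPinf f, dotR u v ≤ dotR u w}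

/-- A face of `Γ_∞(f)` is any set of the form `γ_u`. -/
def IsFaceOf {n : ℕ} (f : MvPolynomial (Fin n) ℂ) (γ : Set (Fin n → ℝ)) : Prop :=
  ∃ u : Fin n → ℝ, γ = suppFace f u

/-- Dimension of a subset of `ℝⁿ`: the dimension of its affine span. -/
def setDim {n : ℕ} (s : Set (Fin n → ℝ)) : ℕ :=
  Module.finrank ℝ (affineSpan ℝ s).direction

/-- A face `γ` of `Γ_∞(f)` with `0 ∈ γ` is atypical if some facet of `Γ_∞(f)`
containing `γ` has all its nonzero inner conormal vectors outside `ℝ_{≥0}ⁿ`. -/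
def IsAtypicalFace {n : ℕ} (f : MvPolynomial (Fin n) ℂ) (γ : Set (Fin n → ℝ)) : Prop :=
  IsFaceOf f γ ∧ (0 : Fin n → ℝ) ∈ γ ∧
    ∃ Γf : Set (Fin n → ℝ), IsFaceOf f Γf ∧ setDim Γf = n - 1 ∧ γ ⊆ Γf ∧
      ∀ u : Fin n → ℝ, u ≠ 0 → suppFace f u = Γf → ¬ (∀ i, 0 ≤ u i)

/-- The cone `σ(γ)` of the dual fan of `Γ_∞(f)` corresponding to the face `γ`. -/
def sigmaCone {n : ℕ} (f : MvPolynomial (Fin n) ℂ) (γ : Set (Fin n → ℝ)) : Set (Fin n → ℝ) :=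
  closure {u : Fin n → ℝ | suppFace f u = γ}

/-- The coordinate subspace `ℝ^S` of `ℝⁿ`. -/
def coordSub {n : ℕ} (S : Finset (Fin n)) : Set (Fin n → ℝ) :=
  {v | ∀ i ∉ S, v i = 0}

/-- The `γ`-part `f_γ` of `f`. -/
def facePart {n : ℕ} (f : MvPolynomial (Fin n) ℂ) (γ : Set (Fin n → ℝ)) :
    MvPolynomial (Fin n) ℂ :=
  ∑ v ∈ f.support,
    if (fun i => (v i : ℝ)) ∈ γ then MvPolynomial.monomial v (MvPolynomial.coeff v f) else 0

/-- `f` is non-degenerate at infinity. -/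
def NondegAtInfty {n : ℕ} (f : MvPolynomial (Fin n) ℂ) : Prop :=
  ∀ γ : Set (Fin n → ℝ), IsFaceOf f γ → (0 : Fin n → ℝ) ∉ γ →
    ∀ x : Fin n → ℂ, (∀ i, x i ≠ 0) → MvPolynomial.eval x (facePart f γ) = 0 →
      ∃ i, MvPolynomial.eval x (MvPolynomial.pderiv i (facePart f γ)) ≠ 0

/-- `Δ_γ`: the convex hull of `{0} ∪ γ`. -/
def DeltaG {n : ℕ} (γ : Set (Fin n → ℝ)) : Set (Fin n → ℝ) :=
  convexHull ℝ ({0} ∪ γ)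

/-- The lattice `M_γ = ℤⁿ ∩ L(Δ_γ)`. -/
def Mgamma {n : ℕ} (γ : Set (Fin n → ℝ)) : AddSubgroup (Fin n → ℤ) where
  carrier := {v | (fun i => (v i : ℝ)) ∈ Submodule.span ℝ (DeltaG γ)}
  add_mem' := by
    intro a b ha hb
    have h : (fun i => (((a + b) : Fin n → ℤ) i : ℝ))
        = (fun i => (a i : ℝ)) + fun i => (b i : ℝ) := by
      funext i; push_cast [Pi.add_apply]; ring
    simp only [Set.mem_setOf_eq, h]
    exact Submodule.add_mem _ ha hb
  zero_mem' := by
    have h : (fun i => (((0 : Fin n → ℤ)) i : ℝ)) = (0 : Fin n → ℝ) := by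
      funext i; simp
    simp only [Set.mem_setOf_eq, h]
    exact Submodule.zero_mem _
  neg_mem' := by
    intro a ha
    have h : (fun i => (((-a) : Fin n → ℤ) i : ℝ)) = -(fun i => (a i : ℝ)) := by
      funext i; push_cast [Pi.neg_apply]; ring
    simp only [Set.mem_setOf_eq, h]
    exact Submodule.neg_mem _ ha

namespace AtypAux

theorem dot_add {n : ℕ} (u w v : Fin n → ℝ) : dotR (u + w) v = dotR u v + dotR w v := by
  simp [dotR, add_mul, Finset.sum_add_distrib]

theorem dot_smul {n : ℕ} (c : ℝ) (u v : Fin n → ℝ) : dotR (c • u) v = c * dotR u v := by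
  simp [dotR, Finset.mul_sum, mul_assoc]

theorem dot_zero {n : ℕ} (u : Fin n → ℝ) : dotR u 0 = 0 := by
  simp [dotR]

def dl {n : ℕ} (u : Fin n → ℝ) : (Fin n → ℝ) →ₗ[ℝ] ℝ where
  toFun := dotR u
  map_add' x y := by simp [dotR, mul_add, Finset.sum_add_distrib]
  map_smul' c x := by
    simp only [dotR, Finset.mul_sum, Pi.smul_apply, smul_eq_mul, RingHom.id_apply]
    exact Finset.sum_congr rfl fun i _ => by ring

theorem dl_apply {n : ℕ} (u v : Fin n → ℝ) : dl u v = dotR u v := rfl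

theorem dot_single {n : ℕ} (u : Fin n → ℝ) (i : Fin n) : dotR u (Pi.single i 1) = u i := by
  simp [dotR, Pi.single_apply]

theorem exists_dot {n : ℕ} (φ : (Fin n → ℝ) →ₗ[ℝ] ℝ) : ∃ w, ∀ v, φ v = dotR w v := by
  refine ⟨fun i => φ (Pi.single i 1), fun v => ?_⟩
  have : φ = dl (fun i => φ (Pi.single i 1)) := by
    refine LinearMap.pi_ext' fun i => LinearMap.ext_ring ?_
    simp [dl_apply, dot_single]
  exact congrArg (fun g => g v) this

theorem setDim_eq {n : ℕ} (s : Set (Fin n → ℝ)) (h : (0 : Fin n → ℝ) ∈ s) :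
    setDim s = Module.finrank ℝ (Submodule.span ℝ s) := by
  unfold setDim
  rw [direction_affineSpan, vectorSpan_eq_span_vsub_set_right ℝ h]
  have : ((fun x : Fin n → ℝ => x -ᵥ (0 : Fin n → ℝ)) '' s) = s := by
    ext x
    constructor
    · rintro ⟨y, hy, rfl⟩
      have e : y -ᵥ (0 : Fin n → ℝ) = y := sub_zero y
      show y -ᵥ (0 : Fin n → ℝ) ∈ s
      rw [e]
      exact hy
    · exact fun hx => ⟨x, hx, sub_zero x⟩
  rw [this]

def gens {n : ℕ} (f : MvPolynomial (Fin n) ℂ) : Finset (Fin n → ℝ) :=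
  insert 0 (f.support.image (fun v : Fin n →₀ ℕ => fun i => (v i : ℝ)))

theorem NP_eq {n : ℕ} (f : MvPolynomial (Fin n) ℂ) :
    NPinf f = convexHull ℝ (gens f : Set (Fin n → ℝ)) := by
  unfold NPinf gens realSupp
  congr 1
  ext x
  simp

theorem gens_sub {n : ℕ} (f : MvPolynomial (Fin n) ℂ) {a} (ha : a ∈ gens f) : a ∈ NPinf f := by
  rw [NP_eq]; exact subset_convexHull ℝ _ ha

theorem zero_mem {n : ℕ} (f : MvPolynomial (Fin n) ℂ) : (0 : Fin n → ℝ) ∈ NPinf f :=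
  gens_sub f (by simp [gens])

theorem nonneg_of_gens {n : ℕ} (f : MvPolynomial (Fin n) ℂ) (u : Fin n → ℝ)
    (h : ∀ a ∈ gens f, 0 ≤ dotR u a) : ∀ v ∈ NPinf f, 0 ≤ dotR u v := by
  intro v hv
  rw [NP_eq] at hv
  have hc : Convex ℝ {v | 0 ≤ dl u v} := convex_halfSpace_ge (dl u).isLinear 0
  exact convexHull_min (fun a ha => h a ha) hc hv

theorem NP_nonneg {n : ℕ} (f : MvPolynomial (Fin n) ℂ) (v : Fin n → ℝ) (hv : v ∈ NPinf f)
    (i : Fin n) : 0 ≤ v i := by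
  have := nonneg_of_gens f (Pi.single i 1) (fun a ha => ?_) v hv
  · simpa [dotR, Pi.single_apply] using this
  · simp only [gens, Finset.mem_insert, Finset.mem_image] at ha
    rcases ha with rfl | ⟨b, -, rfl⟩
    · simp [dotR]
    · simp [dotR, Pi.single_apply]

theorem mem_face {n : ℕ} (f : MvPolynomial (Fin n) ℂ) (u : Fin n → ℝ)
    (h : ∀ a ∈ gens f, 0 ≤ dotR u a) (v : Fin n → ℝ) :
    v ∈ suppFace f u ↔ v ∈ NPinf f ∧ dotR u v = 0 := by
  constructor
  · rintro ⟨hv, h2⟩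
    have := h2 0 (zero_mem f)
    rw [dot_zero] at this
    exact ⟨hv, le_antisymm this (nonneg_of_gens f u h v hv)⟩
  · rintro ⟨hv, h2⟩
    exact ⟨hv, fun w hw => h2 ▸ nonneg_of_gens f u h w hw⟩

theorem nonneg_of_zero_mem {n : ℕ} (f : MvPolynomial (Fin n) ℂ) (u : Fin n → ℝ)
    (h : (0 : Fin n → ℝ) ∈ suppFace f u) : ∀ a ∈ gens f, 0 ≤ dotR u a := by
  intro a ha
  have := h.2 a (gens_sub f ha)
  rwa [dot_zero] at this

theorem exists_gen {n : ℕ} (f : MvPolynomial (Fin n) ℂ) (hdim : setDim (NPinf f) = n)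
    (w : Fin n → ℝ) (hw : w ≠ 0) : ∃ a ∈ gens f, dotR w a ≠ 0 := by
  by_contra! hcon
  apply hw
  rw [setDim_eq _ (zero_mem f)] at hdim
  have htop : Submodule.span ℝ (NPinf f) = ⊤ :=
    Submodule.eq_top_of_finrank_eq (by simpa using hdim)
  have h1 : Submodule.span ℝ (NPinf f) ≤ LinearMap.ker (dl w) := by
    rw [Submodule.span_le]
    intro v hv
    have p := nonneg_of_gens f w (fun a ha => (hcon a ha).ge) v hv
    have q := nonneg_of_gens f ((-1 : ℝ) • w)
      (fun a ha => by rw [dot_smul, hcon a ha]; simp) v hv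
    rw [dot_smul] at q
    show dotR w v = 0
    linarith
  funext i
  have : (Pi.single i 1 : Fin n → ℝ) ∈ LinearMap.ker (dl w) := h1 (htop ▸ Submodule.mem_top)
  have h2 : dotR w (Pi.single i 1) = 0 := this
  rwa [dot_single] at h2

/-- pushing `u` along `w` -/
theorem push {n : ℕ} (f : MvPolynomial (Fin n) ℂ)
    (u w : Fin n → ℝ) (h : ∀ a ∈ gens f, 0 ≤ dotR u a)
    (hw : ∀ v ∈ suppFace f u, dotR w v = 0) (hneg : ∃ a ∈ gens f, dotR w a < 0) :
    ∃ t : ℝ, (∀ a ∈ gens f, 0 ≤ dotR (u + t • w) a) ∧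
      ((gens f).filter (fun a => dotR (u + t • w) a ≠ 0)).card <
        ((gens f).filter (fun a => dotR u a ≠ 0)).card := by
  obtain ⟨b, hb, hb'⟩ := hneg
  obtain ⟨a0, ha0, hmin⟩ := Finset.exists_min_image ((gens f).filter (fun a => dotR w a < 0))
    (fun a => dotR u a / (-(dotR w a))) ⟨b, by simp [hb, hb']⟩
  rw [Finset.mem_filter] at ha0
  obtain ⟨ha0, hw0⟩ := ha0
  have ht : 0 ≤ dotR u a0 / (-(dotR w a0)) := div_nonneg (h a0 ha0) (by linarith)
  refine ⟨dotR u a0 / (-(dotR w a0)), ?_, ?_⟩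
  · intro a ha
    rw [dot_add, dot_smul]
    by_cases hwa : dotR w a < 0
    · have := hmin a (by simp [ha, hwa])
      rw [le_div_iff₀ (by linarith)] at this
      linarith
    · push Not at hwa
      have := h a ha
      positivity
  · apply Finset.card_lt_card
    rw [Finset.ssubset_iff_of_subset]
    · refine ⟨a0, ?_, ?_⟩
      · rw [Finset.mem_filter]
        refine ⟨ha0, fun h0 => ?_⟩
        have := hw a0 ((mem_face f u h a0).2 ⟨gens_sub f ha0, h0⟩)
        linarith
      · rw [Finset.mem_filter, not_and, not_not]
        intro _
        rw [dot_add, dot_smul]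
        have hne : dotR w a0 ≠ 0 := hw0.ne
        rw [div_neg, neg_mul, div_mul_cancel₀ _ hne]
        ring
    · intro a
      simp only [Finset.mem_filter]
      rintro ⟨ha, hne⟩
      refine ⟨ha, fun h0 => hne ?_⟩
      have := hw a ((mem_face f u h a).2 ⟨gens_sub f ha, h0⟩)
      rw [dot_add, dot_smul, this, h0]
      simp

/-- the starting conormal vector -/
theorem start {n : ℕ} (f : MvPolynomial (Fin n) ℂ) (γ : Set (Fin n → ℝ))
    (hγ : IsFaceOf f γ) (h0 : (0 : Fin n → ℝ) ∈ γ)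
    (S : Finset (Fin n))
    (hmin : ∀ S' : Finset (Fin n), γ ⊆ coordSub S' → S ⊆ S')
    (hS : γ ⊆ coordSub S)
    (hlt : setDim γ < S.card) :
    ∃ (i : Fin n) (u : Fin n → ℝ), (∀ a ∈ gens f, 0 ≤ dotR u a) ∧ (∀ v ∈ γ, dotR u v = 0) ∧
      u i < 0 := by
  obtain ⟨u0, rfl⟩ := hγ
  have hu0 := nonneg_of_zero_mem f u0 h0
  have hu0' : ∀ v ∈ suppFace f u0, dotR u0 v = 0 := fun v hv => ((mem_face f u0 hu0 v).1 hv).2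
  by_cases hneg : ∃ i, u0 i < 0
  · obtain ⟨i, hi⟩ := hneg
    exact ⟨i, u0, hu0, hu0', hi⟩
  push Not at hneg
  rw [setDim_eq _ h0] at hlt
  -- some basis vector outside of the span
  have h1 : ∃ i ∈ S, (Pi.single i 1 : Fin n → ℝ) ∉ Submodule.span ℝ (suppFace f u0) := by
    by_contra! hcon
    have hli : LinearIndependent ℝ (fun i : S => (Pi.single (i : Fin n) 1 : Fin n → ℝ)) := by
      have := (Pi.basisFun ℝ (Fin n)).linearIndependent.comp (fun i : S => (i : Fin n))
        Subtype.val_injective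
      convert this using 1
      funext i
      simp
    have hle : Submodule.span ℝ (Set.range
        (fun i : S => (Pi.single (i : Fin n) 1 : Fin n → ℝ))) ≤
        Submodule.span ℝ (suppFace f u0) := by
      rw [Submodule.span_le]
      rintro _ ⟨i, rfl⟩
      exact hcon i i.2
    have := Submodule.finrank_mono hle
    rw [finrank_span_eq_card hli] at this
    simp at this
    omega
  obtain ⟨i, hiS, hi⟩ := h1
  -- `u0 i = 0`
  have hui : u0 i = 0 := by
    have : ∃ v ∈ suppFace f u0, v i ≠ 0 := by
      by_contra! hcon
      have := hmin (S.erase i) (fun v hv j hj => by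
        by_cases hji : j = i
        · rw [hji]; exact hcon v hv
        · exact hS hv j (fun hjS => hj (Finset.mem_erase.2 ⟨hji, hjS⟩)))
      exact (Finset.notMem_erase i S) (this hiS)
    obtain ⟨v, hv, hvi⟩ := this
    have hz := hu0' v hv
    unfold dotR at hz
    rw [Finset.sum_eq_zero_iff_of_nonneg
      (fun j _ => mul_nonneg (hneg j) (NP_nonneg f v hv.1 j))] at hz
    have := hz i (Finset.mem_univ i)
    rcases mul_eq_zero.1 this with h | h
    · exact h
    · exact absurd h hvi
  obtain ⟨w, hwi, hw⟩ : ∃ w : Fin n → ℝ, w i < 0 ∧ ∀ v ∈ suppFace f u0, dotR w v = 0 := by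
    obtain ⟨φ, hφ, hker⟩ := Submodule.exists_le_ker_of_notMem hi
    obtain ⟨w, hw⟩ := exists_dot φ
    have hz : ∀ v ∈ suppFace f u0, dotR w v = 0 := fun v hv => by
      rw [← hw]; exact hker (Submodule.subset_span hv)
    rw [hw, dot_single] at hφ
    rcases lt_or_gt_of_ne hφ with h | h
    · exact ⟨w, h, hz⟩
    · refine ⟨(-1 : ℝ) • w, by simpa using h, fun v hv => ?_⟩
      rw [dot_smul, hz v hv]; simp
  -- choose a large multiple of u0
  have hc : ∃ c : ℝ, ∀ a ∈ gens f, 0 ≤ dotR (c • u0 + w) a := by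
    refine ⟨∑ a ∈ gens f, |dotR w a| / dotR u0 a, fun a ha => ?_⟩
    rw [dot_add, dot_smul]
    rcases (hu0 a ha).eq_or_lt with h | h
    · rw [← h, hw a ((mem_face f u0 hu0 a).2 ⟨gens_sub f ha, h.symm⟩)]; simp
    · have := Finset.single_le_sum (f := fun a => |dotR w a| / dotR u0 a)
        (fun b hb => div_nonneg (abs_nonneg _) (hu0 b hb)) ha
      rw [div_le_iff₀ h] at this
      have := neg_abs_le (dotR w a)
      linarith
  obtain ⟨c, hc⟩ := hc
  refine ⟨i, c • u0 + w, hc, fun v hv => ?_, ?_⟩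
  · rw [dot_add, dot_smul, hu0' v hv, hw v hv]; simp
  · simp [hui, hwi]

end AtypAux

open AtypAux in
theorem atypical_of_dim_lt_card {n : ℕ} (f : MvPolynomial (Fin n) ℂ)
    (hdim : setDim (NPinf f) = n) (γ : Set (Fin n → ℝ))
    (hγ : IsFaceOf f γ) (h0 : (0 : Fin n → ℝ) ∈ γ)
    (S : Finset (Fin n)) (hS : γ ⊆ coordSub S)
    (hmin : ∀ S' : Finset (Fin n), γ ⊆ coordSub S' → S ⊆ S')
    (hlt : setDim γ < S.card) :
    IsAtypicalFace f γ := by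
  refine ⟨hγ, h0, ?_⟩
  obtain ⟨i, u1, hu1⟩ := start f γ hγ h0 S hmin hS hlt
  have hγP : γ ⊆ NPinf f := by
    obtain ⟨u0, rfl⟩ := hγ
    exact fun v hv => hv.1
  obtain ⟨u, ⟨hu, huγ, hui⟩, hbest⟩ := WellFounded.has_min
    (measure (fun u : Fin n → ℝ => ((gens f).filter (fun a => dotR u a ≠ 0)).card)).wf
    {u | (∀ a ∈ gens f, 0 ≤ dotR u a) ∧ (∀ v ∈ γ, dotR u v = 0) ∧ u i < 0} ⟨u1, hu1⟩
  have hsub : γ ⊆ suppFace f u := fun v hv => (mem_face f u hu v).2 ⟨hγP hv, huγ v hv⟩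
  have hF : ∀ v ∈ suppFace f u, dotR u v = 0 := fun v hv => ((mem_face f u hu v).1 hv).2
  have key0 : ∀ w : Fin n → ℝ, (∀ v ∈ suppFace f u, dotR w v = 0) → w i = 0 →
      ¬ ∃ a ∈ gens f, dotR w a < 0 := by
    intro w hw hwi hneg
    obtain ⟨t, ht, hcard⟩ := push f u w hu hw hneg
    refine hbest (u + t • w) ⟨ht, fun v hv => ?_, ?_⟩ hcard
    · rw [dot_add, dot_smul, huγ v hv, hw v (hsub hv)]; simp
    · simp [hwi, hui]
  have key : ∀ w : Fin n → ℝ, (∀ v ∈ suppFace f u, dotR w v = 0) → w i = 0 → w = 0 := by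
    intro w hw hwi
    by_contra hne
    obtain ⟨a, ha, hwa⟩ := exists_gen f hdim w hne
    rcases lt_or_gt_of_ne hwa with h | h
    · exact key0 w hw hwi ⟨a, ha, h⟩
    · refine key0 ((-1 : ℝ) • w) (fun v hv => ?_) (by simp [hwi]) ⟨a, ha, ?_⟩
      · rw [dot_smul, hw v hv]; simp
      · rw [dot_smul]; linarith
  have hu_ne : u ≠ 0 := by
    rintro rfl
    simp at hui
  refine ⟨suppFace f u, ⟨u, rfl⟩, ?_, hsub, ?_⟩
  · rw [setDim_eq _ (hsub h0)]
    have hker : Submodule.span ℝ (suppFace f u) ≤ LinearMap.ker (dl u) := by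
      rw [Submodule.span_le]
      exact fun v hv => hF v hv
    have hlt' : Module.finrank ℝ (Submodule.span ℝ (suppFace f u)) < n := by
      have : Submodule.span ℝ (suppFace f u) ≠ ⊤ := by
        intro h
        have h1 : (Pi.single i 1 : Fin n → ℝ) ∈ LinearMap.ker (dl u) :=
          hker (h ▸ Submodule.mem_top)
        have h2 : dotR u (Pi.single i 1) = 0 := h1
        rw [dot_single] at h2
        linarith
      simpa using Submodule.finrank_lt this
    have htop : Submodule.span ℝ (suppFace f u) ⊔
        Submodule.span ℝ {(Pi.single i 1 : Fin n → ℝ)} = ⊤ := by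
      by_contra hne
      obtain ⟨φ, hφ, hle⟩ := Submodule.exists_le_ker_of_lt_top _ (lt_top_iff_ne_top.2 hne)
      obtain ⟨w, hw⟩ := exists_dot φ
      apply hφ
      have : w = 0 := by
        apply key w
        · intro v hv
          rw [← hw]
          exact hle (Submodule.mem_sup_left (Submodule.subset_span hv))
        · rw [← dot_single w i, ← hw]
          exact hle (Submodule.mem_sup_right (Submodule.subset_span rfl))
      ext v
      simp [hw, this, dotR]
    have h1 := Submodule.finrank_add_le_finrank_add_finrank
      (Submodule.span ℝ (suppFace f u)) (Submodule.span ℝ {(Pi.single i 1 : Fin n → ℝ)})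
    rw [htop, finrank_top] at h1
    have h2 : Module.finrank ℝ (Submodule.span ℝ {(Pi.single i 1 : Fin n → ℝ)}) ≤ 1 := by
      simpa using finrank_span_le_card (R := ℝ) ({(Pi.single i 1 : Fin n → ℝ)} : Set _)
    simp only [Module.finrank_fin_fun] at h1
    omega
  · intro u' hu'ne hface hpos
    have h0' : (0 : Fin n → ℝ) ∈ suppFace f u' := hface ▸ hsub h0
    have hu' := nonneg_of_zero_mem f u' h0'
    have hF' : ∀ v ∈ suppFace f u, dotR u' v = 0 := fun v hv =>
      ((mem_face f u' hu' v).1 (hface ▸ hv)).2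
    have hz := key (u' + (-(u' i / u i)) • u) (fun v hv => by
      rw [dot_add, dot_smul, hF v hv, hF' v hv]; simp) (by
      have hne : u i ≠ 0 := hui.ne
      simp only [Pi.add_apply, Pi.smul_apply, smul_eq_mul]
      rw [neg_mul, div_mul_cancel₀ _ hne]
      ring)
    obtain ⟨a, ha, hua⟩ := exists_gen f hdim u' hu'ne
    have h1 : dotR (u' + (-(u' i / u i)) • u) a = 0 := by rw [hz]; simp [dotR]
    rw [dot_add, dot_smul] at h1
    have h2 : u' i / u i ≤ 0 := div_nonpos_of_nonneg_of_nonpos (hpos i) hui.le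
    have h3 := hu a ha
    have h4 := hu' a ha
    have h5 : 0 ≤ -(u' i / u i) * dotR u a := mul_nonneg (by linarith) h3
    exact hua (by linarith)
end
end

section
/- Assume dim Γ_∞(f) = n, let γ be a face at infinity of Γ_∞(f), let ℝ^S be the minimal coordinate subspace of ℝ^n containing γ, and let σ = σ(γ) be the cone of the dual fan of Γ_∞(f) corresponding to γ. Then γ is admissible if and only if there exist finitely many integral vectors f_1,…,f_k ∈ (ℝ^n \\ ℝ_{≥0}^n) ∩ ℤ^n (k ≥ 1) with min_{v ∈ Γ_∞(f)} ⟨f_j, v⟩ < 0 for all 1 ≤ j ≤ k, such that σ = (Σ_{i ∉ S} ℝ_{≥0} e_i) + (Σ_{j=1}^k ℝ_{≥0} f_j), where e_1,…,e_n is the standard basis of ℝ^n. -/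
open scoped Classical

noncomputable section

/-- A face at infinity is admissible if it is not contained in any atypical face. -/
def IsAdmissibleFace {n : ℕ} (f : MvPolynomial (Fin n) ℂ) (γ : Set (Fin n → ℝ)) : Prop :=
  IsFaceOf f γ ∧ (0 : Fin n → ℝ) ∉ γ ∧
    ∀ γ' : Set (Fin n → ℝ), IsAtypicalFace f γ' → ¬ γ ⊆ γ'


lemma dotR_add_r {n : ℕ} (t u w : Fin n → ℝ) : dotR t (u + w) = dotR t u + dotR t w := by
  simp [dotR, mul_add, Finset.sum_add_distrib]
lemma dotR_smul_r {n : ℕ} (t u : Fin n → ℝ) (c : ℝ) : dotR t (c • u) = c * dotR t u := by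
  simp only [dotR, Finset.mul_sum, Pi.smul_apply, smul_eq_mul]
  exact Finset.sum_congr rfl fun i _ => by ring
lemma dotR_comm' {n : ℕ} (t u : Fin n → ℝ) : dotR t u = dotR u t := by
  simp only [dotR, mul_comm]
lemma dotR_neg_r {n : ℕ} (t u : Fin n → ℝ) : dotR t (-u) = - dotR t u := by
  simp [dotR]
lemma dotR_sub_r {n : ℕ} (t u w : Fin n → ℝ) : dotR t (u - w) = dotR t u - dotR t w := by
  simp [dotR, mul_sub, Finset.sum_sub_distrib]
lemma dotR_zero_r {n : ℕ} (t : Fin n → ℝ) : dotR t 0 = 0 := by simp [dotR]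
lemma dotR_add_l {n : ℕ} (t u w : Fin n → ℝ) : dotR (u + w) t = dotR u t + dotR w t := by
  simp [dotR, add_mul, Finset.sum_add_distrib]
lemma dotR_smul_l {n : ℕ} (t u : Fin n → ℝ) (c : ℝ) : dotR (c • u) t = c * dotR u t := by
  rw [dotR_comm', dotR_smul_r, dotR_comm']
lemma dotR_neg_l {n : ℕ} (t u : Fin n → ℝ) : dotR (-u) t = - dotR u t := by
  simp [dotR]
lemma dotR_sub_l {n : ℕ} (t u w : Fin n → ℝ) : dotR (u - w) t = dotR u t - dotR w t := by
  simp [dotR, sub_mul, Finset.sum_sub_distrib]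

def dotL {n : ℕ} (u : Fin n → ℝ) : (Fin n → ℝ) →ₗ[ℝ] ℝ where
  toFun v := dotR u v
  map_add' := dotR_add_r u
  map_smul' c v := dotR_smul_r u v c

def InC {n : ℕ} (T : Finset (Fin n → ℝ)) (u : Fin n → ℝ) : Prop := ∀ t ∈ T, 0 ≤ dotR t u

def Extr {n : ℕ} (T : Finset (Fin n → ℝ)) (u : Fin n → ℝ) : Prop :=
  InC T u ∧ u ≠ 0 ∧ ∀ w, (∀ t ∈ T, dotR t u = 0 → dotR t w = 0) → ∃ c : ℝ, w = c • u

lemma cone_push {n : ℕ} (T : Finset (Fin n → ℝ)) (u d : Fin n → ℝ) (hu : InC T u)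
    (hd : ∀ t ∈ T, dotR t u = 0 → dotR t d = 0) (hneg : ∃ t ∈ T, dotR t d < 0) :
    ∃ s : ℝ, 0 < s ∧ InC T (u + s • d) ∧ ∃ t ∈ T, dotR t u ≠ 0 ∧ dotR t (u + s • d) = 0 := by
  obtain ⟨t1, ht1, hn1⟩ := hneg
  obtain ⟨t0, ht0, hmin⟩ := Finset.exists_min_image (T.filter fun t => dotR t d < 0)
    (fun t => dotR t u / (- dotR t d)) ⟨t1, by simp [ht1, hn1]⟩
  simp only [Finset.mem_filter] at ht0 hmin
  have hpos : ∀ t ∈ T, dotR t d < 0 → 0 < dotR t u := fun t ht h =>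
    lt_of_le_of_ne (hu t ht) fun h' => by have := hd t ht h'.symm; linarith
  have hs : 0 < dotR t0 u / (- dotR t0 d) :=
    div_pos (hpos t0 ht0.1 ht0.2) (by linarith [ht0.2])
  refine ⟨dotR t0 u / (- dotR t0 d), hs, ?_, t0, ht0.1, (hpos t0 ht0.1 ht0.2).ne', ?_⟩
  · intro t ht
    rw [dotR_add_r, dotR_smul_r]
    rcases lt_or_ge (dotR t d) 0 with h | h
    · have := hmin t ⟨ht, h⟩
      rw [le_div_iff₀ (by linarith)] at this
      linarith
    · have := hu t ht
      positivity
  · rw [dotR_add_r, dotR_smul_r]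
    have := ht0.2.ne
    field_simp
    ring

lemma cone_decomp {n : ℕ} (T : Finset (Fin n → ℝ))
    (hp : ∀ u, InC T u → InC T (-u) → u = 0) :
    ∀ (N : ℕ) (u : Fin n → ℝ), (T.filter fun t => dotR t u ≠ 0).card ≤ N → InC T u →
      u ∈ AddSubmonoid.closure {u | Extr T u} := by
  intro N
  induction N using Nat.strong_induction_on with
  | _ N ih =>
  intro u hN hu
  by_cases h0 : u = 0
  · rw [h0]; exact zero_mem _
  by_cases hE : Extr T u
  · exact AddSubmonoid.subset_closure hE
  have step : ∀ x, InC T x → (∀ t ∈ T, dotR t u = 0 → dotR t x = 0) →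
      (∃ t ∈ T, dotR t u ≠ 0 ∧ dotR t x = 0) → x ∈ AddSubmonoid.closure {u | Extr T u} := by
    intro x hx h1 ⟨t, ht, h2, h3⟩
    have hlt : (T.filter fun t => dotR t x ≠ 0).card < (T.filter fun t => dotR t u ≠ 0).card := by
      apply Finset.card_lt_card
      refine Finset.ssubset_iff_of_subset (fun s hs => ?_) |>.2 ⟨t, by simp [ht, h2], by simp [h3]⟩
      simp only [Finset.mem_filter] at hs ⊢
      exact ⟨hs.1, fun h => hs.2 (h1 s hs.1 h)⟩
    exact ih _ (lt_of_lt_of_le hlt hN) x le_rfl hx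
  have : ∃ w, (∀ t ∈ T, dotR t u = 0 → dotR t w = 0) ∧ ∀ c : ℝ, w ≠ c • u := by
    by_contra hcon
    push Not at hcon
    exact hE ⟨hu, h0, hcon⟩
  obtain ⟨w0, hw0, hc0⟩ := this
  obtain ⟨w, hw, hc, hneg⟩ : ∃ w, (∀ t ∈ T, dotR t u = 0 → dotR t w = 0) ∧
      (∀ c : ℝ, w ≠ c • u) ∧ ∃ t ∈ T, dotR t w < 0 := by
    by_cases h : InC T w0
    · refine ⟨-w0, fun t ht h => by rw [dotR_neg_r, hw0 t ht h, neg_zero], fun c h => hc0 (-c) ?_, ?_⟩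
      · rw [neg_smul, ← h, neg_neg]
      · by_contra hcon
        push Not at hcon
        exact hc0 0 (by rw [zero_smul]; exact hp _ h hcon)
    · unfold InC at h
      push Not at h
      exact ⟨w0, hw0, hc0, h⟩
  obtain ⟨s, hs, hin, hact⟩ := cone_push T u w hu hw hneg
  have hker : ∀ t ∈ T, dotR t u = 0 → dotR t (u + s • w) = 0 := fun t ht h => by
    rw [dotR_add_r, dotR_smul_r, h, hw t ht h]; ring
  have m1 := step _ hin hker hact
  set u' := u + s • w with hu'
  have hu0 : u' ≠ 0 := by
    intro h
    apply hc (-s⁻¹)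
    have : s • w = -u := by rw [eq_neg_iff_add_eq_zero, add_comm]; exact h
    rw [neg_smul, ← smul_neg, ← this, smul_smul, inv_mul_cancel₀ hs.ne', one_smul]
  have hneg' : ∃ t ∈ T, dotR t (-u') < 0 := by
    by_contra hcon
    push Not at hcon
    exact hu0 (hp _ hin hcon)
  have hker' : ∀ t ∈ T, dotR t u = 0 → dotR t (-u') = 0 := fun t ht h => by
    rw [dotR_neg_r, hker t ht h, neg_zero]
  obtain ⟨r, hr, hin2, hact2⟩ := cone_push T u (-u') hu hker' hneg'
  have m2 := step _ hin2 (fun t ht h => by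
    rw [dotR_add_r, dotR_smul_r, h, hker' t ht h]; ring) hact2
  have hr' : InC T (r • u') := fun t ht => by
    rw [dotR_smul_r]; exact mul_nonneg hr.le (hin t ht)
  have m3 := step (r • u') hr' (fun t ht h => by rw [dotR_smul_r, hker t ht h, mul_zero]) (by
    obtain ⟨t, ht, h1, h2⟩ := hact
    exact ⟨t, ht, h1, by rw [dotR_smul_r, h2, mul_zero]⟩)
  have : u = (u + r • (-u')) + r • u' := by simp
  rw [this]
  exact add_mem m2 m3

def cz {n : ℕ} (z : Fin n → ℤ) : Fin n → ℝ := fun i => (z i : ℝ)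

lemma exists_int_kernel {n : ℕ} (B : Set (Fin n → ℤ)) (u : Fin n → ℝ) (hu : u ≠ 0)
    (h : ∀ b ∈ B, dotR (cz b) u = 0) :
    ∃ z : Fin n → ℤ, z ≠ 0 ∧ ∀ b ∈ B, dotR (cz b) (cz z) = 0 := by
  obtain ⟨i, hi⟩ := Function.ne_iff.1 hu
  obtain ⟨φ, hφ⟩ : ∃ φ : Module.Dual ℚ ℝ, φ (u i) ≠ 0 := by
    by_contra hcon
    push Not at hcon
    exact hi ((Module.forall_dual_apply_eq_zero_iff ℚ (u i)).1 hcon)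
  obtain ⟨N, hN⟩ := IsLocalization.exist_integer_multiples_of_finset (nonZeroDivisors ℤ)
    (Finset.univ.image fun j => φ (u j))
  have hN0 : (N : ℤ) ≠ 0 := nonZeroDivisors.coe_ne_zero N
  have : ∀ j, ∃ z : ℤ, (z : ℚ) = (N : ℤ) * φ (u j) := fun j => by
    obtain ⟨z, hz⟩ := hN (φ (u j)) (by simp)
    exact ⟨z, by simpa using hz⟩
  choose z hz using this
  refine ⟨z, fun h0 => ?_, fun b hb => ?_⟩
  · have := hz i
    rw [h0] at this
    simp only [Pi.zero_apply, Int.cast_zero] at this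
    have h2 : ((N : ℤ) : ℚ) ≠ 0 := by exact_mod_cast hN0
    exact (mul_ne_zero h2 hφ) this.symm
  · have h1 := h b hb
    have h2 : ∑ j, (b j : ℚ) * φ (u j) = 0 := by
      have : φ (∑ j, (b j : ℚ) • u j) = 0 := by
        have : ∑ j, (b j : ℚ) • u j = 0 := by
          rw [← h1]
          simp [dotR, cz, Rat.smul_def]
        rw [this, map_zero]
      simpa using this
    have h3 : ∑ j, (b j : ℚ) * (z j : ℚ) = 0 := by
      simp only [hz]
      rw [← mul_zero ((N : ℤ) : ℚ), ← h2, Finset.mul_sum]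
      exact Finset.sum_congr rfl fun j _ => by ring
    have h4 : ∑ j, b j * z j = 0 := by exact_mod_cast h3
    simp only [dotR, cz]
    exact_mod_cast h4

lemma extr_unique {n : ℕ} (T : Finset (Fin n → ℝ))
    (hp : ∀ u, InC T u → InC T (-u) → u = 0) (u w : Fin n → ℝ) (hu : Extr T u)
    (hw : InC T w) (hw0 : w ≠ 0) (h : ∀ t ∈ T, dotR t u = 0 → dotR t w = 0) :
    ∃ c : ℝ, 0 < c ∧ w = c • u := by
  obtain ⟨c, hc⟩ := hu.2.2 w h
  refine ⟨c, ?_, hc⟩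
  rcases lt_trichotomy c 0 with h1 | h1 | h1
  · exfalso
    apply hu.2.1
    apply hp u hu.1
    intro t ht
    have := hw t ht
    rw [hc, dotR_smul_r] at this
    rw [dotR_neg_r]
    nlinarith [hu.1 t ht]
  · exfalso; apply hw0; rw [hc, h1, zero_smul]
  · exact h1

lemma extr_smul {n : ℕ} (T : Finset (Fin n → ℝ)) (u : Fin n → ℝ) (hu : Extr T u) (c : ℝ)
    (hc : 0 < c) : Extr T (c • u) := by
  refine ⟨fun t ht => ?_, smul_ne_zero hc.ne' hu.2.1, fun w hw => ?_⟩
  · rw [dotR_smul_r]; exact mul_nonneg hc.le (hu.1 t ht)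
  · obtain ⟨d, hd⟩ := hu.2.2 w fun t ht h => hw t ht (by rw [dotR_smul_r, h, mul_zero])
    exact ⟨d / c, by rw [smul_smul, div_mul_cancel₀ _ hc.ne', hd]⟩

lemma extr_int {n : ℕ} (T : Finset (Fin n → ℝ)) (hT : ∀ t ∈ T, ∃ b, t = cz b)
    (u : Fin n → ℝ) (hu : Extr T u) :
    ∃ z : Fin n → ℤ, ∃ c : ℝ, 0 < c ∧ cz z = c • u := by
  obtain ⟨z, hz0, hz⟩ := exists_int_kernel {b | cz b ∈ T ∧ dotR (cz b) u = 0} u hu.2.1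
    (fun b hb => hb.2)
  obtain ⟨c, hc⟩ := hu.2.2 (cz z) (fun t ht h => by
    obtain ⟨b, rfl⟩ := hT t ht
    exact hz b ⟨ht, h⟩)
  rcases lt_trichotomy c 0 with h1 | h1 | h1
  · refine ⟨-z, -c, by linarith, ?_⟩
    rw [neg_smul, ← hc]; ext i; simp [cz]
  · exfalso; apply hz0
    rw [h1, zero_smul] at hc
    ext i
    have := congrFun hc i
    simpa [cz] using this
  · exact ⟨z, c, h1, hc⟩

lemma exists_pts {n : ℕ} (f : MvPolynomial (Fin n) ℂ) :
    ∃ A : Finset (Fin n → ℝ), NPinf f = convexHull ℝ (A : Set (Fin n → ℝ)) ∧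
      (∀ a ∈ A, ∃ z, a = cz z) ∧ (∀ a ∈ A, ∀ i, 0 ≤ a i) ∧ (0 : Fin n → ℝ) ∈ A := by
  refine ⟨insert 0 (f.support.image fun v i => (v i : ℝ)), ?_, ?_, ?_, by simp⟩
  · unfold NPinf
    congr 1
    ext x
    simp [realSupp, eq_comm]
  · intro a ha
    simp only [Finset.mem_insert, Finset.mem_image] at ha
    rcases ha with rfl | ⟨v, -, rfl⟩
    · exact ⟨0, by ext i; simp [cz]⟩
    · exact ⟨fun i => (v i : ℤ), by ext i; simp [cz]⟩
  · intro a ha i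
    simp only [Finset.mem_insert, Finset.mem_image] at ha
    rcases ha with rfl | ⟨v, -, rfl⟩
    · simp
    · simp

lemma dotR_sum_r {n : ℕ} {ι : Type*} (s : Finset ι) (u : Fin n → ℝ) (w : ι → ℝ)
    (y : ι → Fin n → ℝ) : dotR u (∑ a ∈ s, w a • y a) = ∑ a ∈ s, w a * dotR u (y a) := by
  have := map_sum (dotL u) (fun a => w a • y a) s
  simp only [map_smul, smul_eq_mul] at this
  exact this

lemma hull_lower {n : ℕ} (A : Finset (Fin n → ℝ)) (u : Fin n → ℝ) (m : ℝ)
    (h : ∀ a ∈ A, m ≤ dotR u a) : ∀ x ∈ convexHull ℝ (A : Set (Fin n → ℝ)), m ≤ dotR u x := by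
  intro x hx
  rw [Finset.mem_convexHull'] at hx
  obtain ⟨w, hw, hs, rfl⟩ := hx
  rw [dotR_sum_r]
  calc m = ∑ a ∈ A, w a * m := by rw [← Finset.sum_mul, hs, one_mul]
    _ ≤ _ := Finset.sum_le_sum fun a ha => mul_le_mul_of_nonneg_left (h a ha) (hw a ha)

section geom
variable {n : ℕ} {f : MvPolynomial (Fin n) ℂ} {A : Finset (Fin n → ℝ)}

lemma pts_sub (hA : NPinf f = convexHull ℝ (A : Set (Fin n → ℝ))) {a : Fin n → ℝ} (ha : a ∈ A) :
    a ∈ NPinf f := by rw [hA]; exact subset_convexHull ℝ _ ha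

/-- points of a face are convex combos of vertices of the face -/
lemma face_upper (hA : NPinf f = convexHull ℝ (A : Set (Fin n → ℝ))) (u0 u : Fin n → ℝ) (m : ℝ)
    (h : ∀ a ∈ A, a ∈ suppFace f u0 → dotR u a ≤ m) : ∀ x ∈ suppFace f u0, dotR u x ≤ m := by
  intro x hx
  have hx1 := hx.1
  rw [hA, Finset.mem_convexHull'] at hx1
  obtain ⟨w, hw, hs, hxe⟩ := hx1
  have key : ∀ a ∈ A, w a ≠ 0 → a ∈ suppFace f u0 := by
    have h1 : ∑ a ∈ A, w a * (dotR u0 a - dotR u0 x) = 0 := by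
      simp only [mul_sub, Finset.sum_sub_distrib, ← Finset.sum_mul, hs]
      rw [← dotR_sum_r, hxe]; ring
    have h2 := (Finset.sum_eq_zero_iff_of_nonneg (fun a ha =>
      mul_nonneg (hw a ha) (sub_nonneg.2 (hx.2 a (pts_sub hA ha))))).1 h1
    intro a ha hne
    have h3 := h2 a ha
    have h4 : dotR u0 a = dotR u0 x := by
      rcases mul_eq_zero.1 h3 with h | h
      · exact absurd h hne
      · linarith
    exact ⟨pts_sub hA ha, fun w hw => by rw [h4]; exact hx.2 w hw⟩
  rw [← hxe, dotR_sum_r]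
  calc _ ≤ ∑ a ∈ A, w a * m := Finset.sum_le_sum fun a ha => by
        by_cases hz : w a = 0
        · simp [hz]
        · exact mul_le_mul_of_nonneg_left (h a ha (key a ha hz)) (hw a ha)
    _ = m := by rw [← Finset.sum_mul, hs, one_mul]

lemma exists_vertex (hA : NPinf f = convexHull ℝ (A : Set (Fin n → ℝ))) (h0 : (0 : Fin n → ℝ) ∈ A)
    (u : Fin n → ℝ) : ∃ a ∈ A, a ∈ suppFace f u := by
  obtain ⟨a, ha, hm⟩ := Finset.exists_min_image A (dotR u) ⟨0, h0⟩
  refine ⟨a, ha, pts_sub hA ha, fun w hw => ?_⟩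
  rw [hA] at hw
  exact hull_lower A u _ hm w hw

def consT (A : Finset (Fin n → ℝ)) (γ : Set (Fin n → ℝ)) : Finset (Fin n → ℝ) :=
  ((A.filter (· ∈ γ)) ×ˢ A).image fun p => p.2 - p.1

lemma mem_consT {γ : Set (Fin n → ℝ)} {t : Fin n → ℝ} :
    t ∈ consT A γ ↔ ∃ a ∈ A, a ∈ γ ∧ ∃ b ∈ A, t = b - a := by
  simp only [consT, Finset.mem_image, Finset.mem_product, Finset.mem_filter, Prod.exists]
  constructor
  · rintro ⟨a, b, ⟨⟨h1, h2⟩, h3⟩, rfl⟩; exact ⟨a, h1, h2, b, h3, rfl⟩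
  · rintro ⟨a, h1, h2, b, h3, rfl⟩; exact ⟨a, b, ⟨⟨h1, h2⟩, h3⟩, rfl⟩

lemma inC_iff (hA : NPinf f = convexHull ℝ (A : Set (Fin n → ℝ))) (u0 u : Fin n → ℝ) :
    InC (consT A (suppFace f u0)) u ↔ suppFace f u0 ⊆ suppFace f u := by
  constructor
  · intro h x hx
    refine ⟨hx.1, fun w hw => ?_⟩
    rw [hA] at hw
    refine hull_lower A u _ (fun b hb => ?_) w hw
    refine face_upper hA u0 u _ (fun a ha haf => ?_) x hx
    have := h (b - a) (mem_consT.2 ⟨a, ha, haf, b, hb, rfl⟩)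
    rw [dotR_sub_l, dotR_comm' b, dotR_comm' a] at this
    linarith
  · intro h t ht
    obtain ⟨a, ha, haf, b, hb, rfl⟩ := mem_consT.1 ht
    rw [dotR_sub_l, dotR_comm' b, dotR_comm' a]
    have := (h haf).2 b (pts_sub hA hb)
    linarith

lemma continuous_dotR (x : Fin n → ℝ) : Continuous fun u : Fin n → ℝ => dotR u x := by
  unfold dotR; fun_prop

lemma sigma_eq (u0 : Fin n → ℝ) (hne : (suppFace f u0).Nonempty) :
    sigmaCone f (suppFace f u0) = {u | suppFace f u0 ⊆ suppFace f u} := by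
  apply Set.Subset.antisymm
  · apply closure_minimal
    · intro u hu
      have hu : suppFace f u = suppFace f u0 := hu
      exact hu.ge
    · have : {u : Fin n → ℝ | suppFace f u0 ⊆ suppFace f u} =
          ⋂ x ∈ suppFace f u0, ⋂ w ∈ NPinf f, {u | dotR u x ≤ dotR u w} := by
        ext u
        simp only [Set.mem_ofPred_eq, Set.mem_iInter]
        exact ⟨fun h x hx w hw => (h hx).2 w hw, fun h x hx => ⟨hx.1, fun w hw => h x hx w hw⟩⟩
      rw [this]
      exact isClosed_biInter fun x _ => isClosed_biInter fun w _ =>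
        isClosed_le (continuous_dotR x) (continuous_dotR w)
  · intro u hu
    have hu : suppFace f u0 ⊆ suppFace f u := hu
    obtain ⟨g, hg⟩ := hne
    have hmem : ∀ e : ℝ, 0 < e → suppFace f (u + e • u0) = suppFace f u0 := by
      intro e he
      ext x
      constructor
      · intro hx
        refine ⟨hx.1, fun w hw => ?_⟩
        have h1 := hx.2 g hg.1
        have h2 := (hu hg).2 x hx.1
        have h3 := hg.2 x hx.1
        have h4 := hg.2 w hw
        simp only [dotR_add_l, dotR_smul_l] at h1
        have : dotR u0 x ≤ dotR u0 g := by
          by_contra hcon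
          push Not at hcon
          nlinarith [mul_lt_mul_of_pos_left hcon he]
        linarith
      · intro hx
        refine ⟨hx.1, fun w hw => ?_⟩
        simp only [dotR_add_l, dotR_smul_l]
        have h1 := (hu hx).2 w hw
        have h2 := mul_le_mul_of_nonneg_left (hx.2 w hw) he.le
        linarith
    have ht : Filter.Tendsto (fun e : ℝ => u + e • u0) (nhdsWithin 0 (Set.Ioi 0)) (nhds u) := by
      have hc : Continuous (fun e : ℝ => u + e • u0) := by fun_prop
      have := hc.tendsto 0
      simp only [zero_smul, add_zero] at this
      exact this.mono_left nhdsWithin_le_nhds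
    refine mem_closure_of_tendsto ht ?_
    filter_upwards [self_mem_nhdsWithin] with e he
    exact hmem e he

lemma full_dim (hdim : setDim (NPinf f) = n) (u : Fin n → ℝ)
    (h : ∀ x ∈ NPinf f, dotR u x = 0) : u = 0 := by
  have hle : (affineSpan ℝ (NPinf f)).direction ≤ LinearMap.ker (dotL u) := by
    rw [direction_affineSpan, vectorSpan_def, Submodule.span_le]
    rintro _ ⟨x, hx, y, hy, rfl⟩
    show dotR u (x - y) = 0
    rw [dotR_sub_r, h x hx, h y hy, sub_zero]
  have htop : (affineSpan ℝ (NPinf f)).direction = ⊤ := by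
    apply Submodule.eq_top_of_finrank_eq
    rw [Module.finrank_fin_fun]; exact hdim
  rw [htop] at hle
  ext i
  have : dotR u (Pi.single i 1) = 0 := hle (Submodule.mem_top (x := Pi.single i 1))
  simpa [dotR, Pi.single_apply] using this

lemma zero_mem_NP (hA : NPinf f = convexHull ℝ (A : Set (Fin n → ℝ)))
    (h0 : (0 : Fin n → ℝ) ∈ A) : (0 : Fin n → ℝ) ∈ NPinf f := pts_sub hA h0

lemma pointed (hA : NPinf f = convexHull ℝ (A : Set (Fin n → ℝ))) (h0 : (0 : Fin n → ℝ) ∈ A)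
    (hdim : setDim (NPinf f) = n) (u0 u : Fin n → ℝ)
    (h1 : InC (consT A (suppFace f u0)) u) (h2 : InC (consT A (suppFace f u0)) (-u)) : u = 0 := by
  rw [inC_iff hA] at h1 h2
  obtain ⟨a, ha, haf⟩ := exists_vertex hA h0 u0
  have hz : ∀ x ∈ NPinf f, dotR u x = dotR u a := fun x hx => by
    have e1 := (h1 haf).2 x hx
    have e2 := (h2 haf).2 x hx
    rw [dotR_neg_l, dotR_neg_l] at e2
    linarith
  apply full_dim hdim
  intro x hx
  rw [hz x hx, ← hz 0 (pts_sub hA h0), dotR_zero_r]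

lemma facet_dim (hA : NPinf f = convexHull ℝ (A : Set (Fin n → ℝ)))
    (u0 u : Fin n → ℝ) (hu : Extr (consT A (suppFace f u0)) u) :
    setDim (suppFace f u) = n - 1 := by
  have hsub := (inC_iff hA u0 u).1 hu.1
  have hD : (affineSpan ℝ (suppFace f u)).direction = LinearMap.ker (dotL u) := by
    apply le_antisymm
    · rw [direction_affineSpan, vectorSpan_def, Submodule.span_le]
      rintro _ ⟨x, hx, y, hy, rfl⟩
      show dotR u (x - y) = 0
      rw [dotR_sub_r]
      have := hx.2 y hy.1
      have := hy.2 x hx.1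
      linarith
    · intro x hx
      by_contra hcon
      obtain ⟨φ, hφx, hφ⟩ := Submodule.exists_dual_map_eq_bot_of_notMem hcon inferInstance
      let w : Fin n → ℝ := fun i => φ (Pi.single i 1)
      have hw : ∀ y, φ y = dotR w y := fun y => by
        conv_lhs => rw [pi_eq_sum_univ' y]
        simp only [map_sum, map_smul, dotR, w, smul_eq_mul]
        exact Finset.sum_congr rfl fun i _ => by
          rw [mul_comm]
      obtain ⟨c, hc⟩ := hu.2.2 w (fun t ht htu => by
        obtain ⟨a, ha, haf, b, hb, rfl⟩ := mem_consT.1 ht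
        rw [dotR_comm', ← hw]
        have hm : b - a ∈ (affineSpan ℝ (suppFace f u)).direction := by
          rw [direction_affineSpan]
          have haf' := hsub haf
          refine vsub_mem_vectorSpan ℝ ⟨pts_sub hA hb, fun x hx => ?_⟩ haf'
          rw [dotR_sub_l, dotR_comm' b, dotR_comm' a] at htu
          have := haf'.2 x hx
          linarith
        have : φ (b - a) ∈ Submodule.map φ (affineSpan ℝ (suppFace f u)).direction :=
          Submodule.mem_map_of_mem hm
        rw [hφ] at this
        simpa using this)
      apply hφx
      rw [hw, hc, dotR_smul_l]
      have : dotR u x = 0 := hx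
      rw [this, mul_zero]
  unfold setDim
  rw [hD]
  have hr := LinearMap.finrank_range_add_finrank_ker (dotL u)
  have hsurj : LinearMap.range (dotL u) = ⊤ := by
    rw [LinearMap.range_eq_top]
    apply LinearMap.surjective
    intro h
    apply hu.2.1
    ext i
    have : dotR u (Pi.single i 1) = 0 := by
      have := congrArg (fun g => g (Pi.single i 1)) h
      exact this
    simpa [dotR, Pi.single_apply] using this
  rw [hsurj, finrank_top, Module.finrank_self, Module.finrank_fin_fun] at hr
  omega

lemma same_face_scale (hA : NPinf f = convexHull ℝ (A : Set (Fin n → ℝ)))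
    (h0 : (0 : Fin n → ℝ) ∈ A)
    (hdim : setDim (NPinf f) = n) (u0 u w : Fin n → ℝ)
    (hu : Extr (consT A (suppFace f u0)) u) (hw0 : w ≠ 0) (hw : suppFace f w = suppFace f u) :
    ∃ c : ℝ, 0 < c ∧ w = c • u := by
  have hsub := (inC_iff hA u0 u).1 hu.1
  refine extr_unique _ (pointed hA h0 hdim u0) u w hu ((inC_iff hA u0 w).2 (hw ▸ hsub)) hw0 ?_
  intro t ht htu
  obtain ⟨a, ha, haf, b, hb, rfl⟩ := mem_consT.1 ht
  have haf' := hsub haf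
  have hbf : b ∈ suppFace f u := by
    refine ⟨pts_sub hA hb, fun x hx => ?_⟩
    rw [dotR_sub_l, dotR_comm' b, dotR_comm' a] at htu
    have := haf'.2 x hx
    linarith
  rw [← hw] at haf' hbf
  have e1 := haf'.2 b hbf.1
  have e2 := hbf.2 a haf'.1
  rw [dotR_sub_l, dotR_comm' b, dotR_comm' a]
  linarith

end geom

/-- A face at infinity `γ` of `Γ_∞(f)` is admissible iff
`σ(γ) = (Σ_{i ∉ S} ℝ_{≥0} e_i) + (Σ_{j=1}^k ℝ_{≥0} f_j)` for finitely many integral vectors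
`f_1, …, f_k ∉ ℝ_{≥0}ⁿ` on which the minimum of `⟨·,·⟩` over `Γ_∞(f)` is negative. -/
theorem admissible_iff_sigmaCone_generated {n : ℕ} (f : MvPolynomial (Fin n) ℂ)
    (hdim : setDim (NPinf f) = n) (γ : Set (Fin n → ℝ))
    (hγ : IsFaceOf f γ) (h0 : (0 : Fin n → ℝ) ∉ γ)
    (S : Finset (Fin n)) (hS : γ ⊆ coordSub S)
    (hmin : ∀ S' : Finset (Fin n), γ ⊆ coordSub S' → S ⊆ S') :
    IsAdmissibleFace f γ ↔
      ∃ k : ℕ, 1 ≤ k ∧ ∃ fv : Fin k → (Fin n → ℤ),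
        (∀ j, ¬ (∀ i, 0 ≤ fv j i)) ∧
        (∀ j, ∃ v ∈ NPinf f, dotR (fun i => (fv j i : ℝ)) v < 0) ∧
        sigmaCone f γ = {x : Fin n → ℝ | ∃ (c : Fin n → ℝ) (d : Fin k → ℝ),
          (∀ i, 0 ≤ c i) ∧ (∀ i ∈ S, c i = 0) ∧ (∀ j, 0 ≤ d j) ∧
          x = (∑ i, c i • (Pi.single i (1 : ℝ) : Fin n → ℝ)) + ∑ j, d j • (fun i => (fv j i : ℝ) : Fin n → ℝ)} := by
  obtain ⟨A, hA, hint, hpos, hA0⟩ := exists_pts f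
  obtain ⟨u0, rfl⟩ := hγ
  obtain ⟨g, hgA, hg⟩ := exists_vertex hA hA0 u0
  rw [sigma_eq u0 ⟨g, hg⟩]
  have hNP0 : (0 : Fin n → ℝ) ∈ NPinf f := pts_sub hA hA0
  have hNPpos : ∀ x ∈ NPinf f, ∀ i, 0 ≤ x i := by
    intro x hx i
    rw [hA] at hx
    have := hull_lower A (Pi.single i 1) 0 (fun a ha => by
      simpa [dotR, Pi.single_apply] using hpos a ha i) x hx
    simpa [dotR, Pi.single_apply] using this
  have hm : ∀ u, suppFace f u0 ⊆ suppFace f u → dotR u g ≤ 0 := fun u hu => by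
    have := (hu hg).2 0 hNP0
    rwa [dotR_zero_r] at this
  constructor
  · rintro ⟨-, -, hadm⟩
    set T := consT A (suppFace f u0) with hT
    have hp := pointed hA hA0 hdim u0
    have hTint : ∀ t ∈ T, ∃ b, t = cz b := by
      intro t ht
      obtain ⟨a, ha, -, b, hb, rfl⟩ := mem_consT.1 ht
      obtain ⟨z, rfl⟩ := hint a ha
      obtain ⟨y, rfl⟩ := hint b hb
      exact ⟨y - z, by ext i; simp [cz]⟩
    -- index type
    let Q : Finset (Fin n → ℝ) → (Fin n → ℤ) → Prop := fun B z =>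
      Extr T (cz z) ∧ dotR (cz z) g < 0 ∧ T.filter (fun t => dotR t (cz z) = 0) = B
    let I := {B : T.powerset // ∃ z, Q B z}
    let e : I ≃ Fin (Fintype.card I) := Fintype.equivFin I
    let fv : Fin (Fintype.card I) → (Fin n → ℤ) := fun j => (e.symm j).2.choose
    have hfv : ∀ j, Q (e.symm j).1 (fv j) := fun j => (e.symm j).2.choose_spec
    have hsurj : ∀ u, Extr T u → dotR u g < 0 → ∃ j, ∃ c : ℝ, 0 < c ∧ u = c • cz (fv j) := by
      intro u hu hneg
      obtain ⟨z, c, hc, hz⟩ := extr_int T hTint u hu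
      have hzE : Extr T (cz z) := hz ▸ extr_smul T u hu c hc
      have hzm : dotR (cz z) g < 0 := by
        rw [hz, dotR_smul_l]; exact mul_neg_of_pos_of_neg hc hneg
      let b : I := ⟨⟨T.filter (fun t => dotR t (cz z) = 0), by simp⟩, z, hzE, hzm, rfl⟩
      refine ⟨e b, ?_⟩
      have h1 := hfv (e b)
      have h2 : ((e.symm (e b)).1 : Finset (Fin n → ℝ)) = T.filter (fun t => dotR t (cz z) = 0) := by
        rw [Equiv.symm_apply_apply]
      have h3 := h1.2.2.trans h2
      refine extr_unique T hp _ u h1.1 hu.1 hu.2.1 fun t ht h => ?_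
      have h4 : t ∈ T.filter (fun t => dotR t (cz z) = 0) := by
        rw [← h3]; simp [ht, h]
      have h5 := (Finset.mem_filter.1 h4).2
      rw [hz, dotR_smul_r] at h5
      exact (mul_eq_zero.1 h5).resolve_left hc.ne'
    have hflat : ∀ u, Extr T u → dotR u g = 0 → (∀ i, 0 ≤ u i) ∧ ∀ i ∈ S, u i = 0 := by
      intro u hu hz
      have hsub := (inC_iff hA u0 u).1 hu.1
      have hmem0 : (0 : Fin n → ℝ) ∈ suppFace f u := by
        refine ⟨hNP0, fun w hw => ?_⟩
        rw [dotR_zero_r, ← hz]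
        exact (hsub hg).2 w hw
      have hupos : ∀ i, 0 ≤ u i := by
        by_contra hcon
        refine hadm (suppFace f u) ⟨⟨u, rfl⟩, hmem0, suppFace f u, ⟨u, rfl⟩,
          facet_dim hA u0 u hu, subset_rfl, fun w hw0 hw hwp => hcon ?_⟩ hsub
        obtain ⟨c, hc, rfl⟩ := same_face_scale hA hA0 hdim u0 u w hu hw0 hw
        intro i
        have := hwp i
        simp only [Pi.smul_apply, smul_eq_mul] at this
        exact nonneg_of_mul_nonneg_right this hc
      refine ⟨hupos, fun i hi => ?_⟩
      by_contra hne
      have := hmin (S.erase i) (fun v hv j hj => by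
        by_cases hjS : j ∈ S
        · have hji : j = i := by
            by_contra hne'
            exact hj (Finset.mem_erase.2 ⟨hne', hjS⟩)
          subst hji
          have h1 : dotR u v = 0 := by
            have e1 := (hsub hv).2 0 hNP0
            have e2 := hmem0.2 v hv.1
            rw [dotR_zero_r] at e1 e2
            linarith
          have h2 := (Finset.sum_eq_zero_iff_of_nonneg (fun k _ =>
            mul_nonneg (hupos k) (hNPpos v hv.1 k))).1 h1 j (Finset.mem_univ _)
          exact (mul_eq_zero.1 h2).resolve_left hne
        · exact hS hv j hjS)
      exact absurd (this hi) (by simp)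
    have hset : {u | suppFace f u0 ⊆ suppFace f u} = {x : Fin n → ℝ | ∃ (c : Fin n → ℝ)
          (d : Fin (Fintype.card I) → ℝ),
          (∀ i, 0 ≤ c i) ∧ (∀ i ∈ S, c i = 0) ∧ (∀ j, 0 ≤ d j) ∧
          x = (∑ i, c i • (Pi.single i (1 : ℝ) : Fin n → ℝ)) +
            ∑ j, d j • (fun i => (fv j i : ℝ) : Fin n → ℝ)} := by
      apply Set.Subset.antisymm
      · intro u hu
        have hu : suppFace f u0 ⊆ suppFace f u := hu
        have hcl := cone_decomp T hp _ u le_rfl ((inC_iff hA u0 u).2 hu)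
        induction hcl using AddSubmonoid.closure_induction with
        | mem x hx =>
          have hx : Extr T x := hx
          rcases (hm x ((inC_iff hA u0 x).1 hx.1)).lt_or_eq with h | h
          · obtain ⟨j, c, hc, rfl⟩ := hsurj x hx h
            refine ⟨0, Pi.single j c, by simp, by simp, fun k => ?_, ?_⟩
            · by_cases hk : k = j
              · subst hk; simp [hc.le]
              · simp [hk]
            · rw [Finset.sum_eq_single j (fun k _ hk => by simp [hk]) (by simp)]
              simp; rfl
          · obtain ⟨h1, h2⟩ := hflat x hx h
            refine ⟨x, 0, h1, h2, by simp, ?_⟩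
            ext i
            simp [Pi.single_apply]
        | zero => exact ⟨0, 0, by simp, by simp, by simp, by simp⟩
        | add x y hx hy ihx ihy =>
          have hcone : ∀ x ∈ AddSubmonoid.closure {u | Extr T u},
              suppFace f u0 ⊆ suppFace f x := by
            intro x hx
            rw [← inC_iff hA]
            induction hx using AddSubmonoid.closure_induction with
            | mem x hx => exact (show Extr T x from hx).1
            | zero => intro t _; rw [dotR_zero_r]
            | add x y _ _ h1 h2 =>
              intro t ht; rw [dotR_add_r]; exact add_nonneg (h1 t ht) (h2 t ht)
          obtain ⟨c, d, h1, h2, h3, h4⟩ := ihx (hcone x hx) (hcone x hx)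
          obtain ⟨c', d', h1', h2', h3', h4'⟩ := ihy (hcone y hy) (hcone y hy)
          refine ⟨c + c', d + d', fun i => add_nonneg (h1 i) (h1' i),
            fun i hi => by simp [h2 i hi, h2' i hi], fun i => add_nonneg (h3 i) (h3' i), ?_⟩
          conv_lhs => rw [h4, h4']
          simp only [Pi.add_apply, add_smul, Finset.sum_add_distrib]
          abel
      · rintro x ⟨c, d, hc, hcS, hd, rfl⟩
        show suppFace f u0 ⊆ suppFace f _
        rw [← inC_iff hA]
        intro t ht
        rw [dotR_add_r, dotR_sum_r, dotR_sum_r]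
        refine add_nonneg (Finset.sum_nonneg fun i _ => ?_)
          (Finset.sum_nonneg fun j _ => mul_nonneg (hd j) ((hfv j).1.1 t ht))
        by_cases hi : i ∈ S
        · simp [hcS i hi]
        · obtain ⟨a, ha, haf, b, hb, rfl⟩ := mem_consT.1 ht
          have h1 := hS haf i hi
          have h2 := hpos b hb i
          refine mul_nonneg (hc i) ?_
          simp [dotR, Pi.single_apply, h1, h2]
    refine ⟨Fintype.card I, ?_, fv, ?_, ?_, hset⟩
    · by_contra hk
      have hk0 : Fintype.card I = 0 := by omega
      have hu0 : u0 ∈ {u | suppFace f u0 ⊆ suppFace f u} :=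
        (subset_rfl : suppFace f u0 ⊆ suppFace f u0)
      rw [hset] at hu0
      obtain ⟨c, d, hc, hcS, hd, hx⟩ := hu0
      have : IsEmpty (Fin (Fintype.card I)) := by rw [hk0]; infer_instance
      rw [Finset.univ_eq_empty (α := Fin (Fintype.card I)), Finset.sum_empty, add_zero] at hx
      have hx' : u0 = c := by
        rw [hx]; ext i; simp [Pi.single_apply]
      apply h0
      refine ⟨hNP0, fun w hw => ?_⟩
      rw [dotR_zero_r, hx']
      exact Finset.sum_nonneg fun i _ => mul_nonneg (hc i) (hNPpos w hw i)
    · intro j hj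
      have h1 := (hfv j).2.1
      have : 0 ≤ dotR (cz (fv j)) g := Finset.sum_nonneg fun i _ =>
        mul_nonneg (by simp only [cz]; exact_mod_cast hj i) (hpos g hgA i)
      linarith
    · intro j
      exact ⟨g, hg.1, (hfv j).2.1⟩
  · rintro ⟨k, hk, fv, hfv1, hfv2, hset⟩
    refine ⟨⟨u0, rfl⟩, h0, ?_⟩
    rintro γ' ⟨-, h0', Γf, ⟨w, rfl⟩, hfd, hγΓ, hout⟩ hsub
    have hn : n ≠ 0 := by
      rintro rfl
      exact h0 (by rwa [Subsingleton.elim (0 : Fin 0 → ℝ) g])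
    have hw0 : w ≠ 0 := by
      rintro rfl
      have : suppFace f 0 = NPinf f := by
        ext x
        exact ⟨fun h => h.1, fun h => ⟨h, fun y _ => by simp [dotR]⟩⟩
      rw [this, hdim] at hfd
      omega
    apply hout w hw0 rfl
    have hwC : w ∈ {u | suppFace f u0 ⊆ suppFace f u} := hsub.trans hγΓ
    have hwz : dotR w g = 0 := by
      have e1 := hm w hwC
      have e2 := (hγΓ h0').2 g hg.1
      rw [dotR_zero_r] at e2
      linarith
    have hfC : ∀ j, suppFace f u0 ⊆ suppFace f (fun i => (fv j i : ℝ)) := by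
      intro j
      have : (fun i => (fv j i : ℝ)) ∈ {u | suppFace f u0 ⊆ suppFace f u} := by
        rw [hset]
        refine ⟨0, Pi.single j 1, by simp, by simp, fun i => ?_, ?_⟩
        · by_cases hk : i = j
          · subst hk; simp
          · simp [hk]
        · rw [Finset.sum_eq_single j (fun k _ hk => by simp [hk]) (by simp)]
          simp
      exact this
    have hfneg : ∀ j, dotR (fun i => (fv j i : ℝ)) g < 0 := fun j => by
      obtain ⟨v, hv, hlt⟩ := hfv2 j
      exact lt_of_le_of_lt ((hfC j hg).2 v hv) hlt
    rw [hset] at hwC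
    obtain ⟨c, d, hc, hcS, hd, hx⟩ := hwC
    have hc0 : ∀ i, c i * g i = 0 := fun i => by
      by_cases hi : i ∈ S
      · rw [hcS i hi, zero_mul]
      · rw [hS hg i hi, mul_zero]
    have hd0 : ∑ j, d j * dotR g (fun i => (fv j i : ℝ)) = 0 := by
      have h1 := hwz
      rw [hx, dotR_comm', dotR_add_r, dotR_sum_r, dotR_sum_r] at h1
      rw [Finset.sum_eq_zero (fun i _ => by
        have : dotR g (Pi.single i 1) = g i := by simp [dotR, Pi.single_apply]
        rw [this, hc0 i]), zero_add] at h1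
      exact h1
    have hdz : ∀ j, d j = 0 := fun j => by
      have h1 := (Finset.sum_eq_zero_iff_of_nonpos (fun j _ =>
        mul_nonpos_of_nonneg_of_nonpos (hd j) (by rw [dotR_comm']; exact (hfneg j).le))).1 hd0
          j (Finset.mem_univ _)
      refine (mul_eq_zero.1 h1).resolve_right ?_
      rw [dotR_comm']; exact (hfneg j).ne
    have hx' : w = c := by
      rw [hx]; ext i; simp [Pi.single_apply, hdz]
    rw [hx']; exact hc
end
end

section
/- Let f ∈ ℂ[x,y] be a polynomial in two variables which is non-degenerate at infinity and satisfies dim Γ_∞(f) = 2. Then for all but finitely many c ∈ ℂ the fiber f^{-1}(c) = {(x,y) ∈ ℂ² : f(x,y) = c} is a connected subset of ℂ². -/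
open scoped Classical

noncomputable section

open MvPolynomial in
/-- weight of an exponent -/
def wt (u : Fin 2 → ℝ) (m : Fin 2 →₀ ℕ) : ℝ := u 0 * (m 0 : ℝ) + u 1 * (m 1 : ℝ)

lemma wt_add (u : Fin 2 → ℝ) (m n : Fin 2 →₀ ℕ) : wt u (m + n) = wt u m + wt u n := by
  simp [wt]; ring

/-- weight set predicate -/
def SuppP (S : ℝ → Prop) (u : Fin 2 → ℝ) (p : MvPolynomial (Fin 2) ℂ) : Prop :=
  ∀ m, MvPolynomial.coeff m p ≠ 0 → S (wt u m)

lemma SuppP.add {S u p q} (hp : SuppP S u p) (hq : SuppP S u q) : SuppP S u (p + q) := by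
  intro m hm
  by_cases h : MvPolynomial.coeff m p = 0
  · apply hq; intro h'; apply hm; simp [h, h']
  · exact hp m h

lemma SuppP.neg {S u p} (hp : SuppP S u p) : SuppP S u (-p) := by
  intro m hm
  apply hp; simpa using hm

lemma SuppP.sub {S u p q} (hp : SuppP S u p) (hq : SuppP S u q) : SuppP S u (p - q) := by
  rw [sub_eq_add_neg]; exact hp.add hq.neg

lemma SuppP.mul {S T R : ℝ → Prop} {u p q} (hp : SuppP S u p) (hq : SuppP T u q)
    (h : ∀ a b, S a → T b → R (a + b)) : SuppP R u (p * q) := by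
  intro m hm
  rw [MvPolynomial.coeff_mul] at hm
  obtain ⟨x, hx, hx0⟩ := Finset.exists_ne_zero_of_sum_ne_zero hm
  rw [Finset.HasAntidiagonal.mem_antidiagonal] at hx
  rw [← hx, wt_add]
  exact h _ _ (hp _ (left_ne_zero_of_mul hx0)) (hq _ (right_ne_zero_of_mul hx0))

lemma SuppP.mono {S T : ℝ → Prop} {u p} (hp : SuppP S u p) (h : ∀ a, S a → T a) : SuppP T u p :=
  fun m hm => h _ (hp m hm)

lemma SuppP.C_mul {S u p} (a : ℂ) (hp : SuppP S u p) : SuppP S u (MvPolynomial.C a * p) := by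
  intro m hm
  rw [MvPolynomial.coeff_C_mul] at hm
  exact hp m (right_ne_zero_of_mul hm)

lemma SuppP.one (u) : SuppP (· = 0) u (1 : MvPolynomial (Fin 2) ℂ) := by
  intro m hm
  rw [MvPolynomial.coeff_one] at hm
  split_ifs at hm with h
  · simp [← h, wt]
  · simp at hm

lemma SuppP.pow {u p d} (hp : SuppP (· = d) u p) (k : ℕ) : SuppP (· = k * d) u (p ^ k) := by
  induction k with
  | zero => simpa using SuppP.one u
  | succ k ih =>
    rw [pow_succ]
    refine ih.mul hp ?_
    rintro a b rfl rfl
    push_cast; ring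

/-- log derivation -/
def th (i : Fin 2) (p : MvPolynomial (Fin 2) ℂ) : MvPolynomial (Fin 2) ℂ :=
  MvPolynomial.X i * MvPolynomial.pderiv i p

lemma coeff_th (i : Fin 2) (p : MvPolynomial (Fin 2) ℂ) (m) :
    MvPolynomial.coeff m (th i p) = (m i : ℂ) * MvPolynomial.coeff m p := by
  rw [th, MvPolynomial.coeff_X_mul']
  split_ifs with h
  · rw [MvPolynomial.coeff_pderiv]
    have h1 : 1 ≤ m i := Nat.one_le_iff_ne_zero.mpr (Finsupp.mem_support_iff.mp h)
    have : m - Finsupp.single i 1 + Finsupp.single i 1 = m :=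
      tsub_add_cancel_of_le (by simpa [Finsupp.single_le_iff] using h1)
    rw [this, mul_comm]
    congr 1
    simp only [Finsupp.coe_tsub, Pi.sub_apply, Finsupp.single_eq_same]
    push_cast [h1]; ring
  · rw [Finsupp.notMem_support_iff] at h; simp [h]

lemma SuppP.th {S u p} (i) (hp : SuppP S u p) : SuppP S u (th i p) := by
  intro m hm; rw [coeff_th] at hm; exact hp m (right_ne_zero_of_mul hm)

lemma th_add (i p q) : th i (p + q) = th i p + th i q := by simp [th, mul_add]
lemma th_sub (i p q) : th i (p - q) = th i p - th i q := by simp [th, mul_sub]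
lemma th_C_mul (i a p) : th i (MvPolynomial.C a * p) = MvPolynomial.C a * th i p := by
  simp [th]; ring
lemma th_pow (i p) (k : ℕ) : th i (p ^ k) = (k : MvPolynomial (Fin 2) ℂ) * p ^ (k - 1) * th i p := by
  simp [th, MvPolynomial.pderiv_pow]; ring

/-- log Jacobian -/
def brk (p q : MvPolynomial (Fin 2) ℂ) : MvPolynomial (Fin 2) ℂ :=
  th 0 p * th 1 q - th 1 p * th 0 q

lemma brk_add_left (p q r) : brk (p + q) r = brk p r + brk q r := by
  simp [brk, th_add]; ring
lemma brk_add_right (p q r) : brk r (p + q) = brk r p + brk r q := by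
  simp [brk, th_add]; ring
lemma brk_sub_left (p q r) : brk (p - q) r = brk p r - brk q r := by
  simp [brk, th_sub]; ring
lemma brk_C_mul_left (a p r) : brk (MvPolynomial.C a * p) r = MvPolynomial.C a * brk p r := by
  simp [brk, th_C_mul]; ring
lemma brk_pow_self (p) (k : ℕ) : brk (p ^ k) p = 0 := by
  simp [brk, th_pow]; ring

lemma SuppP.brk {S T R : ℝ → Prop} {u p q} (hp : SuppP S u p) (hq : SuppP T u q)
    (h : ∀ a b, S a → T b → R (a + b)) : SuppP R u (brk p q) :=
  SuppP.sub ((hp.th 0).mul (hq.th 1) h) ((hp.th 1).mul (hq.th 0) h)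

lemma euler {u p d} (hp : SuppP (· = d) u p) :
    MvPolynomial.C (u 0 : ℂ) * th 0 p + MvPolynomial.C (u 1 : ℂ) * th 1 p
      = MvPolynomial.C (d : ℂ) * p := by
  ext m
  simp only [MvPolynomial.coeff_add, MvPolynomial.coeff_C_mul, coeff_th]
  by_cases h : MvPolynomial.coeff m p = 0
  · simp [h]
  · have := hp m h
    simp only at this
    rw [← this, wt]; push_cast; ring

lemma eq_zero_of_SuppP {S T : ℝ → Prop} {u p} (hp : SuppP S u p) (hq : SuppP T u p)
    (h : ∀ a, S a → T a → False) : p = 0 := by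
  ext m; by_contra h0
  exact h _ (hp m h0) (hq m h0)

/-- top components -/
lemma brk_top {u a a' b b' da db} (ha : SuppP (· = da) u a) (ha' : SuppP (· < da) u a')
    (hb : SuppP (· = db) u b) (hb' : SuppP (· < db) u b') (h : brk (a + a') (b + b') = 0) :
    brk a b = 0 := by
  rw [brk_add_left, brk_add_right, brk_add_right] at h
  have h1 : brk a b = -(brk a b' + (brk a' b + brk a' b')) := by linear_combination h
  have h2 : SuppP (· < da + db) u (brk a b) := by
    rw [h1]
    refine SuppP.neg (SuppP.add (ha.brk hb' ?_) (SuppP.add (ha'.brk hb ?_) (ha'.brk hb' ?_))) <;>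
    · intro x y; intros; linarith
  refine eq_zero_of_SuppP (S := (· = da + db)) (ha.brk hb ?_) h2 ?_
  · rintro x y rfl rfl; rfl
  · rintro x rfl h; exact lt_irrefl _ h

/-- restriction to a coordinate line -/
def lin (i : Fin 2) (z : Fin 2 → ℂ) : MvPolynomial (Fin 2) ℂ →ₐ[ℂ] Polynomial ℂ :=
  MvPolynomial.aeval (fun j => if j = i then Polynomial.X else Polynomial.C (z j))

lemma lin_eval (i z p x) : (lin i z p).eval x = MvPolynomial.eval (Function.update z i x) p := by
  induction p using MvPolynomial.induction_on with
  | C a => simp [lin]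
  | add p q hp hq => simp [hp, hq]
  | mul_X p j hp =>
    simp only [map_mul, Polynomial.eval_mul, hp, MvPolynomial.eval_X]
    congr 1
    by_cases h : j = i
    · subst h; simp [lin]
    · simp [lin, h]

lemma lin_deriv (i z p) : Polynomial.derivative (lin i z p) = lin i z (MvPolynomial.pderiv i p) := by
  induction p using MvPolynomial.induction_on with
  | C a => simp [lin]
  | add p q hp hq => simp [hp, hq]
  | mul_X p j hp =>
    simp only [map_mul, Polynomial.derivative_mul, hp, Derivation.leibniz, map_add, smul_eq_mul]
    by_cases h : j = i
    · subst h; simp [lin]; ring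
    · simp [lin, h, MvPolynomial.pderiv_X_of_ne (Ne.symm h)]; ring

lemma lin_th (i z p) : lin i z (th i p) = Polynomial.X * Polynomial.derivative (lin i z p) := by
  rw [lin_deriv, th, map_mul]; simp [lin]

lemma lin_monomial (i j : Fin 2) (hij : j ≠ i) (z m a) :
    lin i z (MvPolynomial.monomial m a) = Polynomial.monomial (m i) (a * z j ^ m j) := by
  rw [lin, MvPolynomial.aeval_monomial, Finsupp.prod_fintype _ _ (by simp)]
  have : (∏ k : Fin 2, (if k = i then Polynomial.X else Polynomial.C (z k)) ^ m k)
      = (Polynomial.X ^ m i * Polynomial.C (z j) ^ m j : Polynomial ℂ) := by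
    fin_cases i <;> fin_cases j <;> simp_all [Fin.prod_univ_two, mul_comm]
  rw [this, ← Polynomial.C_mul_X_pow_eq_monomial]
  simp; ring

lemma coeff_lin (i j : Fin 2) (hij : j ≠ i) {u z} (hu : u j ≠ 0) {p d}
    (hp : SuppP (· = d) u p) (m) (hm : wt u m = d) :
    (lin i z p).coeff (m i) = MvPolynomial.coeff m p * z j ^ m j := by
  have key : ∀ n : Fin 2 →₀ ℕ, wt u n = d → n i = m i → n = m := by
    intro n hn hni
    have : u j * (n j : ℝ) = u j * m j := by
      rw [← hm, wt, wt] at hn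
      fin_cases i <;> fin_cases j <;> simp_all
    have h2 := mul_left_cancel₀ hu this
    have h3 : n j = m j := by exact_mod_cast h2
    ext k
    fin_cases i <;> fin_cases j <;> fin_cases k <;> simp_all
  conv_lhs => rw [MvPolynomial.as_sum p]
  rw [map_sum, Polynomial.finsetSum_coeff]
  simp only [lin_monomial i j hij, Polynomial.coeff_monomial]
  rw [Finset.sum_eq_single m]
  · simp
  · intro n hn hne
    rw [if_neg]
    intro h
    exact hne (key n (hp n (by simpa using hn)) h)
  · intro h; simp at h; simp [h]

lemma lin_inj (i j : Fin 2) (hij : j ≠ i) {u z} (hu : u j ≠ 0) (hz : z j ≠ 0) {p d}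
    (hp : SuppP (· = d) u p) (h : lin i z p = 0) : p = 0 := by
  ext m; by_contra h0
  have := coeff_lin i j hij (z := z) hu hp m (hp m h0)
  rw [h] at this
  simp at this
  rcases this with h1 | h1
  · exact h0 (by simpa using h1)
  · exact hz h1.1

open Polynomial in
lemma ode_mult {A B : ℂ[X]} {z : ℂ} {da db : ℝ} (hA : A ≠ 0) (hB : B.eval z = 0)
    (hB' : (derivative B).eval z ≠ 0)
    (h : C (da : ℂ) * A * derivative B = C (db : ℂ) * B * derivative A) :
    da = A.rootMultiplicity z * db := by
  obtain ⟨A1, hA1, hA1'⟩ := Polynomial.exists_eq_pow_rootMultiplicity_mul_and_not_dvd A hA z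
  set k := A.rootMultiplicity z
  rw [Polynomial.dvd_iff_isRoot, Polynomial.IsRoot] at hA1'
  obtain ⟨B1, rfl⟩ := Polynomial.dvd_iff_isRoot.mpr hB
  have e1 : derivative A = (X - C z) ^ (k - 1) * C (k : ℂ) * A1 + (X - C z) ^ k * derivative A1 := by
    have e0 := congrArg derivative hA1
    rw [derivative_mul, derivative_pow] at e0
    rw [e0]
    simp only [derivative_sub, derivative_X, derivative_C, sub_zero, mul_one]
    ring
  have e2 : (X - C z) * derivative A
      = (X - C z) ^ k * (C (k : ℂ) * A1 + (X - C z) * derivative A1) := by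
    rw [e1]
    rcases Nat.eq_zero_or_pos k with h0 | h0
    · simp [h0]
    · obtain ⟨l, hl⟩ : ∃ l, k = l + 1 := ⟨k - 1, by omega⟩
      rw [hl]; simp; ring
  have e3 : (X - C z) ^ k * (C (da : ℂ) * A1 * derivative ((X - C z) * B1))
      = (X - C z) ^ k * (C (db : ℂ) * B1 * (C (k : ℂ) * A1 + (X - C z) * derivative A1)) := by
    linear_combination h + C (db : ℂ) * B1 * e2
      + (-C (da : ℂ) * derivative ((X - C z) * B1)) * hA1
  have e4 := mul_left_cancel₀ (pow_ne_zero _ (X_sub_C_ne_zero z)) e3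
  have e5 := congrArg (Polynomial.eval z) e4
  simp at e5 hB'
  have : (da : ℂ) = k * db := by
    apply mul_right_cancel₀ hA1'
    apply mul_right_cancel₀ hB'
    linear_combination e5
  exact_mod_cast this

lemma ode_of_brk {u a b da db} (ha : SuppP (· = da) u a) (hb : SuppP (· = db) u b)
    (h : brk a b = 0) (i : Fin 2) :
    MvPolynomial.C (da : ℂ) * a * th i b = MvPolynomial.C (db : ℂ) * b * th i a := by
  have ea := euler ha
  have eb := euler hb
  rw [brk] at h
  fin_cases i
  · show _ * th 0 b = _ * th 0 a
    linear_combination (-th 0 b) * ea + th 0 a * eb - MvPolynomial.C (u 1 : ℂ) * h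
  · show _ * th 1 b = _ * th 1 a
    linear_combination (-th 1 b) * ea + th 1 a * eb + MvPolynomial.C (u 0 : ℂ) * h

open Polynomial in
lemma top_form {u a b da db} (hdb : 0 < db) (ha : SuppP (· = da) u a) (hb : SuppP (· = db) u b)
    (h : brk a b = 0) {z : Fin 2 → ℂ} (hz : ∀ i, z i ≠ 0) (hbz : MvPolynomial.eval z b = 0)
    (hnd : ∃ i, MvPolynomial.eval z (MvPolynomial.pderiv i b) ≠ 0) (ha0 : a ≠ 0) :
    ∃ k : ℕ, ∃ c : ℂ, da = k * db ∧ a = MvPolynomial.C c * b ^ k := by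
  obtain ⟨i, hi⟩ := hnd
  obtain ⟨j, hj⟩ : ∃ j : Fin 2, j ≠ i := ⟨1 - i, by fin_cases i <;> simp⟩
  have eb := congrArg (MvPolynomial.eval z) (euler hb)
  simp [th, hbz] at eb
  have hu : u j ≠ 0 := by
    intro h0
    have hz0 := hz 0
    have hz1 := hz 1
    have hui : u i = 0 := by
      fin_cases i <;> fin_cases j <;> simp_all
    have hb0 : b ≠ 0 := by rintro rfl; simp at hi
    obtain ⟨m, hm⟩ := MvPolynomial.ne_zero_iff.mp hb0
    have := hb m hm
    simp only [wt] at this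
    fin_cases i <;> fin_cases j <;> simp_all
  have upd : Function.update z i (z i) = z := Function.update_eq_self i z
  have hB : (lin i z b).eval (z i) = 0 := by rw [lin_eval, upd, hbz]
  have hB' : (derivative (lin i z b)).eval (z i) ≠ 0 := by rw [lin_deriv, lin_eval, upd]; exact hi
  have ode : ∀ a : MvPolynomial (Fin 2) ℂ, SuppP (· = da) u a → brk a b = 0 →
      C (da : ℂ) * lin i z a * derivative (lin i z b)
        = C (db : ℂ) * lin i z b * derivative (lin i z a) := by
    intro a ha h
    have e := congrArg (lin i z) (ode_of_brk ha hb h i)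
    simp only [map_mul, lin_th] at e
    have hc : ∀ c : ℂ, lin i z (MvPolynomial.C c) = C c := by intro c; simp [lin]
    rw [hc, hc] at e
    apply mul_left_cancel₀ (Polynomial.X_ne_zero (R := ℂ))
    linear_combination e
  have hA0 : lin i z a ≠ 0 := fun h0 => ha0 (lin_inj i j hj hu (hz j) ha h0)
  have hk := ode_mult hA0 hB hB' (ode a ha h)
  set k := (lin i z a).rootMultiplicity (z i) with hkdef
  obtain ⟨A1, hA1, hA1'⟩ := Polynomial.exists_eq_pow_rootMultiplicity_mul_and_not_dvd _ hA0 (z i)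
  rw [← hkdef] at hA1
  obtain ⟨B1, hB1⟩ := Polynomial.dvd_iff_isRoot.mpr hB
  have hB1' : B1.eval (z i) ≠ 0 := by
    rw [hB1] at hB'; simpa using hB'
  set c := A1.eval (z i) / (B1.eval (z i)) ^ k with hc
  refine ⟨k, c, hk, ?_⟩
  by_contra hne
  have hne' : a - MvPolynomial.C c * b ^ k ≠ 0 := sub_ne_zero.mpr hne
  have hs : SuppP (· = da) u (a - MvPolynomial.C c * b ^ k) := by
    apply ha.sub (SuppP.C_mul c _)
    rw [hk]; exact hb.pow k
  have hbr : brk (a - MvPolynomial.C c * b ^ k) b = 0 := by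
    rw [brk_sub_left, brk_C_mul_left, brk_pow_self, h]; simp
  have hD0 : lin i z (a - MvPolynomial.C c * b ^ k) ≠ 0 :=
    fun h0 => hne' (lin_inj i j hj hu (hz j) hs h0)
  have hk2 := ode_mult hD0 hB hB' (ode _ hs hbr)
  have hkk : rootMultiplicity (z i) (lin i z (a - MvPolynomial.C c * b ^ k)) = k := by
    have : ((rootMultiplicity (z i) (lin i z (a - MvPolynomial.C c * b ^ k)) : ℕ) : ℝ) * db = k * db := by
      rw [← hk2, hk]
    exact_mod_cast mul_right_cancel₀ hdb.ne' this
  have hfac : lin i z (a - MvPolynomial.C c * b ^ k)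
      = (X - C (z i)) ^ k * (A1 - C c * B1 ^ k) := by
    have hc : lin i z (MvPolynomial.C c) = C c := by simp [lin]
    rw [map_sub, map_mul, map_pow, hc, hB1, mul_pow]
    linear_combination hA1
  have hdvd : (X - C (z i)) ∣ (A1 - C c * B1 ^ k) := by
    rw [Polynomial.dvd_iff_isRoot, Polynomial.IsRoot]
    simp [hc]
    field_simp
    simp
  have hdvd2 : (X - C (z i)) ^ (k + 1) ∣ lin i z (a - MvPolynomial.C c * b ^ k) := by
    rw [hfac, pow_succ]; exact mul_dvd_mul_left _ hdvd
  have := (Polynomial.le_rootMultiplicity_iff hD0).mpr hdvd2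
  omega

/-- the part of weight `d` -/
def topPart (u : Fin 2 → ℝ) (d : ℝ) (p : MvPolynomial (Fin 2) ℂ) : MvPolynomial (Fin 2) ℂ :=
  ∑ v ∈ p.support, if wt u v = d then MvPolynomial.monomial v (MvPolynomial.coeff v p) else 0

lemma coeff_topPart (u d p m) : MvPolynomial.coeff m (topPart u d p)
    = if wt u m = d then MvPolynomial.coeff m p else 0 := by
  rw [topPart, MvPolynomial.coeff_sum]
  rw [Finset.sum_eq_single m]
  · split_ifs <;> simp
  · intro n _ hn
    split_ifs
    · rw [MvPolynomial.coeff_monomial, if_neg hn]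
    · simp
  · intro h
    rw [MvPolynomial.notMem_support_iff] at h
    split_ifs <;> simp [h]

lemma topPart_supp (u d p) : SuppP (· = d) u (topPart u d p) := by
  intro m hm
  rw [coeff_topPart] at hm
  by_contra h
  simp [h] at hm

lemma topPart_rest {u d p} (h : SuppP (· ≤ d) u p) : SuppP (· < d) u (p - topPart u d p) := by
  intro m hm
  rw [MvPolynomial.coeff_sub, coeff_topPart] at hm
  split_ifs at hm with h1
  · simp at hm
  · exact lt_of_le_of_ne (h m (by simpa using hm)) h1

lemma pow_rest {u f b d} (hb : SuppP (· = d) u b) (hf : SuppP (· < d) u (f - b)) (k : ℕ) :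
    SuppP (· < k * d) u (f ^ k - b ^ k) := by
  induction k with
  | zero => intro m hm; simp at hm
  | succ k ih =>
    have e : f ^ (k + 1) - b ^ (k + 1)
        = (f ^ k - b ^ k) * (f - b) + ((f ^ k - b ^ k) * b + b ^ k * (f - b)) := by ring
    rw [e]
    refine SuppP.add (ih.mul hf ?_) (SuppP.add (ih.mul hb ?_) ((hb.pow k).mul hf ?_)) <;>
    · intro x y hx hy; push_cast; linarith

theorem centralizer {u f d} (hd : 0 < d) (hf : SuppP (· ≤ d) u f) {z : Fin 2 → ℂ}
    (hz : ∀ i, z i ≠ 0) (hbz : MvPolynomial.eval z (topPart u d f) = 0)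
    (hnd : ∃ i, MvPolynomial.eval z (MvPolynomial.pderiv i (topPart u d f)) ≠ 0)
    (h : MvPolynomial (Fin 2) ℂ) (hh : brk h f = 0) :
    ∃ G : Polynomial ℂ, h = Polynomial.aeval f G := by
  have key : ∀ N : ℕ, ∀ h : MvPolynomial (Fin 2) ℂ, brk h f = 0 → SuppP (· < N * d) u h →
      ∃ G : Polynomial ℂ, h = Polynomial.aeval f G := by
    intro N
    induction N using Nat.strong_induction_on with
    | _ N ih =>
    intro h hh hN
    by_cases h0 : h = 0
    · exact ⟨0, by simp [h0]⟩
    obtain ⟨m, hm, hmax⟩ := Finset.exists_max_image h.support (wt u)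
      (MvPolynomial.support_nonempty.mpr h0)
    have hle : SuppP (· ≤ wt u m) u h := fun n hn => hmax n (by simpa using hn)
    have hm' : MvPolynomial.coeff m h ≠ 0 := by simpa using hm
    have ha0 : topPart u (wt u m) h ≠ 0 := by
      intro e
      have := coeff_topPart u (wt u m) h m
      rw [e] at this
      simp at this
      exact hm' this.symm
    have hbr : brk (topPart u (wt u m) h) (topPart u d f) = 0 := by
      apply brk_top (topPart_supp u _ h) (topPart_rest hle) (topPart_supp u d f) (topPart_rest hf)
      simpa using hh
    obtain ⟨k, c, hk, hkc⟩ := top_form hd (topPart_supp u _ h) (topPart_supp u d f) hbr hz hbz hnd ha0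
    have hkN : k < N := by
      have := hN m hm'
      simp only at this
      rw [hk] at this
      exact_mod_cast lt_of_mul_lt_mul_right this hd.le
    obtain ⟨G, hG⟩ := ih k hkN (h - MvPolynomial.C c * f ^ k)
      (by rw [brk_sub_left, brk_C_mul_left, brk_pow_self, hh]; simp) (by
        have e : h - MvPolynomial.C c * f ^ k = (h - topPart u (wt u m) h)
            - MvPolynomial.C c * (f ^ k - topPart u d f ^ k) := by
          linear_combination hkc
        rw [e]
        have h1 := topPart_rest hle
        rw [hk] at h1 ⊢
        exact h1.sub ((pow_rest (topPart_supp u d f) (topPart_rest hf) k).C_mul c))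
    refine ⟨G + Polynomial.C c * Polynomial.X ^ k, ?_⟩
    simp only [map_add, map_mul, map_pow, Polynomial.aeval_X, Polynomial.aeval_C,
      MvPolynomial.algebraMap_eq]
    linear_combination hG
  obtain ⟨B, hB⟩ : ∃ B : ℝ, ∀ m ∈ h.support, wt u m < B := by
    obtain ⟨B, hB⟩ := (h.support.image (wt u)).bddAbove
    exact ⟨B + 1, fun m hm => by
      have := hB (Finset.mem_coe.mpr (Finset.mem_image_of_mem _ hm)); linarith⟩
  obtain ⟨N, hN⟩ := exists_nat_gt (B / d)
  rw [div_lt_iff₀ hd] at hN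
  exact key N h hh (fun m hm => (hB m (by simpa using hm)).trans hN)

lemma exists_root_ne_zero (p : Polynomial ℂ) (i j : ℕ) (hij : i ≠ j) (hi : p.coeff i ≠ 0)
    (hj : p.coeff j ≠ 0) : ∃ z, z ≠ 0 ∧ p.eval z = 0 := by
  by_contra hcon
  push Not at hcon
  have hp : p ≠ 0 := by rintro rfl; simp at hi
  obtain ⟨q, hq, hq'⟩ := Polynomial.exists_eq_pow_rootMultiplicity_mul_and_not_dvd p hp 0
  set k := p.rootMultiplicity 0
  have hdeg : q.natDegree = 0 := by
    by_contra h
    obtain ⟨z, hz⟩ := Complex.exists_root (f := q) (Polynomial.natDegree_pos_iff_degree_pos.mp (by omega))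
    rw [Polynomial.dvd_iff_isRoot] at hq'
    have hz0 : z ≠ 0 := by rintro rfl; exact hq' hz
    apply hcon z hz0
    rw [hq]
    simp [Polynomial.IsRoot.def.mp hz]
  rw [Polynomial.eq_C_of_natDegree_eq_zero hdeg] at hq
  have : ∀ n, p.coeff n ≠ 0 → n = k := by
    intro n hn
    by_contra hne
    apply hn
    rw [hq]
    simp [Polynomial.coeff_X_pow, hne]
  exact hij ((this i hi).trans (this j hj).symm)

theorem exists_edge (f : MvPolynomial (Fin 2) ℂ)
    (hdim : setDim (NPinf f) = 2) (hnd : NondegAtInfty f) :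
    ∃ (u : Fin 2 → ℝ) (d : ℝ) (z : Fin 2 → ℂ), 0 < d ∧ SuppP (· ≤ d) u f ∧ (∀ i, z i ≠ 0) ∧
      MvPolynomial.eval z (topPart u d f) = 0 ∧
      ∃ i, MvPolynomial.eval z (MvPolynomial.pderiv i (topPart u d f)) ≠ 0 := by
  -- spanning
  have span : ∀ w : Fin 2 → ℝ, w ≠ 0 → ∃ m ∈ f.support, wt w m ≠ 0 := by
    intro w hw
    by_contra hcon
    push Not at hcon
    let L : (Fin 2 → ℝ) →ₗ[ℝ] ℝ := (w 0) • LinearMap.proj 0 + (w 1) • LinearMap.proj 1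
    have h1 : NPinf f ⊆ (LinearMap.ker L : Set (Fin 2 → ℝ)) := by
      apply convexHull_min _ (LinearMap.ker L).convex
      rintro x (hx | ⟨m, hm, rfl⟩)
      · rw [Set.mem_singleton_iff] at hx; subst hx; simp
      · have := hcon m (by simpa using hm)
        simpa [L, wt] using this
    have h2 : (affineSpan ℝ (NPinf f)).direction ≤ LinearMap.ker L := by
      rw [direction_affineSpan]
      apply Submodule.span_le.mpr
      rintro x ⟨a, ha, b, hb, rfl⟩
      exact (LinearMap.ker L).sub_mem (h1 ha) (h1 hb)
    have h3 := Submodule.finrank_mono h2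
    rw [setDim] at hdim
    rw [hdim] at h3
    have h4 : LinearMap.ker L = ⊤ := by
      apply Submodule.eq_top_of_finrank_eq
      have := Submodule.finrank_le (LinearMap.ker L)
      simp at this ⊢
      omega
    have h5 : L = 0 := LinearMap.ker_eq_top.mp h4
    apply hw
    ext i
    have := congrArg (fun l => l (Pi.single i 1)) h5
    fin_cases i <;> simpa [L] using this
  -- maximizer of total degree
  obtain ⟨m1, hm1, hm1'⟩ := span (fun i => if i = 0 then 1 else 0) (by
    intro h; simpa using congrFun h 0)
  obtain ⟨v, hv, hvmax⟩ := Finset.exists_max_image f.support (wt 1) ⟨m1, hm1⟩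
  have hpos : 0 < wt 1 v := by
    refine lt_of_lt_of_le ?_ (hvmax m1 hm1)
    simp [wt] at hm1' ⊢
    have : 0 < m1 0 := Nat.pos_of_ne_zero hm1'
    positivity
  -- rotating direction
  obtain ⟨w, hw0, hwv⟩ : ∃ w : Fin 2 → ℝ, w ≠ 0 ∧ wt w v = 0 := by
    refine ⟨fun i => if i = 0 then -(v 1 : ℝ) else v 0, ?_, ?_⟩
    · intro h
      have h0 := congrFun h 0
      have h1 := congrFun h 1
      simp at h0 h1
      simp [wt, h0, h1] at hpos
    · simp [wt]; ring
  have hwex : ∃ w : Fin 2 → ℝ, w ≠ 0 ∧ wt w v = 0 ∧ ∃ m ∈ f.support, 0 < wt w m := by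
    obtain ⟨m, hm, hm0⟩ := span w hw0
    rcases lt_or_gt_of_ne hm0 with h | h
    · refine ⟨-w, neg_ne_zero.mpr hw0, ?_, m, hm, ?_⟩
      · simp [wt] at hwv ⊢; linarith
      · simp [wt] at h ⊢; linarith
    · exact ⟨w, hw0, hwv, m, hm, h⟩
  clear hwv hw0 w
  obtain ⟨w, hw0, hwv, m2, hm2, hm2'⟩ := hwex
  obtain ⟨s, hs, hsmin⟩ := Finset.exists_min_image (f.support.filter (fun m => 0 < wt w m))
    (fun m => (wt 1 v - wt 1 m) / wt w m) ⟨m2, by simp only [Finset.mem_filter]; exact ⟨hm2, hm2'⟩⟩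
  rw [Finset.mem_filter] at hs
  obtain ⟨hs, hsw⟩ := hs
  set τ := (wt 1 v - wt 1 s) / wt w s with hτ
  have hτ0 : 0 ≤ τ := div_nonneg (sub_nonneg.mpr (hvmax s hs)) hsw.le
  set u : Fin 2 → ℝ := 1 + τ • w with hu
  have hwtu : ∀ m, wt u m = wt 1 m + τ * wt w m := by
    intro m; simp [wt, hu]; ring
  have huv : wt u v = wt 1 v := by rw [hwtu, hwv]; ring
  have hus : wt u s = wt 1 v := by rw [hwtu, hτ]; field_simp; ring
  have hle : SuppP (· ≤ wt 1 v) u f := by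
    intro m hm
    have hm' : m ∈ f.support := by simpa using hm
    simp only [hwtu]
    by_cases h : 0 < wt w m
    · have := hsmin m (by rw [Finset.mem_filter]; exact ⟨hm', h⟩)
      rw [le_div_iff₀ h] at this
      linarith
    · have h1 := hvmax m hm'
      have : τ * wt w m ≤ 0 := mul_nonpos_of_nonneg_of_nonpos hτ0 (not_lt.mp h)
      linarith
  have hsv : s ≠ v := by rintro rfl; rw [hwv] at hsw; exact lt_irrefl _ hsw
  set d := wt 1 v with hd
  -- existence of torus zero
  have hcv : MvPolynomial.coeff v (topPart u d f) ≠ 0 := by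
    rw [coeff_topPart, if_pos huv]; simpa using hv
  have hcs : MvPolynomial.coeff s (topPart u d f) ≠ 0 := by
    rw [coeff_topPart, if_pos hus]; simpa using hs
  have hz : ∃ z : Fin 2 → ℂ, (∀ i, z i ≠ 0) ∧ MvPolynomial.eval z (topPart u d f) = 0 := by
    obtain ⟨i, j, hji, huj⟩ : ∃ i j : Fin 2, j ≠ i ∧ u j ≠ 0 := by
      by_cases h : u 0 = 0
      · refine ⟨0, 1, by simp, ?_⟩
        intro h1; simp [wt, h, h1] at huv; linarith
      · exact ⟨1, 0, by simp, h⟩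
    have hne : v i ≠ s i := by
      intro h
      apply hsv
      have : u j * (s j : ℝ) = u j * v j := by
        rw [← huv, wt, wt] at hus
        fin_cases i <;> fin_cases j <;> simp_all
      have h2 := mul_left_cancel₀ huj this
      have h3 : s j = v j := by exact_mod_cast h2
      ext k
      fin_cases i <;> fin_cases j <;> fin_cases k <;> simp_all
    have c1 := coeff_lin i j hji (z := 1) huj (topPart_supp u d f) v huv
    have c2 := coeff_lin i j hji (z := 1) huj (topPart_supp u d f) s hus
    obtain ⟨x, hx, hx0⟩ := exists_root_ne_zero (lin i 1 (topPart u d f)) (v i) (s i) hne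
      (by rw [c1]; simpa using hcv) (by rw [c2]; simpa using hcs)
    rw [lin_eval] at hx0
    refine ⟨_, ?_, hx0⟩
    intro k
    by_cases h : k = i
    · subst h; simpa using hx
    · simp [h]
  obtain ⟨z, hz, hz0⟩ := hz
  refine ⟨u, d, z, hpos, hle, hz, hz0, ?_⟩
  -- the face
  have hdot : ∀ m : Fin 2 →₀ ℕ, dotR (-u) (fun i => (m i : ℝ)) = - wt u m := by
    intro m; simp [dotR, wt, Fin.sum_univ_two, neg_add_rev, add_comm]
  have hNP : ∀ x ∈ NPinf f, -d ≤ dotR (-u) x := by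
    let L : (Fin 2 → ℝ) →ₗ[ℝ] ℝ := (-u 0) • LinearMap.proj 0 + (-u 1) • LinearMap.proj 1
    have hL : ∀ x, L x = dotR (-u) x := by
      intro x
      simp only [L, dotR, Fin.sum_univ_two, LinearMap.add_apply, LinearMap.smul_apply,
        LinearMap.proj_apply, smul_eq_mul, Pi.neg_apply]
    have h1 : NPinf f ⊆ {x | -d ≤ L x} := by
      apply convexHull_min _ (convex_halfSpace_ge L.isLinear _)
      rintro x (hx | ⟨m, hm, rfl⟩)
      · rw [Set.mem_singleton_iff] at hx; subst hx; simp; linarith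
      · have := hle m hm
        show -d ≤ L _
        rw [hL, hdot]; simpa using this
    intro x hx
    rw [← hL]; exact h1 hx
  have hmem : ∀ m ∈ f.support, (fun i => (m i : ℝ)) ∈ NPinf f := by
    intro m hm
    apply subset_convexHull
    exact Or.inr ⟨m, by simpa using hm, rfl⟩
  have hface : facePart f (suppFace f (-u)) = topPart u d f := by
    rw [facePart, topPart]
    apply Finset.sum_congr rfl
    intro m hm
    congr 1
    apply propext
    constructor
    · rintro ⟨_, h⟩
      have h1 := h _ (hmem v hv)
      rw [hdot, hdot, huv] at h1
      have := hle m (by simpa using hm)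
      simp only at this
      linarith
    · intro h
      refine ⟨hmem m hm, fun x hx => ?_⟩
      rw [hdot, h]; exact hNP x hx
  rw [← hface] at hz0 ⊢
  refine hnd _ ⟨-u, rfl⟩ ?_ z hz hz0
  rintro ⟨_, h⟩
  have := h _ (hmem v hv)
  rw [hdot, huv] at this
  simp [dotR] at this
  linarith

lemma poincare (A B : MvPolynomial (Fin 2) ℂ)
    (h : MvPolynomial.pderiv 1 A = MvPolynomial.pderiv 0 B) :
    ∃ p, MvPolynomial.pderiv 0 p = A ∧ MvPolynomial.pderiv 1 p = B := by
  set A' := MvPolynomial.X 0 * A with hA'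
  set B' := MvPolynomial.X 1 * B with hB'
  have hth : th 1 A' = th 0 B' := by
    simp [th, hA', hB', h]; ring
  have hcl : ∀ m : Fin 2 →₀ ℕ, (m 1 : ℂ) * MvPolynomial.coeff m A' = m 0 * MvPolynomial.coeff m B' := by
    intro m
    have := congrArg (MvPolynomial.coeff m) hth
    rwa [coeff_th, coeff_th] at this
  have hA0 : ∀ m : Fin 2 →₀ ℕ, m 0 = 0 → MvPolynomial.coeff m A' = 0 := by
    intro m hm; rw [hA', MvPolynomial.coeff_X_mul']; simp [hm]
  have hB0 : ∀ m : Fin 2 →₀ ℕ, m 1 = 0 → MvPolynomial.coeff m B' = 0 := by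
    intro m hm; rw [hB', MvPolynomial.coeff_X_mul']; simp [hm]
  set p : MvPolynomial (Fin 2) ℂ := ∑ m ∈ (A' + B').support,
    MvPolynomial.monomial m (MvPolynomial.coeff m (A' + B') / ((m 0 : ℂ) + m 1)) with hp
  have hpc : ∀ m, MvPolynomial.coeff m p = MvPolynomial.coeff m (A' + B') / ((m 0 : ℂ) + m 1) := by
    intro m
    rw [hp, MvPolynomial.coeff_sum, Finset.sum_eq_single m]
    · simp
    · intro n _ hn; rw [MvPolynomial.coeff_monomial, if_neg hn]
    · intro hm; rw [MvPolynomial.notMem_support_iff] at hm; simp [hm]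
  have hs : ∀ m : Fin 2 →₀ ℕ, m 0 ≠ 0 ∨ m 1 ≠ 0 → ((m 0 : ℂ) + m 1) ≠ 0 := by
    intro m hm h0
    have : m 0 + m 1 = 0 := by exact_mod_cast h0
    omega
  refine ⟨p, ?_, ?_⟩
  · apply mul_left_cancel₀ (MvPolynomial.X_ne_zero (R := ℂ) (0 : Fin 2))
    show th 0 p = A'
    ext m
    rw [coeff_th, hpc, MvPolynomial.coeff_add]
    by_cases hm : m 0 = 0
    · simp [hm, hA0 m hm]
    · have := hs m (Or.inl hm)
      field_simp
      linear_combination -hcl m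
  · apply mul_left_cancel₀ (MvPolynomial.X_ne_zero (R := ℂ) (1 : Fin 2))
    show th 1 p = B'
    ext m
    rw [coeff_th, hpc, MvPolynomial.coeff_add]
    by_cases hm : m 1 = 0
    · simp [hm, hB0 m hm]
    · have := hs m (Or.inr hm)
      field_simp
      linear_combination hcl m

lemma totalDegree_pderiv_lt (i : Fin 2) (p : MvPolynomial (Fin 2) ℂ)
    (h : MvPolynomial.pderiv i p ≠ 0) : (MvPolynomial.pderiv i p).totalDegree + 1 ≤ p.totalDegree := by
  obtain ⟨m, hm, hd⟩ := Finset.exists_mem_eq_sup (MvPolynomial.pderiv i p).support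
    (MvPolynomial.support_nonempty.mpr h) (fun s => s.sum fun _ e => e)
  change (MvPolynomial.pderiv i p).totalDegree = _ at hd
  have hm' : MvPolynomial.coeff (m + Finsupp.single i 1) p ≠ 0 := by
    rw [MvPolynomial.mem_support_iff, MvPolynomial.coeff_pderiv] at hm
    exact left_ne_zero_of_mul hm
  have := MvPolynomial.le_totalDegree (MvPolynomial.mem_support_iff.mpr hm')
  rw [hd]
  have e : (m + Finsupp.single i 1).sum (fun _ e => e) = m.sum (fun _ e => e) + 1 := by
    rw [Finsupp.sum_add_index' (by simp) (by simp)]; simp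
  rw [← e]
  exact this

lemma totalDegree_mul_pderiv (i : Fin 2) (p q : MvPolynomial (Fin 2) ℂ) :
    (q * MvPolynomial.pderiv i p).totalDegree ≤ (p * q).totalDegree - 1 := by
  by_cases hq : q = 0
  · simp [hq]
  by_cases hp : MvPolynomial.pderiv i p = 0
  · simp [hp]
  have hp0 : p ≠ 0 := by rintro rfl; simp at hp
  rw [MvPolynomial.totalDegree_mul_of_isDomain hq hp, MvPolynomial.totalDegree_mul_of_isDomain hp0 hq]
  have := totalDegree_pderiv_lt i p hp
  omega

lemma eq_zero_of_dvd_deg {p q : MvPolynomial (Fin 2) ℂ} (h : p ∣ q) (hd : q.totalDegree < p.totalDegree) :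
    q = 0 := by
  by_contra h0
  obtain ⟨r, rfl⟩ := h
  rw [MvPolynomial.totalDegree_mul_of_isDomain (left_ne_zero_of_mul h0) (right_ne_zero_of_mul h0)] at hd
  omega

lemma pderiv_eq_zero_of_dvd {i : Fin 2} {p : MvPolynomial (Fin 2) ℂ}
    (h : p ∣ MvPolynomial.pderiv i p) : MvPolynomial.pderiv i p = 0 := by
  by_contra h0
  have := totalDegree_pderiv_lt i p h0
  exact h0 (eq_zero_of_dvd_deg h (by omega))

lemma const_of_pderiv {p : MvPolynomial (Fin 2) ℂ}
    (h : ∀ i, MvPolynomial.pderiv i p = 0) : ∃ a, p = MvPolynomial.C a := by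
  refine ⟨MvPolynomial.coeff 0 p, ?_⟩
  ext m
  rw [MvPolynomial.coeff_C]
  split_ifs with hm
  · rw [hm]
  · obtain ⟨i, hi⟩ : ∃ i, m i ≠ 0 := by
      by_contra hcon
      push Not at hcon
      exact hm (by ext i; simp [hcon i])
    have := coeff_th i p m
    rw [th, h i] at this
    simp at this
    rcases this with h1 | h1
    · exact absurd h1 hi
    · exact h1

lemma not_prop {f P Q : MvPolynomial (Fin 2) ℂ} {c : ℂ} (hf : 0 < f.totalDegree)
    (hPQ : f - MvPolynomial.C c = P * Q) (hP : ∃ z, MvPolynomial.eval z P = 0)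
    (hQ : ∃ z, MvPolynomial.eval z Q = 0)
    (hd : ∀ z, ¬ (MvPolynomial.eval z P = 0 ∧ MvPolynomial.eval z Q = 0)) (l : ℂ)
    (h : ∀ i, Q * MvPolynomial.pderiv i P = MvPolynomial.C l * MvPolynomial.pderiv i f) : False := by
  have hne : P * Q ≠ 0 := by
    intro h0
    rw [h0, sub_eq_zero] at hPQ
    rw [hPQ] at hf; simp at hf
  have hdf : ∀ i, MvPolynomial.pderiv i f = P * MvPolynomial.pderiv i Q + Q * MvPolynomial.pderiv i P := by
    intro i
    have := congrArg (MvPolynomial.pderiv i) hPQ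
    simpa [Derivation.leibniz] using this
  have hconst : ∀ R : MvPolynomial (Fin 2) ℂ, R ≠ 0 → (∃ z, MvPolynomial.eval z R = 0) →
      (∀ i, MvPolynomial.pderiv i R = 0) → False := by
    rintro R hR ⟨z, hz⟩ hR'
    obtain ⟨a, rfl⟩ := const_of_pderiv hR'
    simp at hz
    exact hR (by simp [hz])
  have hcop : ∃ a b, a * P + b * Q = 1 := by
    rw [← Ideal.mem_span_pair, ← Ideal.eq_top_iff_one, ← Ideal.radical_eq_top,
      ← MvPolynomial.vanishingIdeal_zeroLocus_eq_radical (K := ℂ)]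
    have : MvPolynomial.zeroLocus ℂ (Ideal.span {P, Q}) = ∅ := by
      rw [Set.eq_empty_iff_forall_notMem]
      intro z hz
      rw [MvPolynomial.mem_zeroLocus_iff] at hz
      apply hd z
      have h1 := hz P (Ideal.subset_span (by simp))
      have h2 := hz Q (Ideal.subset_span (by simp))
      exact ⟨by simpa [MvPolynomial.aeval_eq_eval] using h1, by simpa [MvPolynomial.aeval_eq_eval] using h2⟩
    rw [this]
    exact MvPolynomial.vanishingIdeal_empty
  obtain ⟨a, b, hab⟩ := hcop
  by_cases hl : l = 1
  · apply hconst Q (right_ne_zero_of_mul hne) hQ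
    intro i
    have := h i
    rw [hdf i, hl] at this
    have h2 : P * MvPolynomial.pderiv i Q = 0 := by
      rw [map_one] at this
      linear_combination -this
    exact (mul_eq_zero.mp h2).resolve_left (left_ne_zero_of_mul hne)
  · apply hconst P (left_ne_zero_of_mul hne) hP
    intro i
    apply pderiv_eq_zero_of_dvd
    have := h i
    rw [hdf i] at this
    have hu : MvPolynomial.C (1 - l)⁻¹ * (1 - MvPolynomial.C l) = (1 : MvPolynomial (Fin 2) ℂ) := by
      rw [← MvPolynomial.C_1, ← MvPolynomial.C_sub, ← MvPolynomial.C_mul,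
        inv_mul_cancel₀ (sub_ne_zero.mpr (Ne.symm hl))]
    refine ⟨a * MvPolynomial.pderiv i P
      + b * MvPolynomial.C (1 - l)⁻¹ * MvPolynomial.C l * MvPolynomial.pderiv i Q, ?_⟩
    linear_combination (-MvPolynomial.pderiv i P) * hab + b * MvPolynomial.C (1 - l)⁻¹ * this
      - b * Q * MvPolynomial.pderiv i P * hu

lemma pderiv_aeval (i : Fin 2) (f : MvPolynomial (Fin 2) ℂ) (G : Polynomial ℂ) :
    MvPolynomial.pderiv i (Polynomial.aeval f G)
      = Polynomial.aeval f (Polynomial.derivative G) * MvPolynomial.pderiv i f := by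
  rw [Derivation.map_aeval, smul_eq_mul]

lemma dvd_aeval_sub (f : MvPolynomial (Fin 2) ℂ) (G : Polynomial ℂ) (c : ℂ) :
    f - MvPolynomial.C c ∣ Polynomial.aeval f G - MvPolynomial.C (G.eval c) := by
  have h : (Polynomial.X - Polynomial.C c) ∣ G - Polynomial.C (G.eval c) := by
    rw [Polynomial.dvd_iff_isRoot]; simp
  have := map_dvd (Polynomial.aeval f) h
  simpa [MvPolynomial.algebraMap_eq] using this

theorem stein (f : MvPolynomial (Fin 2) ℂ) (hf : 0 < f.totalDegree)
    (hcent : ∀ h, brk h f = 0 → ∃ G : Polynomial ℂ, h = Polynomial.aeval f G)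
    (S : Set ℂ) (hS : S.Infinite)
    (hSf : ∀ c ∈ S, ∃ P Q, f - MvPolynomial.C c = P * Q ∧ (∃ z, MvPolynomial.eval z P = 0) ∧
      (∃ z, MvPolynomial.eval z Q = 0) ∧
      ∀ z, ¬ (MvPolynomial.eval z P = 0 ∧ MvPolynomial.eval z Q = 0)) : False := by
  have hSf' : ∀ c : S, ∃ P Q, f - MvPolynomial.C (c : ℂ) = P * Q ∧
      ∀ l, ¬ ∀ i, Q * MvPolynomial.pderiv i P = MvPolynomial.C l * MvPolynomial.pderiv i f := by
    rintro ⟨c, hc⟩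
    obtain ⟨P, Q, h1, h2, h3, h4⟩ := hSf c hc
    exact ⟨P, Q, h1, fun l h => not_prop hf h1 h2 h3 h4 l h⟩
  choose P Q hPQ hnp using hSf'
  have htd : ∀ c : ℂ, (f - MvPolynomial.C c).totalDegree = f.totalDegree := by
    intro c
    apply le_antisymm
    · exact MvPolynomial.totalDegree_sub_C_le f c
    · have := MvPolynomial.totalDegree_sub_C_le (f - MvPolynomial.C c) (-c)
      simpa using this
  have hdeg : ∀ c i, Q c * MvPolynomial.pderiv i (P c)
      ∈ MvPolynomial.restrictTotalDegree (Fin 2) ℂ (f.totalDegree - 1) := by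
    intro c i
    rw [MvPolynomial.mem_restrictTotalDegree, ← htd c, hPQ c]
    exact totalDegree_mul_pderiv i _ _
  let ω : S → (Fin 2 → MvPolynomial.restrictTotalDegree (Fin 2) ℂ (f.totalDegree - 1)) :=
    fun c i => ⟨_, hdeg c i⟩
  have hdep : ¬ LinearIndependent ℂ ω := by
    intro h
    have := h.finite_of_isNoetherian
    exact hS this
  rw [linearIndependent_iff'] at hdep
  push Not at hdep
  obtain ⟨s, l, hsum, c0, hc0, hl0⟩ := hdep
  have hsum' : ∀ i, ∑ c ∈ s, MvPolynomial.C (l c) * (Q c * MvPolynomial.pderiv i (P c)) = 0 := by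
    intro i
    have := congrArg (fun v => ((v i : MvPolynomial.restrictTotalDegree (Fin 2) ℂ (f.totalDegree - 1)) :
      MvPolynomial (Fin 2) ℂ)) hsum
    simpa [ω, Finset.sum_apply, MvPolynomial.C_mul'] using this
  set D : S → MvPolynomial (Fin 2) ℂ := fun c =>
    MvPolynomial.pderiv 0 (Q c) * MvPolynomial.pderiv 1 (P c)
      - MvPolynomial.pderiv 1 (Q c) * MvPolynomial.pderiv 0 (P c) with hD
  have hcomm : ∀ p : MvPolynomial (Fin 2) ℂ, MvPolynomial.pderiv 0 (MvPolynomial.pderiv 1 p)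
      = MvPolynomial.pderiv 1 (MvPolynomial.pderiv 0 p) := by
    intro p
    ext m
    simp only [MvPolynomial.coeff_pderiv]
    rw [add_right_comm]
    simp
    ring
  have hdω : ∀ c, MvPolynomial.pderiv 0 (Q c * MvPolynomial.pderiv 1 (P c))
      - MvPolynomial.pderiv 1 (Q c * MvPolynomial.pderiv 0 (P c)) = D c := by
    intro c
    simp only [Derivation.leibniz, smul_eq_mul, hcomm, hD]
    ring
  have hsumD : ∑ c ∈ s, MvPolynomial.C (l c) * D c = 0 := by
    have h0 := congrArg (MvPolynomial.pderiv 1) (hsum' 0)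
    have h1 := congrArg (MvPolynomial.pderiv 0) (hsum' 1)
    rw [map_sum, map_zero] at h0 h1
    simp only [MvPolynomial.pderiv_C_mul] at h0 h1
    rw [← sub_zero (0 : MvPolynomial (Fin 2) ℂ)]
    nth_rewrite 1 [← h1]
    rw [← h0, ← Finset.sum_sub_distrib]
    apply Finset.sum_congr rfl
    intro c _
    rw [← hdω c]
    simp only [MvPolynomial.C_mul']
    rw [smul_sub]
  have hdf : ∀ c i, MvPolynomial.pderiv i f
      = P c * MvPolynomial.pderiv i (Q c) + Q c * MvPolynomial.pderiv i (P c) := by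
    intro c i
    have := congrArg (MvPolynomial.pderiv i) (hPQ c)
    simpa [Derivation.leibniz] using this
  have hwedge : ∀ c, MvPolynomial.pderiv 0 f * (Q c * MvPolynomial.pderiv 1 (P c))
      - MvPolynomial.pderiv 1 f * (Q c * MvPolynomial.pderiv 0 (P c))
      = (f - MvPolynomial.C (c : ℂ)) * D c := by
    intro c
    rw [hPQ c, hdf c 0, hdf c 1]
    ring
  set g : Polynomial ℂ := ∏ c ∈ s, (Polynomial.X - Polynomial.C (c : ℂ)) with hg
  set gc : S → Polynomial ℂ := fun c => ∏ c ∈ s.erase c, (Polynomial.X - Polynomial.C (c : ℂ)) with hgc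
  have hgg : ∀ c ∈ s, (Polynomial.X - Polynomial.C (c : ℂ)) * gc c = g := by
    intro c hc
    exact Finset.mul_prod_erase s _ hc
  set η : Fin 2 → MvPolynomial (Fin 2) ℂ := fun i => ∑ c ∈ s,
    MvPolynomial.C (l c) * (Polynomial.aeval f (gc c) * (Q c * MvPolynomial.pderiv i (P c))) with hη
  have hclosed : MvPolynomial.pderiv 1 (η 0) = MvPolynomial.pderiv 0 (η 1) := by
    rw [eq_comm, ← sub_eq_zero]
    simp only [hη, map_sum]
    rw [← Finset.sum_sub_distrib]
    have : ∀ c ∈ s, MvPolynomial.pderiv 0 (MvPolynomial.C (l c) *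
          (Polynomial.aeval f (gc c) * (Q c * MvPolynomial.pderiv 1 (P c))))
        - MvPolynomial.pderiv 1 (MvPolynomial.C (l c) *
          (Polynomial.aeval f (gc c) * (Q c * MvPolynomial.pderiv 0 (P c))))
        = Polynomial.aeval f (Polynomial.derivative g) * (MvPolynomial.C (l c) * D c) := by
      intro c hc
      have e := congrArg (fun p => Polynomial.aeval f (Polynomial.derivative p)) (hgg c hc)
      simp only [Polynomial.derivative_mul, Polynomial.derivative_sub, Polynomial.derivative_X,
        Polynomial.derivative_C, sub_zero, one_mul, map_add, map_mul, map_sub, Polynomial.aeval_X,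
        Polynomial.aeval_C, MvPolynomial.algebraMap_eq] at e
      rw [← e]
      simp only [MvPolynomial.C_mul', Derivation.map_smul]
      rw [← smul_sub, mul_smul_comm]
      congr 1
      rw [Derivation.leibniz, Derivation.leibniz (MvPolynomial.pderiv 1), pderiv_aeval, pderiv_aeval]
      simp only [smul_eq_mul]
      linear_combination Polynomial.aeval f (gc c) * hdω c
        + Polynomial.aeval f (Polynomial.derivative (gc c)) * hwedge c
    rw [Finset.sum_congr rfl this, ← Finset.mul_sum, hsumD, mul_zero]
  have hwη : MvPolynomial.pderiv 0 f * η 1 - MvPolynomial.pderiv 1 f * η 0 = 0 := by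
    simp only [hη]
    rw [Finset.mul_sum, Finset.mul_sum, ← Finset.sum_sub_distrib]
    have : ∀ c ∈ s, MvPolynomial.pderiv 0 f * (MvPolynomial.C (l c) *
          (Polynomial.aeval f (gc c) * (Q c * MvPolynomial.pderiv 1 (P c))))
        - MvPolynomial.pderiv 1 f * (MvPolynomial.C (l c) *
          (Polynomial.aeval f (gc c) * (Q c * MvPolynomial.pderiv 0 (P c))))
        = Polynomial.aeval f g * (MvPolynomial.C (l c) * D c) := by
      intro c hc
      rw [← hgg c hc]
      simp only [map_mul, map_sub, Polynomial.aeval_X, Polynomial.aeval_C,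
        MvPolynomial.algebraMap_eq]
      linear_combination MvPolynomial.C (l c) * Polynomial.aeval f (gc c) * hwedge c
    rw [Finset.sum_congr rfl this, ← Finset.mul_sum, hsumD, mul_zero]
  obtain ⟨h, hh0, hh1⟩ := poincare _ _ hclosed
  obtain ⟨G, hG⟩ := hcent h (by
    rw [brk, th, th, th, th, hh0, hh1]
    linear_combination (-MvPolynomial.X 0 * MvPolynomial.X 1) * hwη)
  have hηG : ∀ i, η i = Polynomial.aeval f (Polynomial.derivative G) * MvPolynomial.pderiv i f := by
    intro i
    rw [← pderiv_aeval, ← hG]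
    fin_cases i
    · exact hh0.symm
    · exact hh1.symm
  have hgc0 : (gc c0).eval (c0 : ℂ) ≠ 0 := by
    rw [hgc, Polynomial.eval_prod, Finset.prod_ne_zero_iff]
    intro c hc
    simp only [Polynomial.eval_sub, Polynomial.eval_X, Polynomial.eval_C]
    intro h0
    exact (Finset.mem_erase.mp hc).1 (Subtype.ext (sub_eq_zero.mp h0).symm)
  set k := l c0 * (gc c0).eval (c0 : ℂ) with hk
  have hk0 : k ≠ 0 := mul_ne_zero hl0 hgc0
  set r := (Polynomial.derivative G).eval (c0 : ℂ) with hr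
  have hdvd : ∀ i, f - MvPolynomial.C (c0 : ℂ) ∣
      MvPolynomial.C k * (Q c0 * MvPolynomial.pderiv i (P c0))
        - MvPolynomial.C r * MvPolynomial.pderiv i f := by
    intro i
    have e1 : f - MvPolynomial.C (c0 : ℂ) ∣ η i
        - MvPolynomial.C k * (Q c0 * MvPolynomial.pderiv i (P c0)) := by
      simp only [hη]
      rw [← Finset.add_sum_erase s _ hc0, add_sub_right_comm]
      apply dvd_add
      · have := dvd_aeval_sub f (gc c0) (c0 : ℂ)
        obtain ⟨w, hw⟩ := this
        refine ⟨w * MvPolynomial.C (l c0) * (Q c0 * MvPolynomial.pderiv i (P c0)), ?_⟩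
        rw [hk, MvPolynomial.C_mul]
        linear_combination MvPolynomial.C (l c0) * (Q c0 * MvPolynomial.pderiv i (P c0)) * hw
      · apply Finset.dvd_sum
        intro c hc
        have h1 : (Polynomial.X - Polynomial.C (c0 : ℂ)) ∣ gc c :=
          Finset.dvd_prod_of_mem _ (Finset.mem_erase.mpr ⟨(Finset.mem_erase.mp hc).1.symm, hc0⟩)
        have h2 := map_dvd (Polynomial.aeval f) h1
        simp only [map_sub, Polynomial.aeval_X, Polynomial.aeval_C, MvPolynomial.algebraMap_eq] at h2
        exact Dvd.dvd.mul_left (Dvd.dvd.mul_right h2 _) _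
    have e2 : f - MvPolynomial.C (c0 : ℂ) ∣ η i - MvPolynomial.C r * MvPolynomial.pderiv i f := by
      rw [hηG i, ← sub_mul]
      exact Dvd.dvd.mul_right (dvd_aeval_sub f _ _) _
    have := dvd_sub e2 e1
    convert this using 1
    ring
  have hzero : ∀ i, MvPolynomial.C k * (Q c0 * MvPolynomial.pderiv i (P c0))
        - MvPolynomial.C r * MvPolynomial.pderiv i f = 0 := by
    intro i
    apply eq_zero_of_dvd_deg (hdvd i)
    rw [htd]
    have hmem : MvPolynomial.C k * (Q c0 * MvPolynomial.pderiv i (P c0))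
        - MvPolynomial.C r * MvPolynomial.pderiv i f
        ∈ MvPolynomial.restrictTotalDegree (Fin 2) ℂ (f.totalDegree - 1) := by
      rw [MvPolynomial.C_mul', MvPolynomial.C_mul']
      apply Submodule.sub_mem
      · exact Submodule.smul_mem _ _ (hdeg c0 i)
      · apply Submodule.smul_mem
        rw [MvPolynomial.mem_restrictTotalDegree]
        have := totalDegree_mul_pderiv i f 1
        simpa using this
    rw [MvPolynomial.mem_restrictTotalDegree] at hmem
    omega
  apply hnp c0 (k⁻¹ * r)
  intro i
  have := hzero i
  have hu : MvPolynomial.C k⁻¹ * MvPolynomial.C k = (1 : MvPolynomial (Fin 2) ℂ) := by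
    rw [← MvPolynomial.C_mul, inv_mul_cancel₀ hk0, MvPolynomial.C_1]
  rw [MvPolynomial.C_mul]
  linear_combination MvPolynomial.C k⁻¹ * this - (Q c0 * MvPolynomial.pderiv i (P c0)) * hu

def ev (G : Polynomial (Polynomial ℂ)) (x y : ℂ) : ℂ := (G.map (Polynomial.evalRingHom x)).eval y

lemma ev_eq (G : Polynomial (Polynomial ℂ)) (x y : ℂ) :
    ev G x y = ∑ i ∈ Finset.range (G.natDegree + 1), (G.coeff i).eval x * y ^ i := by
  simp [ev, Polynomial.eval_map, Polynomial.eval₂_eq_sum_range]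

def evd (G : Polynomial (Polynomial ℂ)) (x y : ℂ) : ℂ :=
  ∑ i ∈ Finset.range (G.natDegree + 1), (Polynomial.derivative (G.coeff i)).eval x * y ^ i

lemma ev_hasDerivAt (G : Polynomial (Polynomial ℂ)) (x y : ℂ) :
    HasDerivAt (fun x => ev G x y) (evd G x y) x := by
  simp only [ev_eq, evd]
  apply HasDerivAt.fun_sum
  intro i _
  exact ((G.coeff i).hasDerivAt x).mul_const _

lemma ev_cont (G : Polynomial (Polynomial ℂ)) : Continuous (fun p : ℂ × ℂ => ev G p.1 p.2) := by
  simp only [ev_eq]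
  refine continuous_finsetSum _ fun i _ => ?_
  exact ((G.coeff i).continuous.comp continuous_fst).mul (continuous_snd.pow i)

lemma evd_cont (G : Polynomial (Polynomial ℂ)) : Continuous (fun p : ℂ × ℂ => evd G p.1 p.2) := by
  simp only [evd]
  refine continuous_finsetSum _ fun i _ => ?_
  exact ((Polynomial.derivative (G.coeff i)).continuous.comp continuous_fst).mul (continuous_snd.pow i)

lemma diffInt (N D : Polynomial (Polynomial ℂ)) (x0 c : ℂ) (r δ : ℝ) (hr : 0 < r) (hδ : 0 < δ)
    (hD : ∀ x ∈ Metric.closedBall x0 δ, ∀ s ∈ Metric.sphere c r, ev D x s ≠ 0) :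
    DifferentiableAt ℂ (fun x => ∮ s in C(c, r), ev N x s / ev D x s) x0 := by
  have hcm : Continuous (circleMap c r) := continuous_circleMap c r
  have hdcm : Continuous (deriv (circleMap c r)) := by
    have : deriv (circleMap c r) = fun θ => circleMap 0 r θ * Complex.I := by
      funext θ; exact deriv_circleMap c r θ
    rw [this]; exact (continuous_circleMap 0 r).mul continuous_const
  have hmem : ∀ θ, circleMap c r θ ∈ Metric.sphere c r := fun θ => circleMap_mem_sphere c hr.le θ
  have hN2 : Continuous (fun p : ℂ × ℝ => ev N p.1 (circleMap c r p.2)) :=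
    (ev_cont N).comp (continuous_fst.prodMk (hcm.comp continuous_snd))
  have hD2 : Continuous (fun p : ℂ × ℝ => ev D p.1 (circleMap c r p.2)) :=
    (ev_cont D).comp (continuous_fst.prodMk (hcm.comp continuous_snd))
  have hN2' : Continuous (fun p : ℂ × ℝ => evd N p.1 (circleMap c r p.2)) :=
    (evd_cont N).comp (continuous_fst.prodMk (hcm.comp continuous_snd))
  have hD2' : Continuous (fun p : ℂ × ℝ => evd D p.1 (circleMap c r p.2)) :=
    (evd_cont D).comp (continuous_fst.prodMk (hcm.comp continuous_snd))
  have hsl : ∀ x : ℂ, Continuous (fun θ : ℝ => (x, θ)) := fun x => continuous_const.prodMk continuous_id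
  set F : ℂ → ℝ → ℂ := fun x θ => deriv (circleMap c r) θ •
    (ev N x (circleMap c r θ) / ev D x (circleMap c r θ)) with hF
  set F' : ℂ → ℝ → ℂ := fun x θ => deriv (circleMap c r) θ •
    ((evd N x (circleMap c r θ) * ev D x (circleMap c r θ) -
      ev N x (circleMap c r θ) * evd D x (circleMap c r θ)) / ev D x (circleMap c r θ) ^ 2) with hF'
  have hFc : ∀ x ∈ Metric.closedBall x0 δ, Continuous (F x) := by
    intro x hx
    have a1 : Continuous (fun θ => ev N x (circleMap c r θ)) := hN2.comp (hsl x)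
    have a2 : Continuous (fun θ => ev D x (circleMap c r θ)) := hD2.comp (hsl x)
    refine hdcm.smul (Continuous.div a1 a2 ?_)
    intro θ; exact hD x hx _ (hmem θ)
  have hF'c : ContinuousOn (fun p : ℂ × ℝ => F' p.1 p.2)
      (Metric.closedBall x0 δ ×ˢ Set.Icc 0 (2 * Real.pi)) := by
    refine ((hdcm.comp continuous_snd).continuousOn).smul (ContinuousOn.div ?_ ?_ ?_)
    · exact ((hN2'.mul hD2).sub (hN2.mul hD2')).continuousOn
    · exact (hD2.pow 2).continuousOn
    · intro p hp; exact pow_ne_zero 2 (hD _ hp.1 _ (hmem _))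
  obtain ⟨M, hM⟩ := ((isCompact_closedBall x0 δ).prod isCompact_Icc).exists_bound_of_continuousOn hF'c
  have hx0 : x0 ∈ Metric.closedBall x0 δ := Metric.mem_closedBall_self hδ.le
  have hF'0 : Continuous (F' x0) := by
    have a1 : Continuous (fun θ => ev N x0 (circleMap c r θ)) := hN2.comp (hsl x0)
    have a2 : Continuous (fun θ => ev D x0 (circleMap c r θ)) := hD2.comp (hsl x0)
    have a3 : Continuous (fun θ => evd N x0 (circleMap c r θ)) := hN2'.comp (hsl x0)
    have a4 : Continuous (fun θ => evd D x0 (circleMap c r θ)) := hD2'.comp (hsl x0)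
    refine hdcm.smul (Continuous.div ((a3.mul a2).sub (a1.mul a4)) (a2.pow 2) ?_)
    intro θ; exact pow_ne_zero 2 (hD x0 hx0 _ (hmem θ))
  have := intervalIntegral.hasDerivAt_integral_of_dominated_loc_of_deriv_le
    (μ := MeasureTheory.volume) (a := 0) (b := 2 * Real.pi) (F := F) (F' := F') (x₀ := x0)
    (s := Metric.closedBall x0 δ) (bound := fun _ => M) (Metric.closedBall_mem_nhds x0 hδ)
    (by
      filter_upwards [Metric.closedBall_mem_nhds x0 hδ] with x hx
      exact (hFc x hx).aestronglyMeasurable)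
    ((hFc x0 hx0).intervalIntegrable _ _) hF'0.aestronglyMeasurable
    (by
      refine Filter.Eventually.of_forall fun θ hθ x hx => hM (x, θ) ⟨hx, ?_⟩
      rw [Set.uIoc_of_le (by positivity)] at hθ
      exact ⟨hθ.1.le, hθ.2⟩)
    (intervalIntegrable_const)
    (by
      refine Filter.Eventually.of_forall fun θ hθ x hx => ?_
      exact ((ev_hasDerivAt N x _).div (ev_hasDerivAt D x _) (hD x hx _ (hmem θ))).const_smul
        (deriv (circleMap c r) θ))
  exact this.2.differentiableAt

lemma circ_in {c y : ℂ} {r : ℝ} (hr : 0 < r) (k : ℕ) (hy : dist y c < r) :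
    (∮ s in C(c, r), s ^ k * (1 / (s - y))) = 2 * Real.pi * Complex.I * y ^ k := by
  have := DiffContOnCl.circleIntegral_sub_inv_smul (f := fun s : ℂ => s ^ k) (c := c) (w := y) (R := r)
    (Differentiable.diffContOnCl (by fun_prop)) (Metric.mem_ball.mpr hy)
  rw [smul_eq_mul] at this
  rw [← this]
  congr 1; funext s
  simp [mul_comm]

lemma circ_out {c y : ℂ} {r : ℝ} (hr : 0 < r) (k : ℕ) (hy : r < dist y c) :
    (∮ s in C(c, r), s ^ k * (1 / (s - y))) = 0 := by
  have hne : ∀ s ∈ Metric.closedBall c r, s - y ≠ 0 := by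
    intro s hs h0
    rw [sub_eq_zero] at h0
    subst h0
    exact absurd (Metric.mem_closedBall.mp hs) (not_le.mpr hy)
  apply Complex.circleIntegral_eq_zero_of_differentiable_on_off_countable hr.le Set.countable_empty
  · refine (continuous_pow k).continuousOn.mul (continuousOn_const.div ?_ hne)
    fun_prop
  · intro s hs
    have := hne s (Metric.ball_subset_closedBall hs.1)
    have h1 : DifferentiableAt ℂ (fun s : ℂ => s - y) s := by fun_prop
    exact (by fun_prop : DifferentiableAt ℂ (fun s : ℂ => s ^ k) s).mul
      ((differentiableAt_const _).div h1 this)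

lemma circ_sum (c : ℂ) (r : ℝ) (hr : 0 < r) (k : ℕ) (m : Multiset ℂ)
    (hm : ∀ y ∈ m, dist y c ≠ r) :
    CircleIntegrable (fun s => s ^ k * (m.map fun z => 1 / (s - z)).sum) c r ∧
    (∮ s in C(c, r), s ^ k * (m.map fun z => 1 / (s - z)).sum)
      = 2 * Real.pi * Complex.I * (m.map fun y => if dist y c < r then y ^ k else 0).sum := by
  induction m using Multiset.induction_on with
  | empty => simp [CircleIntegrable, circleIntegral]
  | cons a m ih =>
    have ih' := ih (fun y hy => hm y (Multiset.mem_cons_of_mem hy))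
    have ha := hm a (Multiset.mem_cons_self a m)
    have hint : CircleIntegrable (fun s => s ^ k * (1 / (s - a))) c r := by
      apply ContinuousOn.circleIntegrable hr.le
      refine (continuous_pow k).continuousOn.mul (continuousOn_const.div (by fun_prop) ?_)
      intro s hs h0
      rw [sub_eq_zero] at h0
      subst h0
      exact ha hs
    simp only [Multiset.map_cons, Multiset.sum_cons, mul_add]
    refine ⟨hint.add ih'.1, ?_⟩
    rw [circleIntegral.integral_add hint ih'.1, ih'.2]
    congr 1
    split_ifs with h
    · exact circ_in hr k h
    · rw [circ_out hr k (lt_of_le_of_ne (not_lt.mp h) (Ne.symm ha)), mul_zero]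

lemma poly_growth (N : ℕ) : ∀ (f : ℂ → ℂ) (C : ℝ), Differentiable ℂ f →
    (∀ z, ‖f z‖ ≤ C * (1 + ‖z‖) ^ N) → ∃ p : Polynomial ℂ, ∀ z, f z = p.eval z := by
  induction N with
  | zero =>
    intro f C hf hb
    refine ⟨Polynomial.C (f 0), fun z => ?_⟩
    rw [Polynomial.eval_C]
    apply hf.apply_eq_apply_of_bounded
    rw [isBounded_iff_forall_norm_le]
    refine ⟨C, ?_⟩
    rintro _ ⟨w, rfl⟩
    simpa using hb w
  | succ N ih =>
    intro f C hf hb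
    have hd : Differentiable ℂ (dslope f 0) := by
      intro z
      have := (Complex.differentiableOn_dslope (s := Set.univ) (c := 0) (f := f) (by simp)).mpr
        hf.differentiableOn
      exact (this z trivial).differentiableAt (by simp)
    obtain ⟨M, hM⟩ := (isCompact_closedBall (0 : ℂ) 1).exists_bound_of_continuousOn
      hd.continuous.continuousOn
    have hC : 0 ≤ C := by
      have := (norm_nonneg _).trans (hb 0); simpa using this
    have hM0 : 0 ≤ M := (norm_nonneg _).trans (hM 0 (by simp))
    obtain ⟨p, hp⟩ := ih (dslope f 0) (M + 4 * C) hd (by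
      intro z
      have h1 : 1 ≤ (1 + ‖z‖) ^ N := one_le_pow₀ (by linarith [norm_nonneg z])
      by_cases hz : ‖z‖ ≤ 1
      · have := hM z (by simpa using hz)
        nlinarith
      · push Not at hz
        have hz0 : z ≠ 0 := by rintro rfl; simp at hz; linarith
        rw [dslope_of_ne _ hz0, slope_def_field, norm_div, sub_zero, div_le_iff₀ (by linarith)]
        have h2 : ‖f z - f 0‖ ≤ ‖f z‖ + ‖f 0‖ := norm_sub_le _ _
        have h3 := hb z
        have h4 : ‖f 0‖ ≤ C := by simpa using hb 0
        have h5 : C ≤ C * (1 + ‖z‖) ^ (N + 1) := by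
          have : 1 ≤ (1 + ‖z‖) ^ (N + 1) := one_le_pow₀ (by linarith [norm_nonneg z])
          nlinarith
        have h6 : C * (1 + ‖z‖) ^ (N + 1) ≤ 2 * C * ((1 + ‖z‖) ^ N * ‖z‖) := by
          rw [pow_succ]
          have : C * (1 + ‖z‖) ^ N * (1 + ‖z‖) ≤ C * (1 + ‖z‖) ^ N * (2 * ‖z‖) := by
            apply mul_le_mul_of_nonneg_left (by linarith) (by positivity)
          linarith
        have h7 : 0 ≤ M * ((1 + ‖z‖) ^ N * ‖z‖) := by positivity
        linarith)
    refine ⟨Polynomial.C (f 0) + Polynomial.X * p, fun z => ?_⟩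
    have := sub_smul_dslope f 0 z
    rw [hp] at this
    simp at this
    simp [this]

def PG (g : ℂ → ℝ) : Prop := ∃ (C : ℝ) (N : ℕ), 0 ≤ C ∧ ∀ x, g x ≤ C * (1 + ‖x‖) ^ N

lemma PG.add {g h : ℂ → ℝ} (hg : PG g) (hh : PG h) : PG (fun x => g x + h x) := by
  obtain ⟨C, N, hC, hg⟩ := hg
  obtain ⟨C', N', hC', hh⟩ := hh
  refine ⟨C + C', N + N', by positivity, fun x => ?_⟩
  have h1 : (1 + ‖x‖) ^ N ≤ (1 + ‖x‖) ^ (N + N') :=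
    pow_le_pow_right₀ (by linarith [norm_nonneg x]) (by omega)
  have h2 : (1 + ‖x‖) ^ N' ≤ (1 + ‖x‖) ^ (N + N') :=
    pow_le_pow_right₀ (by linarith [norm_nonneg x]) (by omega)
  have := hg x; have := hh x
  nlinarith

lemma PG.const (c : ℝ) (hc : 0 ≤ c) : PG (fun _ => c) := ⟨c, 0, hc, by simp⟩

lemma PG.sum {ι : Type*} (s : Finset ι) (g : ι → ℂ → ℝ) (h : ∀ i ∈ s, PG (g i)) :
    PG (fun x => ∑ i ∈ s, g i x) := by
  induction s using Finset.induction_on with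
  | empty => simpa using PG.const 0 le_rfl
  | insert a s ha ih =>
    simp only [Finset.sum_insert ha]
    exact (h a (by simp)).add (ih fun i hi => h i (by simp [hi]))

lemma PG.poly (p : Polynomial ℂ) : PG (fun x => ‖p.eval x‖) := by
  have : PG (fun x => ∑ i ∈ Finset.range (p.natDegree + 1), ‖p.coeff i * x ^ i‖) := by
    apply PG.sum
    intro i _
    refine ⟨‖p.coeff i‖, i, norm_nonneg _, fun x => ?_⟩
    beta_reduce
    rw [norm_mul, norm_pow]
    gcongr
    linarith
  obtain ⟨C, N, hC, h⟩ := this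
  refine ⟨C, N, hC, fun x => le_trans ?_ (h x)⟩
  beta_reduce
  rw [Polynomial.eval_eq_sum_range]
  exact norm_sum_le _ _

def Rb (G : Polynomial (Polynomial ℂ)) (x : ℂ) : ℝ :=
  1 + ∑ i ∈ Finset.range G.natDegree, ‖(G.coeff i).eval x‖

lemma Rb_cont (G : Polynomial (Polynomial ℂ)) : Continuous (Rb G) := by
  unfold Rb
  refine continuous_const.add (continuous_finsetSum _ fun i _ => ?_)
  exact (G.coeff i).continuous.norm

lemma Rb_PG (G : Polynomial (Polynomial ℂ)) : PG (Rb G) := by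
  unfold Rb
  exact (PG.const 1 zero_le_one).add (PG.sum _ _ fun i _ => PG.poly _)

lemma Rb_one (G : Polynomial (Polynomial ℂ)) (x : ℂ) : 1 ≤ Rb G x := by
  unfold Rb
  have : 0 ≤ ∑ i ∈ Finset.range G.natDegree, ‖(G.coeff i).eval x‖ := by positivity
  linarith

lemma root_bound {G : Polynomial (Polynomial ℂ)} (hG : G.Monic) {x y : ℂ} (h : ev G x y = 0) :
    ‖y‖ ≤ Rb G x := by
  by_cases hy : ‖y‖ ≤ 1
  · exact hy.trans (Rb_one G x)
  push Not at hy
  rw [ev_eq, Finset.sum_range_succ] at h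
  have h1 : G.coeff G.natDegree = 1 := hG
  rw [h1] at h
  simp only [Polynomial.eval_one, one_mul] at h
  obtain ⟨m, hm⟩ | h0 : (∃ m, G.natDegree = m + 1) ∨ G.natDegree = 0 := by
    cases hn : G.natDegree with
    | zero => right; rfl
    | succ m => left; exact ⟨m, rfl⟩
  · have h2 : y ^ G.natDegree = - ∑ i ∈ Finset.range G.natDegree, (G.coeff i).eval x * y ^ i := by
      linear_combination h
    have h3 : ‖y‖ ^ G.natDegree ≤ (∑ i ∈ Finset.range G.natDegree, ‖(G.coeff i).eval x‖) * ‖y‖ ^ m := by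
      rw [← norm_pow, h2, norm_neg, Finset.sum_mul]
      refine (norm_sum_le _ _).trans (Finset.sum_le_sum fun i hi => ?_)
      rw [norm_mul, norm_pow]
      have : i ≤ m := by have := Finset.mem_range.mp hi; omega
      exact mul_le_mul_of_nonneg_left (pow_le_pow_right₀ hy.le this) (norm_nonneg _)
    have h4 : ‖y‖ ^ G.natDegree = ‖y‖ * ‖y‖ ^ m := by rw [hm, pow_succ]; ring
    rw [h4] at h3
    have h5 := le_of_mul_le_mul_right h3 (by positivity)
    unfold Rb
    linarith
  · rw [h0] at h; simp at h

def rt (G : Polynomial (Polynomial ℂ)) (x : ℂ) : Multiset ℂ :=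
  (G.map (Polynomial.evalRingHom x)).roots

lemma mem_rt {G : Polynomial (Polynomial ℂ)} (hG : G.Monic) {x y : ℂ} : y ∈ rt G x ↔ ev G x y = 0 := by
  unfold rt ev
  rw [Polynomial.mem_roots (hG.map _).ne_zero]; rfl

lemma card_rt {G : Polynomial (Polynomial ℂ)} (hG : G.Monic) (x : ℂ) : (rt G x).card = G.natDegree := by
  unfold rt
  rw [IsAlgClosed.card_roots_eq_natDegree, hG.natDegree_map]

def pk (G : Polynomial (Polynomial ℂ)) (A : Set (ℂ × ℂ)) (k : ℕ) (x : ℂ) : ℂ :=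
  ((rt G x).map fun y => if (x, y) ∈ A then y ^ k else 0).sum

lemma circ_rt {G : Polynomial (Polynomial ℂ)} (hG : G.Monic) (x c : ℂ) (r : ℝ) (hr : 0 < r) (k : ℕ)
    (h : ∀ s ∈ Metric.sphere c r, ev G x s ≠ 0) :
    (∮ s in C(c, r), ev (Polynomial.X ^ k * Polynomial.derivative G) x s / ev G x s)
      = 2 * Real.pi * Complex.I * ((rt G x).map fun y => if dist y c < r then y ^ k else 0).sum := by
  rw [← (circ_sum c r hr k (rt G x) (by
    intro y hy hd
    exact h y hd ((mem_rt hG).mp hy))).2]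
  apply circleIntegral.integral_congr hr.le
  intro s hs
  have h1 := (IsAlgClosed.splits (G.map (Polynomial.evalRingHom x))).eval_derivative_div_eval_of_ne_zero
    (h s hs)
  simp only [rt]
  rw [← h1]
  simp [ev, Polynomial.derivative_map, mul_div_assoc]

lemma compact_zero {G : Polynomial (Polynomial ℂ)} (hG : G.Monic) (x0 : ℂ) (K : Set (ℂ × ℂ))
    (hK : IsClosed K) (hKG : ∀ x y, (x, y) ∈ K → ev G x y = 0) (h0 : ∀ y, (x0, y) ∉ K) :
    ∃ δ > 0, ∀ x ∈ Metric.closedBall x0 δ, ∀ y, (x, y) ∉ K := by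
  obtain ⟨M, hM⟩ := (isCompact_closedBall x0 1).exists_bound_of_continuousOn (Rb_cont G).continuousOn
  have hc : IsCompact (K ∩ (Metric.closedBall x0 1 ×ˢ Metric.closedBall (0 : ℂ) M)) :=
    ((isCompact_closedBall x0 1).prod (isCompact_closedBall 0 M)).inter_left hK
  have him := (hc.image continuous_fst).isClosed
  have hx0 : x0 ∈ (Prod.fst '' (K ∩ (Metric.closedBall x0 1 ×ˢ Metric.closedBall (0 : ℂ) M)))ᶜ := by
    rintro ⟨⟨x, y⟩, ⟨h1, _⟩, rfl⟩
    exact h0 y h1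
  obtain ⟨ε, hε, hb⟩ := Metric.isOpen_iff.mp him.isOpen_compl x0 hx0
  refine ⟨min (ε / 2) 1, by positivity, ?_⟩
  intro x hx y hxy
  have hx1 : dist x x0 ≤ 1 := (Metric.mem_closedBall.mp hx).trans (min_le_right _ _)
  have hx2 : dist x x0 < ε := by
    have := (Metric.mem_closedBall.mp hx).trans (min_le_left _ _); linarith
  apply hb (Metric.mem_ball.mpr hx2)
  refine ⟨(x, y), ⟨hxy, hx1, ?_⟩, rfl⟩
  rw [mem_closedBall_zero_iff]
  have := hM x hx1
  exact (root_bound hG (hKG x y hxy)).trans ((le_abs_self _).trans this)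

lemma exists_sep (T : Finset ℂ) : ∃ r > 0, ∀ a ∈ T, ∀ b ∈ T, a ≠ b → 2 * r < dist a b := by
  induction T using Finset.induction_on with
  | empty => exact ⟨1, one_pos, by simp⟩
  | insert c T hc ih =>
    obtain ⟨r, hr, h⟩ := ih
    have : ∃ r' > 0, ∀ a ∈ T, 2 * r' < dist a c := by
      rcases T.eq_empty_or_nonempty with rfl | hT
      · exact ⟨1, one_pos, by simp⟩
      · obtain ⟨a, ha, hmin⟩ := T.exists_min_image (fun a => dist a c) hT
        have hp : 0 < dist a c := dist_pos.mpr (by rintro rfl; exact hc ha)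
        exact ⟨dist a c / 3, by positivity, fun b hb => by have := hmin b hb; linarith⟩
    obtain ⟨r', hr', h'⟩ := this
    refine ⟨min r r', lt_min hr hr', ?_⟩
    have h1 := min_le_left r r'
    have h2 := min_le_right r r'
    intro a ha b hb hab
    rw [Finset.mem_insert] at ha hb
    rcases ha with rfl | ha <;> rcases hb with rfl | hb
    · exact absurd rfl hab
    · have := h' b hb; rw [dist_comm]; linarith
    · have := h' a ha; linarith
    · have := h a ha b hb hab; linarith

lemma sum_swap (T : Finset ℂ) (m : Multiset ℂ) (f : ℂ → ℂ → ℂ) :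
    ∑ c ∈ T, (m.map fun y => f c y).sum = (m.map fun y => ∑ c ∈ T, f c y).sum := by
  induction m using Multiset.induction_on with
  | empty => simp
  | cons a m ih => simp [Finset.sum_add_distrib, ih]

lemma pk_diff {G : Polynomial (Polynomial ℂ)} (hG : G.Monic) {A B : Set (ℂ × ℂ)} (hA : IsClosed A)
    (hB : IsClosed B) (hAB : ∀ x y, ev G x y = 0 ↔ (x, y) ∈ A ∨ (x, y) ∈ B)
    (hd : ∀ p, p ∈ A → p ∉ B) (k : ℕ) : Differentiable ℂ (pk G A k) := by
  intro x0
  obtain ⟨r, hr, hsep⟩ := exists_sep (rt G x0).toFinset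
  set T := (rt G x0).toFinset.filter (fun y => (x0, y) ∈ A) with hT
  have hmemT : ∀ y, y ∈ T ↔ (x0, y) ∈ A := by
    intro y
    rw [hT, Finset.mem_filter, Multiset.mem_toFinset, mem_rt hG, hAB]
    tauto
  have hmemR : ∀ y, y ∈ (rt G x0).toFinset ↔ (x0, y) ∈ A ∨ (x0, y) ∈ B := by
    intro y
    rw [Multiset.mem_toFinset, mem_rt hG, hAB]
  have hcl1 : IsClosed {p : ℂ × ℂ | ∀ y0 ∈ T, r ≤ dist p.2 y0} := by
    simp only [Set.ofPred_forall]
    refine isClosed_iInter fun y0 => isClosed_iInter fun _ => ?_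
    exact isClosed_le continuous_const (by fun_prop)
  have hcl2 : IsClosed {p : ℂ × ℂ | ∃ y0 ∈ T, dist p.2 y0 ≤ r} := by
    have : {p : ℂ × ℂ | ∃ y0 ∈ T, dist p.2 y0 ≤ r} = ⋃ y0 ∈ T, {p : ℂ × ℂ | dist p.2 y0 ≤ r} := by
      ext p; simp
    rw [this]
    refine T.finite_toSet.isClosed_biUnion fun y0 _ => ?_
    exact isClosed_le (by fun_prop) continuous_const
  obtain ⟨δ1, hδ1, h1⟩ := compact_zero hG x0 (A ∩ {p : ℂ × ℂ | ∀ y0 ∈ T, r ≤ dist p.2 y0})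
    (hA.inter hcl1) (fun x y h => (hAB x y).mpr (Or.inl h.1)) (by
      rintro y ⟨hyA, hy⟩
      have := hy y ((hmemT y).mpr hyA)
      simp at this; linarith)
  obtain ⟨δ2, hδ2, h2⟩ := compact_zero hG x0 (B ∩ {p : ℂ × ℂ | ∃ y0 ∈ T, dist p.2 y0 ≤ r})
    (hB.inter hcl2) (fun x y h => (hAB x y).mpr (Or.inr h.1)) (by
      rintro y ⟨hyB, y0, hy0, hy⟩
      have hy0A := (hmemT y0).mp hy0
      have hne : y ≠ y0 := by rintro rfl; exact hd _ hy0A hyB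
      have := hsep y ((hmemR y).mpr (Or.inr hyB)) y0 ((hmemR y0).mpr (Or.inl hy0A)) hne
      simp only at hy
      linarith)
  set δ := min δ1 δ2 with hδ
  have hδ0 : 0 < δ := lt_min hδ1 hδ2
  have hAx : ∀ x ∈ Metric.closedBall x0 δ, ∀ y, (x, y) ∈ A → ∃ y0 ∈ T, dist y y0 < r := by
    intro x hx y hxy
    by_contra hcon
    push Not at hcon
    exact h1 x (Metric.closedBall_subset_closedBall (min_le_left _ _) hx) y ⟨hxy, hcon⟩
  have hBx : ∀ x ∈ Metric.closedBall x0 δ, ∀ y, (x, y) ∈ B → ∀ y0 ∈ T, r < dist y y0 := by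
    intro x hx y hxy y0 hy0
    by_contra hcon
    push Not at hcon
    exact h2 x (Metric.closedBall_subset_closedBall (min_le_right _ _) hx) y ⟨hxy, y0, hy0, hcon⟩
  have huniq : ∀ y : ℂ, ∀ y0 ∈ T, ∀ y1 ∈ T, dist y y0 < r → dist y y1 ≤ r → y0 = y1 := by
    intro y y0 hy0 y1 hy1 h h'
    by_contra hne
    have := hsep y0 (Finset.mem_of_mem_filter _ hy0) y1 (Finset.mem_of_mem_filter _ hy1) hne
    have := dist_triangle_left y0 y1 y
    linarith
  have hnv : ∀ y0 ∈ T, ∀ x ∈ Metric.closedBall x0 δ, ∀ s ∈ Metric.sphere y0 r, ev G x s ≠ 0 := by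
    intro y0 hy0 x hx s hs h0
    have hs' : dist s y0 = r := hs
    rcases (hAB x s).mp h0 with h | h
    · obtain ⟨y1, hy1, hlt⟩ := hAx x hx s h
      have := huniq s y1 hy1 y0 hy0 hlt hs'.le
      subst this
      linarith
    · have := hBx x hx s h y0 hy0
      linarith
  have hformula : ∀ x ∈ Metric.closedBall x0 δ, pk G A k x = (2 * Real.pi * Complex.I)⁻¹ *
      ∑ y0 ∈ T, ∮ s in C(y0, r), ev (Polynomial.X ^ k * Polynomial.derivative G) x s / ev G x s := by
    intro x hx
    rw [Finset.sum_congr rfl (fun y0 hy0 => circ_rt hG x y0 r hr k (hnv y0 hy0 x hx)),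
      ← Finset.mul_sum, ← mul_assoc, inv_mul_cancel₀ Complex.two_pi_I_ne_zero, one_mul,
      sum_swap, pk]
    congr 1
    apply Multiset.map_congr rfl
    intro y hy
    rcases (hAB x y).mp ((mem_rt hG).mp hy) with h | h
    · obtain ⟨y0, hy0, hlt⟩ := hAx x hx y h
      rw [if_pos h, Finset.sum_eq_single y0, if_pos hlt]
      · intro y1 hy1 hne
        rw [if_neg]
        intro hlt'
        exact hne (huniq y y1 hy1 y0 hy0 hlt' hlt.le)
      · intro hn; exact absurd hy0 hn
    · rw [if_neg (fun hA' => hd _ hA' h), Finset.sum_eq_zero]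
      intro y0 hy0
      rw [if_neg (not_lt.mpr (hBx x hx y h y0 hy0).le)]
  have hdiff : DifferentiableAt ℂ (fun x => (2 * Real.pi * Complex.I)⁻¹ *
      ∑ y0 ∈ T, ∮ s in C(y0, r), ev (Polynomial.X ^ k * Polynomial.derivative G) x s / ev G x s) x0 := by
    apply DifferentiableAt.const_mul
    apply DifferentiableAt.fun_sum
    intro y0 hy0
    exact diffInt _ _ x0 y0 r δ hr hδ0 (hnv y0 hy0)
  apply hdiff.congr_of_eventuallyEq
  filter_upwards [Metric.closedBall_mem_nhds x0 hδ0] with x hx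
  exact hformula x hx

def sb (G : Polynomial (Polynomial ℂ)) (A : Set (ℂ × ℂ)) (x : ℂ) : Multiset ℂ :=
  (rt G x).filter (fun y => (x, y) ∈ A)

lemma sum_filter_map (m : Multiset ℂ) (p : ℂ → Prop) (f : ℂ → ℂ) :
    ((m.filter p).map f).sum = (m.map fun y => if p y then f y else 0).sum := by
  induction m using Multiset.induction_on with
  | empty => simp
  | cons a m ih =>
    by_cases h : p a
    · simp [h, ih]
    · simp [h, ih]

lemma pk_eq (G : Polynomial (Polynomial ℂ)) (A : Set (ℂ × ℂ)) (k : ℕ) (x : ℂ) :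
    pk G A k x = ((sb G A x).map (· ^ k)).sum := by
  rw [sb, sum_filter_map]; rfl

lemma norm_sum_map_le (m : Multiset ℂ) (f : ℂ → ℂ) (M : ℝ) (h : ∀ y ∈ m, ‖f y‖ ≤ M) :
    ‖(m.map f).sum‖ ≤ m.card * M := by
  induction m using Multiset.induction_on with
  | empty => simp
  | cons a m ih =>
    have h1 := ih fun y hy => h y (Multiset.mem_cons_of_mem hy)
    have h2 := h a (Multiset.mem_cons_self a m)
    simp only [Multiset.map_cons, Multiset.sum_cons, Multiset.card_cons]
    push_cast
    have := norm_add_le (f a) (m.map f).sum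
    linarith

lemma pk_bound {G : Polynomial (Polynomial ℂ)} (hG : G.Monic) (A : Set (ℂ × ℂ)) (k : ℕ) (x : ℂ) :
    ‖pk G A k x‖ ≤ G.natDegree * Rb G x ^ k := by
  rw [← card_rt hG x]
  apply norm_sum_map_le
  intro y hy
  have := root_bound hG ((mem_rt hG).mp hy)
  split_ifs
  · rw [norm_pow]
    gcongr
  · simp only [norm_zero]
    exact pow_nonneg (by linarith [Rb_one G x]) k

lemma pk_poly {G : Polynomial (Polynomial ℂ)} (hG : G.Monic) {A B : Set (ℂ × ℂ)} (hA : IsClosed A)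
    (hB : IsClosed B) (hAB : ∀ x y, ev G x y = 0 ↔ (x, y) ∈ A ∨ (x, y) ∈ B)
    (hd : ∀ p, p ∈ A → p ∉ B) (k : ℕ) : ∃ p : Polynomial ℂ, ∀ x, pk G A k x = p.eval x := by
  obtain ⟨C, N, hC, h⟩ := Rb_PG G
  refine poly_growth (N * k) (pk G A k) (G.natDegree * C ^ k) (pk_diff hG hA hB hAB hd k) ?_
  intro x
  refine (pk_bound hG A k x).trans ?_
  rw [mul_assoc, pow_mul, ← mul_pow]
  have := h x
  have := Rb_one G x
  gcongr

lemma sb_card {G : Polynomial (Polynomial ℂ)} (hG : G.Monic) {A B : Set (ℂ × ℂ)} (hA : IsClosed A)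
    (hB : IsClosed B) (hAB : ∀ x y, ev G x y = 0 ↔ (x, y) ∈ A ∨ (x, y) ∈ B)
    (hd : ∀ p, p ∈ A → p ∉ B) (x : ℂ) : (sb G A x).card = (sb G A 0).card := by
  have h := (pk_diff hG hA hB hAB hd 0).apply_eq_apply_of_bounded (by
    rw [isBounded_iff_forall_norm_le]
    refine ⟨G.natDegree, ?_⟩
    rintro _ ⟨w, rfl⟩
    simpa using pk_bound hG A 0 w) x 0
  rw [pk_eq, pk_eq] at h
  simp at h
  exact h

lemma newton (s : Multiset ℂ) (j : ℕ) : (j : ℂ) * s.esymm j = (-1) ^ (j + 1) *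
    ∑ a ∈ Finset.HasAntidiagonal.antidiagonal j with a.1 < j, (-1) ^ a.1 * s.esymm a.1 * (s.map (· ^ a.2)).sum := by
  obtain ⟨n, f, rfl⟩ : ∃ (n : ℕ) (f : Fin n → ℂ), Finset.univ.val.map f = s := by
    induction s using Quotient.inductionOn with
    | h l =>
      refine ⟨l.length, l.get, ?_⟩
      simp
  have h := congrArg (MvPolynomial.aeval f) (MvPolynomial.mul_esymm_eq_sum (Fin n) ℂ j)
  simp only [map_mul, map_natCast, map_pow, map_neg, map_one, map_sum,
    MvPolynomial.aeval_esymm_eq_multiset_esymm] at h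
  rw [h]
  congr 1
  apply Finset.sum_congr rfl
  intro a _
  congr 1
  rw [Multiset.map_map]
  simp only [MvPolynomial.psum, map_sum, map_pow, MvPolynomial.aeval_X]
  rfl

lemma esymm_poly {G : Polynomial (Polynomial ℂ)} (hG : G.Monic) {A B : Set (ℂ × ℂ)} (hA : IsClosed A)
    (hB : IsClosed B) (hAB : ∀ x y, ev G x y = 0 ↔ (x, y) ∈ A ∨ (x, y) ∈ B)
    (hd : ∀ p, p ∈ A → p ∉ B) (j : ℕ) : ∃ p : Polynomial ℂ, ∀ x, (sb G A x).esymm j = p.eval x := by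
  choose q hq using pk_poly hG hA hB hAB hd
  induction j using Nat.strong_induction_on with
  | _ j ih =>
    by_cases hj : j = 0
    · subst hj
      exact ⟨1, fun x => by simp [Multiset.esymm]⟩
    choose! e he using ih
    refine ⟨Polynomial.C (j : ℂ)⁻¹ * ((-1) ^ (j + 1) *
      ∑ a ∈ Finset.HasAntidiagonal.antidiagonal j with a.1 < j, (-1) ^ a.1 * e a.1 * q a.2), fun x => ?_⟩
    have hj' : (j : ℂ) ≠ 0 := Nat.cast_ne_zero.mpr hj
    have h := newton (sb G A x) j
    rw [eq_comm, ← inv_mul_eq_iff_eq_mul₀ hj'] at h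
    rw [← h]
    simp only [Polynomial.eval_mul, Polynomial.eval_C, Polynomial.eval_pow, Polynomial.eval_neg,
      Polynomial.eval_one, Polynomial.eval_finsetSum]
    congr 2
    apply Finset.sum_congr rfl
    intro a ha
    rw [← he a.1 (Finset.mem_filter.mp ha).2, ← hq, pk_eq]

lemma factor_half {G : Polynomial (Polynomial ℂ)} (hG : G.Monic) {A B : Set (ℂ × ℂ)} (hA : IsClosed A)
    (hB : IsClosed B) (hAB : ∀ x y, ev G x y = 0 ↔ (x, y) ∈ A ∨ (x, y) ∈ B)
    (hd : ∀ p, p ∈ A → p ∉ B) : ∃ P : Polynomial (Polynomial ℂ), ∀ x,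
      P.map (Polynomial.evalRingHom x) = ((sb G A x).map fun y => Polynomial.X - Polynomial.C y).prod := by
  choose e he using esymm_poly hG hA hB hAB hd
  refine ⟨∑ j ∈ Finset.range ((sb G A 0).card + 1),
    (-1) ^ j * (Polynomial.C (e j) * Polynomial.X ^ ((sb G A 0).card - j)), fun x => ?_⟩
  rw [Multiset.prod_X_sub_X_eq_sum_esymm, sb_card hG hA hB hAB hd x, Polynomial.map_sum]
  apply Finset.sum_congr rfl
  intro j _
  simp [he]

lemma factor {G : Polynomial (Polynomial ℂ)} (hG : G.Monic) {A B : Set (ℂ × ℂ)} (hA : IsClosed A)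
    (hB : IsClosed B) (hAB : ∀ x y, ev G x y = 0 ↔ (x, y) ∈ A ∨ (x, y) ∈ B)
    (hd : ∀ p, p ∈ A → p ∉ B) : ∃ P Q : Polynomial (Polynomial ℂ), G = P * Q ∧
      (∀ x y, ev P x y = 0 ↔ (x, y) ∈ A) ∧ (∀ x y, ev Q x y = 0 ↔ (x, y) ∈ B) := by
  have hBA : ∀ x y, ev G x y = 0 ↔ (x, y) ∈ B ∨ (x, y) ∈ A := fun x y => by rw [hAB]; tauto
  have hd' : ∀ p, p ∈ B → p ∉ A := fun p h1 h2 => hd p h2 h1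
  obtain ⟨P, hP⟩ := factor_half hG hA hB hAB hd
  obtain ⟨Q, hQ⟩ := factor_half hG hB hA hBA hd'
  refine ⟨P, Q, ?_, ?_, ?_⟩
  · have key : ∀ x, G.map (Polynomial.evalRingHom x) = (P * Q).map (Polynomial.evalRingHom x) := by
      intro x
      rw [Polynomial.map_mul, hP, hQ, ← Multiset.prod_add, ← Multiset.map_add]
      have : sb G A x + sb G B x = rt G x := by
        have e : sb G B x = (rt G x).filter (fun y => ¬ (x, y) ∈ A) := by
          apply Multiset.filter_congr
          intro y hy
          have := (hAB x y).mp ((mem_rt hG).mp hy)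
          have := hd (x, y)
          tauto
        rw [e, sb, Multiset.filter_add_not]
      rw [this]
      have h := (IsAlgClosed.splits (G.map (Polynomial.evalRingHom x))).eq_prod_roots
      rw [(hG.map (Polynomial.evalRingHom x)).leadingCoeff] at h
      rw [map_one, one_mul] at h
      exact h
    ext1 i
    apply Polynomial.funext
    intro x
    have := congrArg (fun p => Polynomial.coeff p i) (key x)
    simp only [Polynomial.coeff_map] at this
    exact this
  · intro x y
    have : ev P x y = 0 ↔ y ∈ sb G A x := by
      rw [ev, hP, Polynomial.eval_multiset_prod, Multiset.prod_eq_zero_iff]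
      simp [sub_eq_zero]
    rw [this, sb, Multiset.mem_filter, mem_rt hG, hAB]
    tauto
  · intro x y
    have : ev Q x y = 0 ↔ y ∈ sb G B x := by
      rw [ev, hQ, Polynomial.eval_multiset_prod, Multiset.prod_eq_zero_iff]
      simp [sub_eq_zero]
    rw [this, sb, Multiset.mem_filter, mem_rt hG, hAB]
    tauto

def Phi (t : ℂ) : MvPolynomial (Fin 2) ℂ →+* Polynomial (Polynomial ℂ) :=
  MvPolynomial.eval₂Hom (Polynomial.C.comp Polynomial.C)
    ![Polynomial.C Polynomial.X + Polynomial.C (Polynomial.C t) * Polynomial.X, Polynomial.X]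

def Psi (t : ℂ) : Polynomial (Polynomial ℂ) →+* MvPolynomial (Fin 2) ℂ :=
  Polynomial.eval₂RingHom (Polynomial.eval₂RingHom MvPolynomial.C
    (MvPolynomial.X 0 - MvPolynomial.C t * MvPolynomial.X 1)) (MvPolynomial.X 1)

def evHom (x y : ℂ) : Polynomial (Polynomial ℂ) →+* ℂ :=
  (Polynomial.evalRingHom y).comp (Polynomial.mapRingHom (Polynomial.evalRingHom x))

lemma evHom_apply (x y : ℂ) (G) : evHom x y G = ev G x y := rfl

lemma Psi_Phi (t : ℂ) (f : MvPolynomial (Fin 2) ℂ) : Psi t (Phi t f) = f := by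
  have : (Psi t).comp (Phi t) = RingHom.id _ := by
    apply MvPolynomial.ringHom_ext
    · intro r; simp [Psi, Phi]
    · intro i
      fin_cases i <;> simp [Psi, Phi]
  exact RingHom.congr_fun this f

lemma ev_Phi (t x y : ℂ) (f : MvPolynomial (Fin 2) ℂ) :
    ev (Phi t f) x y = MvPolynomial.eval ![x + t * y, y] f := by
  have : (evHom x y).comp (Phi t) = MvPolynomial.eval ![x + t * y, y] := by
    apply MvPolynomial.ringHom_ext
    · intro r; simp [evHom, Phi]
    · intro i
      fin_cases i <;> simp [evHom, Phi]
  exact RingHom.congr_fun this f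

lemma eval_Psi (t : ℂ) (z : Fin 2 → ℂ) (P : Polynomial (Polynomial ℂ)) :
    MvPolynomial.eval z (Psi t P) = ev P (z 0 - t * z 1) (z 1) := by
  have : (MvPolynomial.eval z).comp (Psi t) = evHom (z 0 - t * z 1) (z 1) := by
    apply Polynomial.ringHom_ext'
    · apply Polynomial.ringHom_ext'
      · ext r; simp [evHom, Psi]
      · simp [evHom, Psi]
    · simp [evHom, Psi]
  exact RingHom.congr_fun this P

lemma lin_deg (t : ℂ) : (Polynomial.C Polynomial.X + Polynomial.C (Polynomial.C t) * Polynomial.X :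
    Polynomial (Polynomial ℂ)).natDegree ≤ 1 := by
  compute_degree

lemma mono_deg (t : ℂ) (a : ℂ) (i j : ℕ) :
    (Polynomial.C (Polynomial.C a) * ((Polynomial.C Polynomial.X +
      Polynomial.C (Polynomial.C t) * Polynomial.X) ^ i * Polynomial.X ^ j) :
      Polynomial (Polynomial ℂ)).natDegree ≤ i + j ∧
    (Polynomial.C (Polynomial.C a) * ((Polynomial.C Polynomial.X +
      Polynomial.C (Polynomial.C t) * Polynomial.X) ^ i * Polynomial.X ^ j) :
      Polynomial (Polynomial ℂ)).coeff (i + j) = Polynomial.C (a * t ^ i) := by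
  have h1 := Polynomial.natDegree_pow_le_of_le i (lin_deg t)
  rw [mul_one] at h1
  constructor
  · refine (Polynomial.natDegree_C_mul_le _ _).trans (Polynomial.natDegree_mul_le_of_le h1 ?_)
    exact Polynomial.natDegree_X_pow_le j
  · rw [Polynomial.coeff_C_mul, Polynomial.coeff_mul_X_pow]
    have := Polynomial.coeff_pow_of_natDegree_le (m := i) (lin_deg t)
    rw [mul_one] at this
    rw [this]
    simp

lemma Phi_eq (t : ℂ) (g : MvPolynomial (Fin 2) ℂ) : Phi t g = ∑ m ∈ g.support,
    Polynomial.C (Polynomial.C (g.coeff m)) * ((Polynomial.C Polynomial.X +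
      Polynomial.C (Polynomial.C t) * Polynomial.X) ^ (m 0) * Polynomial.X ^ (m 1)) := by
  rw [Phi, MvPolynomial.coe_eval₂Hom, MvPolynomial.eval₂_eq']
  simp

lemma deg_le (g : MvPolynomial (Fin 2) ℂ) {m} (hm : m ∈ g.support) : m 0 + m 1 ≤ g.totalDegree := by
  have := MvPolynomial.le_totalDegree hm
  rw [Finsupp.sum_fintype _ _ (by simp)] at this
  simpa using this

lemma Phi_coeff (t : ℂ) (g : MvPolynomial (Fin 2) ℂ) :
    (Phi t g).natDegree ≤ g.totalDegree ∧ (Phi t g).coeff g.totalDegree = Polynomial.C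
      (∑ m ∈ g.support, if m 0 + m 1 = g.totalDegree then g.coeff m * t ^ (m 0) else 0) := by
  rw [Phi_eq]
  constructor
  · apply Polynomial.natDegree_sum_le_of_forall_le
    intro m hm
    exact (mono_deg t _ _ _).1.trans (deg_le g hm)
  · rw [Polynomial.finsetSum_coeff, map_sum]
    apply Finset.sum_congr rfl
    intro m hm
    split_ifs with h
    · rw [← h]; exact (mono_deg t _ _ _).2
    · rw [Polynomial.C_0]
      apply Polynomial.coeff_eq_zero_of_natDegree_lt
      exact (mono_deg t _ _ _).1.trans_lt (lt_of_le_of_ne (deg_le g hm) h)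

lemma exists_t (g : MvPolynomial (Fin 2) ℂ) (hg : g ≠ 0) : ∃ t : ℂ,
    (∑ m ∈ g.support, if m 0 + m 1 = g.totalDegree then g.coeff m * t ^ (m 0) else 0) ≠ 0 := by
  by_contra hcon
  push Not at hcon
  set L : Polynomial ℂ := ∑ m ∈ g.support,
    if m 0 + m 1 = g.totalDegree then Polynomial.monomial (m 0) (g.coeff m) else 0 with hL
  have hL0 : L = 0 := by
    apply Polynomial.funext
    intro t
    rw [Polynomial.eval_zero, ← hcon t, hL, Polynomial.eval_finsetSum]
    apply Finset.sum_congr rfl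
    intro m _
    split_ifs <;> simp
  obtain ⟨m, hm, hd⟩ := Finset.exists_mem_eq_sup g.support
    (MvPolynomial.support_nonempty.mpr hg) (fun s => s.sum fun _ e => e)
  change g.totalDegree = _ at hd
  rw [Finsupp.sum_fintype _ _ (by simp), Fin.sum_univ_two] at hd
  have h := congrArg (fun p => Polynomial.coeff p (m 0)) hL0
  simp only [hL, Polynomial.finsetSum_coeff, Polynomial.coeff_zero] at h
  rw [Finset.sum_eq_single m] at h
  · rw [if_pos hd.symm, Polynomial.coeff_monomial, if_pos rfl] at h
    exact MvPolynomial.mem_support_iff.mp hm h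
  · intro n hn hne
    split_ifs with h'
    · rw [Polynomial.coeff_monomial, if_neg]
      intro h0
      apply hne
      ext i
      fin_cases i
      · exact h0
      · show n 1 = m 1
        omega
    · simp
  · intro h'; exact absurd hm h'

theorem split_of_not_conn (g : MvPolynomial (Fin 2) ℂ) (hg : 0 < g.totalDegree)
    (hc : ¬ IsConnected {p : Fin 2 → ℂ | MvPolynomial.eval p g = 0}) :
    ∃ P Q, g = P * Q ∧ (∃ z, MvPolynomial.eval z P = 0) ∧
      (∃ z, MvPolynomial.eval z Q = 0) ∧
      ∀ z, ¬ (MvPolynomial.eval z P = 0 ∧ MvPolynomial.eval z Q = 0) := by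
  obtain ⟨t, ht⟩ := exists_t g (by rintro rfl; simp at hg)
  set l := (∑ m ∈ g.support, if m 0 + m 1 = g.totalDegree then g.coeff m * t ^ (m 0) else 0) with hl
  obtain ⟨h1, h2⟩ := Phi_coeff t g
  rw [← hl] at h2
  set G : Polynomial (Polynomial ℂ) := Phi t (MvPolynomial.C l⁻¹ * g) with hG
  have hGC : G = Polynomial.C (Polynomial.C l⁻¹) * Phi t g := by
    rw [hG, map_mul]; congr 1; simp [Phi]
  have hGc : G.coeff g.totalDegree = 1 := by
    rw [hGC, Polynomial.coeff_C_mul, h2, ← Polynomial.C_mul, inv_mul_cancel₀ ht, Polynomial.C_1]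
  have hGd : G.natDegree ≤ g.totalDegree := by
    rw [hGC]; exact (Polynomial.natDegree_C_mul_le _ _).trans h1
  have hGm : G.Monic := Polynomial.monic_of_natDegree_le_of_coeff_eq_one _ hGd hGc
  have hGd' : G.natDegree = g.totalDegree :=
    le_antisymm hGd (Polynomial.le_natDegree_of_ne_zero (by rw [hGc]; exact one_ne_zero))
  have hev : ∀ x y, ev G x y = 0 ↔ MvPolynomial.eval ![x + t * y, y] g = 0 := by
    intro x y
    rw [hG, ev_Phi, map_mul, MvPolynomial.eval_C, mul_eq_zero]
    simp [inv_eq_zero, ht]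
  set Z := {p : Fin 2 → ℂ | MvPolynomial.eval p g = 0} with hZ
  have hne : Z.Nonempty := by
    have : 0 < (rt G 0).card := by rw [card_rt hGm, hGd']; exact hg
    obtain ⟨y, hy⟩ := Multiset.card_pos_iff_exists_mem.mp this
    exact ⟨_, (hev 0 y).mp ((mem_rt hGm).mp hy)⟩
  have hnp : ¬ IsPreconnected Z := fun h => hc ⟨hne, h⟩
  rw [isPreconnected_closed_iff] at hnp
  push Not at hnp
  obtain ⟨a, b, ha, hb, hab, ⟨za, hza⟩, ⟨zb, hzb⟩, hdis⟩ := hnp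
  have hZc : IsClosed Z := isClosed_eq (MvPolynomial.continuous_eval g) continuous_const
  have hφ : Continuous (fun p : ℂ × ℂ => (![p.1 + t * p.2, p.2] : Fin 2 → ℂ)) := by
    apply continuous_pi
    intro i
    fin_cases i
    · simp; fun_prop
    · simp; fun_prop
  obtain ⟨P, Q, hPQ, hP, hQ⟩ := factor hGm ((hZc.inter ha).preimage hφ) ((hZc.inter hb).preimage hφ)
    (by
      intro x y
      rw [hev]
      constructor
      · intro h
        rcases hab h with h' | h'
        · exact Or.inl ⟨h, h'⟩
        · exact Or.inr ⟨h, h'⟩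
      · rintro (h | h) <;> exact h.1)
    (by
      rintro p ⟨h1, h2⟩ ⟨_, h3⟩
      exact Set.eq_empty_iff_forall_notMem.mp hdis _ ⟨h1, h2, h3⟩)
  have hz : ∀ z : Fin 2 → ℂ, (![(z 0 - t * z 1) + t * z 1, z 1] : Fin 2 → ℂ) = z := by
    intro z
    funext i
    fin_cases i <;> simp
  have hPz : ∀ z, MvPolynomial.eval z (MvPolynomial.C l * Psi t P) = 0 ↔ z ∈ Z ∩ a := by
    intro z
    rw [map_mul, MvPolynomial.eval_C, mul_eq_zero, or_iff_right ht, eval_Psi, hP, Set.mem_preimage, hz]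
  have hQz : ∀ z, MvPolynomial.eval z (Psi t Q) = 0 ↔ z ∈ Z ∩ b := by
    intro z
    rw [eval_Psi, hQ, Set.mem_preimage, hz]
  refine ⟨MvPolynomial.C l * Psi t P, Psi t Q, ?_, ⟨za, (hPz za).mpr hza⟩, ⟨zb, (hQz zb).mpr hzb⟩, ?_⟩
  · rw [mul_assoc, ← map_mul, ← hPQ, hG, Psi_Phi, ← mul_assoc, ← MvPolynomial.C_mul,
      mul_inv_cancel₀ ht, MvPolynomial.C_1, one_mul]
  · rintro z ⟨h1, h2⟩
    have h1 := (hPz z).mp h1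
    have h2 := (hQz z).mp h2
    exact Set.eq_empty_iff_forall_notMem.mp hdis z ⟨h1.1, h1.2, h2.2⟩

/-- If `f ∈ ℂ[x,y]` is non-degenerate at infinity and `dim Γ_∞(f) = 2`, then for all but
finitely many `c ∈ ℂ` the fiber `f⁻¹(c) ⊆ ℂ²` is connected. -/
theorem generic_fiber_connected (f : MvPolynomial (Fin 2) ℂ)
    (hdim : setDim (NPinf f) = 2) (hnd : NondegAtInfty f) :
    Set.Finite {c : ℂ | ¬ IsConnected {p : Fin 2 → ℂ | MvPolynomial.eval p f = c}} := by
  obtain ⟨u, d, z, hd, hf, hz, hbz, hi⟩ := exists_edge f hdim hnd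
  have hdeg : 0 < f.totalDegree := by
    by_contra h0
    have h0 : f.totalDegree = 0 := by omega
    rw [MvPolynomial.totalDegree_eq_zero_iff_eq_C] at h0
    have ht : topPart u d f = 0 := by
      ext m
      rw [coeff_topPart, MvPolynomial.coeff_zero]
      split_ifs with hm
      · rw [h0, MvPolynomial.coeff_C, if_neg]
        rintro rfl
        simp [wt] at hm
        linarith
      · rfl
    obtain ⟨i, hi⟩ := hi
    rw [ht] at hi
    simp at hi
  by_contra hS
  refine stein f hdeg (fun h hh => centralizer hd hf hz hbz hi h hh) _ hS ?_
  intro c hc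
  have htd : (f - MvPolynomial.C c).totalDegree = f.totalDegree := by
    apply le_antisymm
    · exact MvPolynomial.totalDegree_sub_C_le f c
    · have := MvPolynomial.totalDegree_sub_C_le (f - MvPolynomial.C c) (-c)
      simpa using this
  apply split_of_not_conn _ (htd ▸ hdeg)
  have e : {p : Fin 2 → ℂ | MvPolynomial.eval p (f - MvPolynomial.C c) = 0}
      = {p : Fin 2 → ℂ | MvPolynomial.eval p f = c} := by
    ext p
    simp [sub_eq_zero]
  rw [e]
  exact hc
end
end

section
/- Let f ∈ ℂ[x,y] be a polynomial in two variables which is non-degenerate at infinity and satisfies dim Γ_∞(f) = 2. Then there is no decomposition f(x,y) = ĥ(g(x,y)) with a one-variable polynomial ĥ ∈ ℂ[t] of degree ≥ 2 and a polynomial g ∈ ℂ[x,y]. -/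
open scoped Classical

noncomputable section

section helpers
open MvPolynomial

def LeW (w : Fin 2 → ℝ) (μ : ℝ) (P : MvPolynomial (Fin 2) ℂ) : Prop :=
  ∀ d, coeff d P ≠ 0 → Finsupp.weight w d ≤ μ

def LtW (w : Fin 2 → ℝ) (μ : ℝ) (P : MvPolynomial (Fin 2) ℂ) : Prop :=
  ∀ d, coeff d P ≠ 0 → Finsupp.weight w d < μ

lemma coeff_mul_ne {P Q : MvPolynomial (Fin 2) ℂ} {d : Fin 2 →₀ ℕ} (h : coeff d (P * Q) ≠ 0) :
    ∃ a b, a + b = d ∧ coeff a P ≠ 0 ∧ coeff b Q ≠ 0 := by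
  rw [coeff_mul] at h
  obtain ⟨⟨a, b⟩, hx, h2⟩ := Finset.exists_ne_zero_of_sum_ne_zero h
  refine ⟨a, b, by simpa using hx, left_ne_zero_of_mul h2, right_ne_zero_of_mul h2⟩

variable {w : Fin 2 → ℝ} {μ ν : ℝ} {P Q : MvPolynomial (Fin 2) ℂ}

lemma LtW.le (h : LtW w μ P) : LeW w μ P := fun d hd => (h d hd).le

lemma LeW.mul (hP : LeW w μ P) (hQ : LeW w ν Q) : LeW w (μ + ν) (P * Q) := by
  intro d hd
  obtain ⟨a, b, rfl, ha, hb⟩ := coeff_mul_ne hd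
  rw [map_add]
  exact add_le_add (hP a ha) (hQ b hb)

lemma LtW.mul (hP : LtW w μ P) (hQ : LeW w ν Q) : LtW w (μ + ν) (P * Q) := by
  intro d hd
  obtain ⟨a, b, rfl, ha, hb⟩ := coeff_mul_ne hd
  rw [map_add]
  exact add_lt_add_of_lt_of_le (hP a ha) (hQ b hb)

lemma LtW.add (hP : LtW w μ P) (hQ : LtW w μ Q) : LtW w μ (P + Q) := by
  intro d hd
  rw [coeff_add] at hd
  by_cases h : coeff d P = 0
  · exact hQ d (by simpa [h] using hd)
  · exact hP d h

lemma LtW.smul (c : ℂ) (hP : LtW w μ P) : LtW w μ (c • P) := by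
  intro d hd
  rw [coeff_smul] at hd
  exact hP d (right_ne_zero_of_mul hd)

lemma LeW.smul (c : ℂ) (hP : LeW w μ P) : LeW w μ (c • P) := by
  intro d hd
  rw [coeff_smul] at hd
  exact hP d (right_ne_zero_of_mul hd)

lemma LtW.sum {ι : Type*} (s : Finset ι) (F : ι → MvPolynomial (Fin 2) ℂ)
    (h : ∀ i ∈ s, LtW w μ (F i)) : LtW w μ (∑ i ∈ s, F i) := by
  intro d hd
  rw [coeff_sum] at hd
  obtain ⟨i, hi, h2⟩ := Finset.exists_ne_zero_of_sum_ne_zero hd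
  exact h i hi d h2

lemma LeW.sum {ι : Type*} (s : Finset ι) (F : ι → MvPolynomial (Fin 2) ℂ)
    (h : ∀ i ∈ s, LeW w μ (F i)) : LeW w μ (∑ i ∈ s, F i) := by
  intro d hd
  rw [coeff_sum] at hd
  obtain ⟨i, hi, h2⟩ := Finset.exists_ne_zero_of_sum_ne_zero hd
  exact h i hi d h2

lemma LeW.pow (hP : LeW w μ P) (k : ℕ) : LeW w (k * μ) (P ^ k) := by
  induction k with
  | zero =>
    intro d hd
    have : d = 0 := by
      by_contra h
      exact hd (by simp [coeff_one, Ne.symm h])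
    simp [this]
  | succ k ih =>
    rw [pow_succ]
    convert ih.mul hP using 1
    push_cast; ring

lemma pow_sub_LtW (hP : LeW w μ P) (hQ : LeW w μ Q) (h : LtW w μ (P - Q)) (k : ℕ) :
    LtW w (k * μ) (P ^ k - Q ^ k) := by
  induction k with
  | zero => intro d hd; simp at hd
  | succ k ih =>
    have e : P ^ (k+1) - Q ^ (k+1) = (P ^ k - Q ^ k) * P + (P - Q) * Q ^ k := by ring
    rw [e]
    have e2 : ((k + 1 : ℕ) : ℝ) * μ = k * μ + μ := by push_cast; ring
    rw [e2]
    refine (ih.mul hP).add ?_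
    rw [add_comm]
    exact h.mul (hQ.pow k)

lemma exists_torus_zero (G : MvPolynomial (Fin 2) ℂ)
    (hG : ∀ v c, G ≠ monomial v c) :
    ∃ x : Fin 2 → ℂ, (∀ i, x i ≠ 0) ∧ eval x G = 0 := by
  by_contra hcon
  push Not at hcon
  have h1 : (X 0 * X 1 : MvPolynomial (Fin 2) ℂ) ∈
      vanishingIdeal ℂ (zeroLocus ℂ (Ideal.span {G})) := by
    rw [mem_vanishingIdeal_iff]
    intro x hx
    rw [zeroLocus_span] at hx
    have hx' : eval x G = 0 := by simpa [aeval_eq_eval] using hx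
    by_contra h0
    simp at h0
    refine hcon x ?_ hx'
    intro i; fin_cases i
    · exact h0.1
    · exact h0.2
  rw [vanishingIdeal_zeroLocus_eq_radical, Ideal.mem_radical_iff] at h1
  obtain ⟨n, hn⟩ := h1
  rw [Ideal.mem_span_singleton] at hn
  have e : (X 0 * X 1 : MvPolynomial (Fin 2) ℂ) ^ n =
      monomial (n • (Finsupp.single 0 1 + Finsupp.single 1 1)) 1 := by
    simp [X, monomial_mul, monomial_pow]
  rw [e, dvd_monomial_iff_exists one_ne_zero] at hn
  obtain ⟨m, b, -, -, h⟩ := hn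
  exact hG m b h

/-- decomposition -/
lemma top_form_s5 (f g : MvPolynomial (Fin 2) ℂ) (h : Polynomial ℂ) (hd : 2 ≤ h.natDegree)
    (hf : f = Polynomial.aeval g h) (w : Fin 2 → ℝ) (m : ℝ) (hm : 0 < m)
    (hle : LeW w m f) (p : Fin 2 →₀ ℕ) (hp : coeff p f ≠ 0) (hpm : Finsupp.weight w p = m) :
    ∃ G, weightedHomogeneousComponent w m f = C h.leadingCoeff * G ^ h.natDegree := by
  have hfs : f = ∑ k ∈ Finset.range (h.natDegree + 1), h.coeff k • g ^ k := by
    rw [hf, Polynomial.aeval_eq_sum_range]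
  have hg : g.support.Nonempty := by
    rw [Finset.nonempty_iff_ne_empty]
    intro h0
    rw [support_eq_empty] at h0
    have hl : LeW w 0 f := by
      rw [hfs]
      refine LeW.sum _ _ fun k _ => LeW.smul _ ?_
      have : LeW w 0 g := by intro d hd; simp [h0] at hd
      simpa using this.pow k
    have := hl p hp
    linarith
  obtain ⟨a, ha, hmax⟩ := g.support.exists_max_image (fun d => Finsupp.weight w d) hg
  set μ := Finsupp.weight w a with hμ
  have hgl : LeW w μ g := fun d hd => hmax d (mem_support_iff.2 hd)
  have hμ0 : 0 < μ := by
    by_contra hn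
    push Not at hn
    have hl : LeW w 0 f := by
      rw [hfs]
      refine LeW.sum _ _ fun k _ => LeW.smul _ ?_
      have : LeW w 0 g := fun d hd => (hgl d hd).trans hn
      simpa using this.pow k
    have := hl p hp
    linarith
  set G := weightedHomogeneousComponent w μ g with hGdef
  have hGh : IsWeightedHomogeneous w G μ := weightedHomogeneousComponent_isWeightedHomogeneous μ g
  have hGl : LeW w μ G := fun d hd => (hGh hd).le
  have hsub : LtW w μ (g - G) := by
    intro d hd
    rw [coeff_sub, hGdef, coeff_weightedHomogeneousComponent] at hd
    split_ifs at hd with h1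
    · simp at hd
    · exact lt_of_le_of_ne (hgl d (by simpa using hd)) h1
  have hG0 : G ≠ 0 := by
    intro h0
    have : coeff a G = coeff a g := by
      rw [hGdef, coeff_weightedHomogeneousComponent, if_pos rfl]
    rw [h0] at this
    exact (mem_support_iff.1 ha) (by simpa using this.symm)
  set D := h.natDegree with hD
  set T := C h.leadingCoeff * G ^ D with hT
  have hlc : h.leadingCoeff ≠ 0 := by
    intro h0
    rw [Polynomial.leadingCoeff_eq_zero] at h0
    simp [hD, h0] at hd
  have hT0 : T ≠ 0 := mul_ne_zero (by simpa using hlc) (pow_ne_zero _ hG0)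
  have hTh : IsWeightedHomogeneous w T (D * μ) := by
    have := (isWeightedHomogeneous_C w h.leadingCoeff).mul (hGh.pow D)
    simpa using this
  have hrem : LtW w (D * μ) (f - T) := by
    have e : f - T = (∑ k ∈ Finset.range D, h.coeff k • g ^ k) +
        h.leadingCoeff • (g ^ D - G ^ D) := by
      rw [hfs, Finset.sum_range_succ, hT, C_mul', smul_sub, Polynomial.leadingCoeff]
      ring
    rw [e]
    refine LtW.add (LtW.sum _ _ fun k hk => LtW.smul _ ?_) ((pow_sub_LtW hgl hGl hsub D).smul _)
    intro d hd
    refine (hgl.pow k d hd).trans_lt ?_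
    have : (k : ℝ) < D := by exact_mod_cast Finset.mem_range.1 hk
    exact mul_lt_mul_of_pos_right this hμ0
  have key : ∀ d, Finsupp.weight w d = D * μ → coeff d f = coeff d T := by
    intro d hd
    by_contra hne
    have := hrem d (by rw [coeff_sub]; exact sub_ne_zero.2 hne)
    linarith
  have hmD : m = D * μ := by
    apply le_antisymm
    · by_contra hlt
      push Not at hlt
      have h1 : coeff p T = 0 := by
        by_contra h2
        have := hTh h2
        linarith
      have := hrem p (by rw [coeff_sub, h1]; simpa using hp)
      linarith
    · obtain ⟨e, he⟩ := support_nonempty.2 hT0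
      rw [mem_support_iff] at he
      have h1 := hTh he
      rw [← h1]
      exact hle e (by rw [key e h1]; exact he)
  refine ⟨G, ?_⟩
  ext d
  rw [coeff_weightedHomogeneousComponent]
  split_ifs with h1
  · exact key d (h1.trans hmD)
  · by_contra hne
    exact h1 ((hTh (Ne.symm hne)).trans hmD.symm)

lemma dim_le (f : MvPolynomial (Fin 2) ℂ) (hdim : setDim (NPinf f) = 2) (q : Fin 2 → ℝ) :
    ∃ s, coeff s f ≠ 0 ∧ (fun i => (s i : ℝ)) ∉ Submodule.span ℝ {q} := by
  by_contra hcon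
  push Not at hcon
  have h1 : NPinf f ⊆ (Submodule.span ℝ {q} : Set (Fin 2 → ℝ)) := by
    refine convexHull_min ?_ (Submodule.convex _)
    rintro x (hx | ⟨s, hs, rfl⟩)
    · rw [Set.mem_singleton_iff.1 hx]; exact Submodule.zero_mem _
    · exact hcon s hs
  have h2 : affineSpan ℝ (NPinf f) ≤ (Submodule.span ℝ {q}).toAffineSubspace :=
    affineSpan_le.2 h1
  have h3 := AffineSubspace.direction_le h2
  rw [Submodule.toAffineSubspace_direction] at h3
  have h4 := Submodule.finrank_mono h3
  have h5 := (finrank_span_le_card (R := ℝ) {q}).trans_eq (Set.toFinset_card _)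
  simp only [Set.card_singleton, Fintype.card_unique] at h5
  unfold setDim at hdim
  omega

lemma exists_edge_s5 (f : MvPolynomial (Fin 2) ℂ) (hdim : setDim (NPinf f) = 2) :
    ∃ (w : Fin 2 → ℝ) (m : ℝ) (p s : Fin 2 →₀ ℕ), 0 < m ∧ LeW w m f ∧ p ≠ s ∧
      coeff p f ≠ 0 ∧ coeff s f ≠ 0 ∧ Finsupp.weight w p = m ∧ Finsupp.weight w s = m := by
  have hwt : ∀ (w : Fin 2 → ℝ) (d : Fin 2 →₀ ℕ),
      Finsupp.weight w d = d 0 * w 0 + d 1 * w 1 := by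
    intro w d
    rw [Finsupp.weight_apply, Finsupp.sum_fintype _ _ (by simp)]
    simp
  obtain ⟨s0, hs0, hs0'⟩ := dim_le f hdim 0
  have hne : f.support.Nonempty := ⟨s0, mem_support_iff.2 hs0⟩
  obtain ⟨p, hp, hmax⟩ := f.support.exists_max_image (fun d => (d 0 : ℝ) + d 1) hne
  have hpos : (0 : ℝ) < p 0 + p 1 := by
    have h1 := hmax s0 (mem_support_iff.2 hs0)
    refine lt_of_lt_of_le ?_ h1
    by_contra hn
    apply hs0'
    have : s0 0 = 0 ∧ s0 1 = 0 := by
      have : s0 0 + s0 1 ≤ 0 := by push Not at hn; exact_mod_cast hn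
      omega
    convert Submodule.zero_mem _
    rename_i i
    fin_cases i <;> simp [this]
  obtain ⟨s1, hs1, hs1'⟩ := dim_le f hdim (fun i => (p i : ℝ))
  have hdet : (p 0 : ℝ) * s1 1 - p 1 * s1 0 ≠ 0 := by
    intro h0
    apply hs1'
    rw [Submodule.mem_span_singleton]
    refine ⟨((s1 0 : ℝ) + s1 1) / (p 0 + p 1), ?_⟩
    funext i
    fin_cases i
    · simp; field_simp; linarith
    · simp; field_simp; linarith
  obtain ⟨ε, hε⟩ : ∃ ε : ℝ, 0 < ε * ((p 0 : ℝ) * s1 1 - p 1 * s1 0) :=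
    ⟨(p 0 : ℝ) * s1 1 - p 1 * s1 0, mul_self_pos.2 hdet⟩
  set z : (Fin 2 →₀ ℕ) → ℝ := fun d => ε * ((p 0 : ℝ) * d 1 - p 1 * d 0) with hz
  set F := f.support.filter (fun d => 0 < z d) with hF
  have hFne : F.Nonempty := ⟨s1, by simp [hF, hs1]; exact hε⟩
  obtain ⟨s, hs, hmin⟩ := F.exists_min_image
    (fun d => (((p 0 : ℝ) + p 1) - (d 0 + d 1)) / z d) hFne
  set t := (((p 0 : ℝ) + p 1) - (s 0 + s 1)) / z s with ht
  rw [hF, Finset.mem_filter] at hs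
  have ht0 : 0 ≤ t := div_nonneg (sub_nonneg.2 (hmax s hs.1)) hs.2.le
  have hw : ∀ d, Finsupp.weight ![1 - t * ε * p 1, 1 + t * ε * p 0] d
      = (d 0 + d 1) + t * z d := by
    intro d
    rw [hwt, hz]; simp; ring
  refine ⟨![1 - t * ε * p 1, 1 + t * ε * p 0], p 0 + p 1, p, s, hpos, ?_, ?_,
    mem_support_iff.1 hp, mem_support_iff.1 hs.1, ?_, ?_⟩
  · intro d hd
    rw [hw]
    have h1 := hmax d (mem_support_iff.2 hd)
    by_cases hzd : 0 < z d
    · have h2 := hmin d (by simp [hF, hd, hzd])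
      rw [le_div_iff₀ hzd] at h2
      linarith
    · push Not at hzd
      nlinarith [mul_nonneg ht0 (neg_nonneg.2 hzd)]
  · rintro rfl
    have := hs.2
    simp [hz, mul_comm] at this
  · rw [hw]; simp only [hz]; ring
  · rw [hw, ht, div_mul_cancel₀ _ hs.2.ne']; ring

lemma dotR_eq (w : Fin 2 → ℝ) (d : Fin 2 →₀ ℕ) :
    dotR (-w) (fun i => (d i : ℝ)) = - Finsupp.weight w d := by
  rw [Finsupp.weight_apply, Finsupp.sum_fintype _ _ (by simp)]
  simp [dotR]; ring

lemma face_bound (f : MvPolynomial (Fin 2) ℂ) (w : Fin 2 → ℝ) (m : ℝ) (hm : 0 < m)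
    (hle : LeW w m f) : ∀ v ∈ NPinf f, -m ≤ dotR (-w) v := by
  have hc : Convex ℝ {v : Fin 2 → ℝ | -m ≤ dotR (-w) v} := by
    apply convex_halfSpace_ge
    constructor
    · intro x y; simp [dotR]; ring
    · intro c x; simp [dotR]; ring
  refine convexHull_min ?_ hc
  rintro x (hx | ⟨s, hs, rfl⟩)
  · rw [Set.mem_singleton_iff.1 hx]
    show -m ≤ dotR (-w) 0
    simp [dotR]; exact hm.le
  · show -m ≤ dotR (-w) _
    rw [dotR_eq]
    linarith [hle s hs]

lemma mem_NPinf (f : MvPolynomial (Fin 2) ℂ) (d) (hd : coeff d f ≠ 0) :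
    (fun i => (d i : ℝ)) ∈ NPinf f :=
  subset_convexHull _ _ (Or.inr ⟨d, hd, rfl⟩)

end helpers

/-- If `f ∈ ℂ[x,y]` is non-degenerate at infinity and `dim Γ_∞(f) = 2`, then `f` admits no
decomposition `f = ĥ ∘ g` with `ĥ ∈ ℂ[t]` of degree `≥ 2` and `g ∈ ℂ[x,y]`. -/
theorem no_composition (f : MvPolynomial (Fin 2) ℂ)
    (hdim : setDim (NPinf f) = 2) (hnd : NondegAtInfty f) :
    ¬ ∃ (hhat : Polynomial ℂ) (g : MvPolynomial (Fin 2) ℂ),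
        2 ≤ hhat.natDegree ∧ f = Polynomial.aeval g hhat := by
  rintro ⟨h, g, hd, hf⟩
  obtain ⟨w, m, p, s, hm, hle, hps, hp, hs, hpm, hsm⟩ := exists_edge_s5 f hdim
  obtain ⟨G, hG⟩ := top_form_s5 f g h hd hf w m hm hle p hp hpm
  have hb := face_bound f w m hm hle
  have hface : facePart f (suppFace f (-w)) = MvPolynomial.weightedHomogeneousComponent w m f := by
    rw [MvPolynomial.weightedHomogeneousComponent_apply, facePart, Finset.sum_filter]
    refine Finset.sum_congr rfl fun d hd => ?_
    rw [MvPolynomial.mem_support_iff] at hd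
    have hiff : (fun i => (d i : ℝ)) ∈ suppFace f (-w) ↔ Finsupp.weight w d = m := by
      constructor
      · rintro ⟨-, h2⟩
        have h3 := h2 _ (mem_NPinf f p hp)
        rw [dotR_eq, dotR_eq, hpm] at h3
        linarith [hle d hd]
      · intro h1
        refine ⟨mem_NPinf f d hd, fun v hv => ?_⟩
        rw [dotR_eq, h1]
        exact hb v hv
    simp only [hiff]
  have h0 : (0 : Fin 2 → ℝ) ∉ suppFace f (-w) := by
    rintro ⟨-, h2⟩
    have h3 := h2 _ (mem_NPinf f p hp)
    rw [dotR_eq, hpm] at h3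
    simp [dotR] at h3
    linarith
  have hmono : ∀ v c, G ≠ MvPolynomial.monomial v c := by
    rintro v c rfl
    rw [MvPolynomial.monomial_pow, MvPolynomial.C_mul_monomial] at hG
    have aux : ∀ d, MvPolynomial.coeff d f ≠ 0 → Finsupp.weight w d = m →
        h.natDegree • v = d := by
      intro d hd hdm
      have h1 := congrArg (MvPolynomial.coeff d) hG
      rw [MvPolynomial.coeff_weightedHomogeneousComponent, if_pos hdm,
        MvPolynomial.coeff_monomial] at h1
      by_contra hne
      rw [if_neg hne] at h1
      exact hd h1
    exact hps ((aux p hp hpm).symm.trans (aux s hs hsm))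
  obtain ⟨x, hx, hx0⟩ := exists_torus_zero G hmono
  have hn := hnd _ ⟨-w, rfl⟩ h0 x hx
  rw [hface, hG] at hn
  obtain ⟨i, hi⟩ := hn (by simp [hx0]; right; omega)
  apply hi
  have : h.natDegree - 1 ≠ 0 := by omega
  simp [Derivation.leibniz_pow, hx0, this]
end
end
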